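/- arXiv:2506.14091 — 2 statements merged into one kernel-verified Lean document; each statement's English description precedes it below -/
import Mathlib

section
/- Let T > 0 and let F = {f₀, f₁, f₂} be an ET-system on [0,T) with each fᵢ continuous on [0,T] and f₀(t) > 0 for all t ∈ [0,T]. Then there exist coefficients A, B ∈ span(F) such that the Abel equation x' = A(t)x³ + B(t)x², t ∈ [0,T], has at least two non-zero limit cycles; that is, the upper bound of two non-zero limit cycles is sharp. -/
/-!
The coefficients are found in the family `x' = ε A x³ + (ε B + ε² f) x²` with small `ε > 0`, where
`A`, `B` in the span have zero mean and `f` is a multiple of `f₀`. Write `IA`, `IB` for the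
primitives of `A`, `B` vanishing at `0`. Averaging to second order, the displacement of `1/x` over
`[0,T]` for the solution starting at `r` is `-ε² (∫ f - k r²) + O(ε³)` with `k = ∫ IA * B`. Since
`f₀ > 0`, the function `f` can be normalised to `∫ f = k`; if `k ≠ 0`, the leading term has simple
zeros at `r = 1` and `r = -1`, and each gives a limit cycle.

*The area `k` can be made non-zero* (`exists_area`). Take `B ≠ 0` in the span with zero mean and
`B 0 = 0`; by Rolle it vanishes at some `τ` in `(0,T)`, nowhere else in `[0,T)`, and it changes sign
at `τ`. Take `A ≠ 0` with zero mean on both `[0,τ]` and `[τ,T]`. By Rolle and the bound of two zeros,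
`IA` has no zero in `(0,T)` other than `τ` and has no extremum at `τ`, so it changes sign at `τ`
too. Hence `IA * B` has one sign off `τ`.

*Existence* (`AbelData.displacement`, `AbelData.exists_limitCycle`). The expansion holds with an
explicit error, obtained by adding correctors to `1/x` and using the mean value inequality. The
intermediate value theorem on `[3/4, 5/4]` then gives a closed solution. Solutions exist on all of
`[0,T]` and depend continuously on `r` by Picard-Lindelöf (`abel_flow`).

*Isolation* (`AbelData.closed_unique`). For two solutions `x`, `y`, the difference `1/x - 1/y` has
logarithmic derivative `ε A x y`. If both are closed and distinct, its integral vanishes, but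
integration by parts shows that it is `-ε² k x(0) y(0) (x(0) + y(0)) + O(ε³)`.

The cycle near `-1` comes from the one near `1` by the reflection `x ↦ -x`, which turns `(A, B, f)`
into `(A, -B, -f)` and `k` into `-k`.
-/

open Set intervalIntegral

noncomputable section

/-- `x` is a solution of the Abel equation `x' = A(t) x^3 + B(t) x^2` on `[0,T]`. -/
def AbelSol (A B : ℝ → ℝ) (T : ℝ) (x : ℝ → ℝ) : Prop :=
  ∀ t ∈ Set.Icc (0:ℝ) T,
    HasDerivWithinAt x (A t * x t ^ 3 + B t * x t ^ 2) (Set.Icc (0:ℝ) T) t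

/-- A closed solution of the Abel equation on `[0,T]`. -/
def ClosedSol (A B : ℝ → ℝ) (T : ℝ) (x : ℝ → ℝ) : Prop :=
  AbelSol A B T x ∧ x 0 = x T

/-- A limit cycle: an isolated closed solution (isolated among initial values of
closed solutions). -/
def LimitCycle (A B : ℝ → ℝ) (T : ℝ) (x : ℝ → ℝ) : Prop :=
  ClosedSol A B T x ∧
    ∃ ε > (0:ℝ), ∀ y : ℝ → ℝ, ClosedSol A B T y → |y 0 - x 0| < ε → y 0 = x 0

/-- The set of initial values of limit cycles of the Abel equation. -/
def LCInits (A B : ℝ → ℝ) (T : ℝ) : Set ℝ :=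
  {v | ∃ x : ℝ → ℝ, LimitCycle A B T x ∧ x 0 = v}

/-- `g` has a zero of multiplicity at least `m` at `t` (derivatives taken within `E`). -/
def ZeroOrderGe (E : Set ℝ) (g : ℝ → ℝ) (t : ℝ) (m : ℕ) : Prop :=
  ∀ k < m, iteratedDerivWithin k g E t = 0

/-- `g` has at most `n` zeros on `E`, counted with multiplicities. -/
def AtMostZerosOn (E : Set ℝ) (g : ℝ → ℝ) (n : ℕ) : Prop :=
  ∀ (S : Finset ℝ) (m : ℝ → ℕ),
    (∀ t ∈ S, t ∈ E ∧ 1 ≤ m t ∧ ZeroOrderGe E g t (m t)) →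
      (∑ t ∈ S, m t) ≤ n

/-- `{f₀, f₁, f₂}` is an ET-system on `E`: linearly independent on `E`, and every
nontrivial linear combination has at most two zeros on `E` counted with multiplicities. -/
def IsETSystem3 (E : Set ℝ) (f₀ f₁ f₂ : ℝ → ℝ) : Prop :=
  (∀ a b c : ℝ, (∀ t ∈ E, a * f₀ t + b * f₁ t + c * f₂ t = 0) → a = 0 ∧ b = 0 ∧ c = 0) ∧
  ∀ a b c : ℝ, ¬(a = 0 ∧ b = 0 ∧ c = 0) →
    AtMostZerosOn E (fun t => a * f₀ t + b * f₁ t + c * f₂ t) 2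

/-- `{A, B}` is an ET-system with accuracy one on `E`: linearly independent on `E`, and
every nontrivial linear combination has at most two zeros on `E` counted with
multiplicities. -/
def IsETAcc1 (E : Set ℝ) (A B : ℝ → ℝ) : Prop :=
  (∀ l m : ℝ, (∀ t ∈ E, l * A t + m * B t = 0) → l = 0 ∧ m = 0) ∧
  ∀ l m : ℝ, ¬(l = 0 ∧ m = 0) → AtMostZerosOn E (fun t => l * A t + m * B t) 2

/-- `P` is a Poincaré (time-`T`) map of the Abel equation on the set `U` of initial
values. -/
def IsPoincareOn (A B : ℝ → ℝ) (T : ℝ) (P : ℝ → ℝ) (U : Set ℝ) : Prop :=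
  ∀ y ∈ U, ∃ z : ℝ → ℝ, AbelSol A B T z ∧ z 0 = y ∧ z T = P y

/-! ### Primitives, existence, uniqueness -/

lemma exists_primitive {T : ℝ} (hT : 0 < T) {g : ℝ → ℝ} (hg : ContinuousOn g (Icc 0 T)) :
    ∃ G : ℝ → ℝ, G 0 = 0 ∧ ∀ t ∈ Icc (0:ℝ) T, HasDerivWithinAt G (g t) (Icc 0 T) t := by
  have hc : Continuous (IccExtend hT.le ((Icc 0 T).domRestrict g)) :=
    hg.domRestrict.Icc_extend'
  refine ⟨fun t => ∫ s in (0:ℝ)..t, IccExtend hT.le ((Icc 0 T).domRestrict g) s, by simp, ?_⟩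
  intro t ht
  have h := (hc.integral_hasStrictDerivAt 0 t).hasDerivAt.hasDerivWithinAt (s := Icc 0 T)
  rwa [IccExtend_of_mem hT.le _ ht] at h

/-- Clamping to `[0,2]`, used to make the Abel vector field globally Lipschitz. -/
def clamp02 (x : ℝ) : ℝ := max 0 (min x 2)

lemma clamp02_nonneg (x : ℝ) : 0 ≤ clamp02 x := le_max_left _ _

lemma clamp02_le (x : ℝ) : clamp02 x ≤ 2 := by
  unfold clamp02; exact max_le (by norm_num) (min_le_right _ _)

lemma clamp02_of_mem {x : ℝ} (h0 : 0 ≤ x) (h2 : x ≤ 2) : clamp02 x = x := by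
  unfold clamp02; rw [min_eq_left h2, max_eq_right h0]

lemma abs_clamp02_sub_le (x y : ℝ) : |clamp02 x - clamp02 y| ≤ |x - y| := by
  unfold clamp02
  calc _ ≤ max |(0:ℝ) - 0| |min x 2 - min y 2| := abs_max_sub_max_le_max _ _ _ _
    _ ≤ |x - y| := by
      refine max_le (by simp) ?_
      refine (abs_min_sub_min_le_max _ _ _ _).trans ?_
      simp

/-- The Abel right-hand side is Lipschitz on bounded sets of states. -/
lemma abel_lipschitz {a b N R x y : ℝ} (ha : |a| ≤ N) (hb : |b| ≤ N)
    (hx : |x| ≤ R) (hy : |y| ≤ R) :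
    |(a * x ^ 3 + b * x ^ 2) - (a * y ^ 3 + b * y ^ 2)| ≤ N * (3 * R ^ 2 + 2 * R) * |x - y| := by
  have hN : 0 ≤ N := (abs_nonneg _).trans ha
  have hR : 0 ≤ R := (abs_nonneg _).trans hx
  have e : (a * x ^ 3 + b * x ^ 2) - (a * y ^ 3 + b * y ^ 2)
      = (a * (x * x + x * y + y * y) + b * (x + y)) * (x - y) := by ring
  rw [e, abs_mul]
  refine mul_le_mul_of_nonneg_right ?_ (abs_nonneg _)
  have h1 : |x * x + x * y + y * y| ≤ 3 * R ^ 2 := by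
    have := abs_add_three (x * x) (x * y) (y * y)
    simp only [abs_mul] at this
    have h1 := mul_le_mul hx hx (abs_nonneg _) hR
    have h2 := mul_le_mul hx hy (abs_nonneg _) hR
    have h3 := mul_le_mul hy hy (abs_nonneg _) hR
    nlinarith
  have h2 : |x + y| ≤ 2 * R := by
    have := abs_add_le x y
    linarith
  calc _ ≤ |a| * |x * x + x * y + y * y| + |b| * |x + y| := by
        rw [← abs_mul, ← abs_mul]; exact abs_add_le _ _
    _ ≤ N * (3 * R ^ 2) + N * (2 * R) :=
        add_le_add (mul_le_mul ha h1 (abs_nonneg _) hN) (mul_le_mul hb h2 (abs_nonneg _) hN)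
    _ = _ := by ring

/-- If the coefficients are small, all solutions starting in `[3/4, 5/4]` exist on `[0,T]`, stay
in `[1/2, 3/2]` and depend continuously on the initial value. -/
lemma abel_flow {A B : ℝ → ℝ} {T N : ℝ} (hT : 0 < T)
    (hA : ContinuousOn A (Icc 0 T)) (hB : ContinuousOn B (Icc 0 T))
    (hAN : ∀ t ∈ Icc (0:ℝ) T, |A t| ≤ N) (hBN : ∀ t ∈ Icc (0:ℝ) T, |B t| ≤ N)
    (hN : 12 * N * T ≤ 1 / 4) :
    ∃ φ : ℝ → ℝ → ℝ,
      (∀ r ∈ Icc (3 / 4 : ℝ) (5 / 4), AbelSol A B T (φ r) ∧ φ r 0 = r ∧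
        ∀ t ∈ Icc (0:ℝ) T, φ r t ∈ Icc (1 / 2 : ℝ) (3 / 2)) ∧
      ContinuousOn (fun r => φ r T) (Icc (3 / 4 : ℝ) (5 / 4)) := by
  have h0 : (0:ℝ) ∈ Icc (0:ℝ) T := ⟨le_rfl, hT.le⟩
  have hN0 : 0 ≤ N := (abs_nonneg _).trans (hAN 0 h0)
  let v : ℝ → ℝ → ℝ := fun t x => A t * clamp02 x ^ 3 + B t * clamp02 x ^ 2
  have hvb : ∀ t ∈ Icc (0:ℝ) T, ∀ x, ‖v t x‖ ≤ 12 * N := by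
    intro t ht x
    have h1 := clamp02_nonneg x
    have h2 := clamp02_le x
    have e3 : clamp02 x ^ 3 ≤ 8 := by
      calc clamp02 x ^ 3 ≤ 2 ^ 3 := pow_le_pow_left₀ h1 h2 3
        _ = 8 := by norm_num
    have e2 : clamp02 x ^ 2 ≤ 4 := by
      calc clamp02 x ^ 2 ≤ 2 ^ 2 := pow_le_pow_left₀ h1 h2 2
        _ = 4 := by norm_num
    rw [Real.norm_eq_abs]
    calc _ ≤ |A t| * clamp02 x ^ 3 + |B t| * clamp02 x ^ 2 := by
          refine (abs_add_le _ _).trans (le_of_eq ?_)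
          rw [abs_mul, abs_mul, abs_of_nonneg (pow_nonneg h1 3), abs_of_nonneg (pow_nonneg h1 2)]
      _ ≤ N * 8 + N * 4 :=
          add_le_add (mul_le_mul (hAN t ht) e3 (pow_nonneg h1 3) hN0)
            (mul_le_mul (hBN t ht) e2 (pow_nonneg h1 2) hN0)
      _ = 12 * N := by ring
  have hPL : IsPicardLindelof v (⟨0, h0⟩ : Icc (0:ℝ) T) (1:ℝ) (1 / 2) (1 / 4)
      ⟨12 * N, by positivity⟩ ⟨16 * N, by positivity⟩ := by
    refine ⟨?_, ?_, ?_, ?_⟩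
    · intro t ht
      refine LipschitzOnWith.of_dist_le_mul fun x _ y _ => ?_
      rw [Real.dist_eq, Real.dist_eq]
      refine (abel_lipschitz (hAN t ht) (hBN t ht) (R := 2) ?_ ?_).trans ?_
      · rw [abs_of_nonneg (clamp02_nonneg _)]; exact clamp02_le _
      · rw [abs_of_nonneg (clamp02_nonneg _)]; exact clamp02_le _
      · refine (mul_le_mul_of_nonneg_left (abs_clamp02_sub_le x y) (by positivity)).trans
          (le_of_eq ?_)
        change _ = 16 * N * |x - y|
        ring
    · intro x _
      exact (hA.mul continuousOn_const).add (hB.mul continuousOn_const)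
    · intro t ht x _
      exact hvb t ht x
    · simp only [sub_zero, sub_self, max_eq_left hT.le]
      change 12 * N * T ≤ _
      push_cast
      linarith
  obtain ⟨φ, h1, L', h2⟩ :=
    hPL.exists_forall_mem_closedBall_eq_hasDerivWithinAt_lipschitzOnWith
  have hball : Metric.closedBall (1:ℝ) ((1 / 4 : NNReal) : ℝ) = Icc (3 / 4 : ℝ) (5 / 4) := by
    rw [Real.closedBall_eq_Icc]; push_cast; norm_num
  rw [hball] at h1
  simp only [hball] at h2
  refine ⟨φ, ?_, (h2 T ⟨hT.le, le_rfl⟩).continuousOn⟩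
  intro r hr
  obtain ⟨hi, hd⟩ := h1 r hr
  simp only at hi
  -- the mean value inequality keeps the solution in the region where the clamp is inactive
  have hmem : ∀ t ∈ Icc (0:ℝ) T, φ r t ∈ Icc (1 / 2 : ℝ) (3 / 2) := by
    intro t ht
    have := norm_image_sub_le_of_norm_deriv_le_segment' hd
      (fun s hs => hvb s (Ico_subset_Icc_self hs) _) t ht
    rw [hi, Real.norm_eq_abs, abs_le] at this
    have h3 : 12 * N * (t - 0) ≤ 1 / 4 :=
      le_trans (mul_le_mul_of_nonneg_left (by linarith [ht.2]) (by positivity)) hN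
    constructor <;> linarith [hr.1, hr.2]
  refine ⟨fun t ht => ?_, hi, hmem⟩
  have := hd t ht
  have hm := hmem t ht
  simp only [v] at this
  rwa [clamp02_of_mem (by linarith [hm.1]) (by linarith [hm.2])] at this

lemma AbelSol.continuousOn {A B : ℝ → ℝ} {T : ℝ} {x : ℝ → ℝ} (h : AbelSol A B T x) :
    ContinuousOn x (Icc 0 T) := fun t ht => (h t ht).continuousWithinAt

lemma exists_abs_bound {T : ℝ} {g : ℝ → ℝ} (hg : ContinuousOn g (Icc 0 T)) :
    ∃ M, 0 < M ∧ ∀ t ∈ Icc (0:ℝ) T, |g t| ≤ M := by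
  obtain ⟨M, hM⟩ := isCompact_Icc.exists_bound_of_continuousOn hg
  exact ⟨max M 1, lt_max_of_lt_right one_pos, fun t ht => (hM t ht).trans (le_max_left _ _)⟩

lemma abel_unique {A B : ℝ → ℝ} {T : ℝ}
    (hA : ContinuousOn A (Icc 0 T)) (hB : ContinuousOn B (Icc 0 T)) {x y : ℝ → ℝ}
    (hx : AbelSol A B T x) (hy : AbelSol A B T y) (h0 : x 0 = y 0) : EqOn x y (Icc 0 T) := by
  obtain ⟨M₁, hM₁, hA'⟩ := exists_abs_bound hA
  obtain ⟨M₂, hM₂, hB'⟩ := exists_abs_bound hB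
  obtain ⟨R₁, hR₁, hx'⟩ := exists_abs_bound hx.continuousOn
  obtain ⟨R₂, hR₂, hy'⟩ := exists_abs_bound hy.continuousOn
  set N := max M₁ M₂
  set R := max R₁ R₂
  have hN : 0 < N := lt_max_of_lt_left hM₁
  have hR : 0 < R := lt_max_of_lt_left hR₁
  have right : ∀ {z : ℝ → ℝ}, AbelSol A B T z → ∀ t ∈ Ico (0:ℝ) T,
      HasDerivWithinAt z (A t * z t ^ 3 + B t * z t ^ 2) (Ici t) t := fun hz t ht =>
    (hz t (Ico_subset_Icc_self ht)).mono_of_mem_nhdsWithin (Icc_mem_nhdsGE_of_mem ht)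
  refine ODE_solution_unique_of_mem_Icc_right (v := fun t x => A t * x ^ 3 + B t * x ^ 2)
    (s := fun _ => {z | |z| ≤ R}) (K := ⟨N * (3 * R ^ 2 + 2 * R), by positivity⟩)
    ?_ hx.continuousOn (right hx) ?_ hy.continuousOn (right hy) ?_ h0
  · intro t ht
    refine LipschitzOnWith.of_dist_le_mul fun z hz w hw => ?_
    rw [Real.dist_eq, Real.dist_eq]
    exact abel_lipschitz ((hA' t (Ico_subset_Icc_self ht)).trans (le_max_left _ _))
      ((hB' t (Ico_subset_Icc_self ht)).trans (le_max_right _ _)) hz hw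
  · exact fun t ht => (hx' t (Ico_subset_Icc_self ht)).trans (le_max_left _ _)
  · exact fun t ht => (hy' t (Ico_subset_Icc_self ht)).trans (le_max_right _ _)

/-! ### Two independent zero-mean elements with non-zero area -/

/-- If the derivative of `K` is positive on `(0,τ)` and on `(τ,T)`, then `K 0 < K T`. -/
lemma lt_of_deriv_pos_pieces {T τ : ℝ} (hτ : τ ∈ Ioo 0 T) {K p : ℝ → ℝ}
    (hK : ∀ t ∈ Icc (0:ℝ) T, HasDerivWithinAt K (p t) (Icc 0 T) t)
    (h1 : ∀ t ∈ Ioo 0 τ, 0 < p t) (h2 : ∀ t ∈ Ioo τ T, 0 < p t) : K 0 < K T := by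
  have hc : ContinuousOn K (Icc 0 T) := fun t ht => (hK t ht).continuousWithinAt
  have hd : ∀ t ∈ Ioo 0 T, deriv K t = p t := fun t ht =>
    ((hK t (Ioo_subset_Icc_self ht)).hasDerivAt (Icc_mem_nhds ht.1 ht.2)).deriv
  have m1 : StrictMonoOn K (Icc 0 τ) := by
    refine strictMonoOn_of_deriv_pos (convex_Icc _ _)
      (hc.mono (Icc_subset_Icc_right hτ.2.le)) fun t ht => ?_
    rw [interior_Icc] at ht
    rw [hd t ⟨ht.1, ht.2.trans hτ.2⟩]
    exact h1 t ht
  have m2 : StrictMonoOn K (Icc τ T) := by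
    refine strictMonoOn_of_deriv_pos (convex_Icc _ _)
      (hc.mono (Icc_subset_Icc_left hτ.1.le)) fun t ht => ?_
    rw [interior_Icc] at ht
    rw [hd t ⟨hτ.1.trans ht.1, ht.2⟩]
    exact h2 t ht
  exact (m1 ⟨le_rfl, hτ.1.le⟩ ⟨hτ.1.le, le_rfl⟩ hτ.1).trans
    (m2 ⟨le_rfl, hτ.2.le⟩ ⟨hτ.2.le, le_rfl⟩ hτ.2)

lemma const_sign {a b : ℝ} {g : ℝ → ℝ} (hg : ContinuousOn g (Ioo a b))
    (h : ∀ t ∈ Ioo a b, g t ≠ 0) : (∀ t ∈ Ioo a b, 0 < g t) ∨ (∀ t ∈ Ioo a b, g t < 0) := by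
  by_contra! hcon
  obtain ⟨⟨s, hs, hs'⟩, ⟨t, ht, ht'⟩⟩ := hcon
  obtain ⟨u, hu, hu'⟩ := isPreconnected_Ioo.intermediate_value hs ht hg ⟨hs', ht'⟩
  exact h u hu hu'

/-- Two linear forms on `ℝ³` have a common non-trivial zero. -/
lemma exists_common_kernel (p₀ p₁ p₂ q₀ q₁ q₂ : ℝ) : ∃ a b c : ℝ, ¬(a = 0 ∧ b = 0 ∧ c = 0) ∧
    a * p₀ + b * p₁ + c * p₂ = 0 ∧ a * q₀ + b * q₁ + c * q₂ = 0 := by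
  by_cases h : p₁ * q₂ - p₂ * q₁ = 0 ∧ p₂ * q₀ - p₀ * q₂ = 0 ∧ p₀ * q₁ - p₁ * q₀ = 0
  · -- the forms are parallel, so a zero of a non-zero one of them (if any) is enough
    obtain ⟨h1, h2, h3⟩ := h
    by_cases hp₀ : p₀ = 0
    · by_cases hp₁ : p₁ = 0
      · by_cases hp₂ : p₂ = 0
        · by_cases hq₀ : q₀ = 0
          · exact ⟨1, 0, 0, by simp, by simp [hp₀], by simp [hq₀]⟩
          · refine ⟨q₁, -q₀, 0, by simp [hq₀], by simp [hp₀, hp₁], by ring⟩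
        · refine ⟨1, 0, 0, by simp, by simp [hp₀], ?_⟩
          have : p₂ * q₀ = 0 := by rw [hp₀] at h2; linarith
          have := (mul_eq_zero.1 this).resolve_left hp₂
          simp [this]
      · refine ⟨1, 0, 0, by simp, by simp [hp₀], ?_⟩
        have : p₁ * q₀ = 0 := by rw [hp₀] at h3; linarith
        have := (mul_eq_zero.1 this).resolve_left hp₁
        simp [this]
    · exact ⟨p₁, -p₀, 0, by simp [hp₀], by ring, by linarith⟩
  · refine ⟨p₁ * q₂ - p₂ * q₁, p₂ * q₀ - p₀ * q₂, p₀ * q₁ - p₁ * q₀, h, by ring, by ring⟩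

lemma rolle_Icc {T : ℝ} {G g : ℝ → ℝ}
    (hG : ∀ t ∈ Icc (0:ℝ) T, HasDerivWithinAt G (g t) (Icc 0 T) t)
    {a b : ℝ} (ha : 0 ≤ a) (hab : a < b) (hb : b ≤ T) (h : G a = G b) :
    ∃ c ∈ Ioo a b, g c = 0 := by
  refine exists_hasDerivAt_eq_zero hab ?_ h ?_
  · exact fun t ht => ((hG t ⟨ha.trans ht.1, ht.2.trans hb⟩).continuousWithinAt).mono
      (Icc_subset_Icc ha hb)
  · exact fun t ht => (hG t ⟨ha.trans ht.1.le, ht.2.le.trans hb⟩).hasDerivAt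
      (Icc_mem_nhds (ha.trans_lt ht.1) (ht.2.trans_le hb))

/-- Only three distinct zeros are needed from the extended Chebyshev property. -/
lemma no_three_zeros {E : Set ℝ} {f₀ f₁ f₂ : ℝ → ℝ} (hET : IsETSystem3 E f₀ f₁ f₂)
    {a b c : ℝ} (h : ¬(a = 0 ∧ b = 0 ∧ c = 0)) {r s t : ℝ} (hr : r ∈ E) (hs : s ∈ E) (ht : t ∈ E)
    (hrs : r < s) (hst : s < t)
    (zr : a * f₀ r + b * f₁ r + c * f₂ r = 0) (zs : a * f₀ s + b * f₁ s + c * f₂ s = 0)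
    (zt : a * f₀ t + b * f₁ t + c * f₂ t = 0) : False := by
  have key := hET.2 a b c h {r, s, t} (fun _ => 1) (by
    intro u hu
    have hz : ∀ w, a * f₀ w + b * f₁ w + c * f₂ w = 0 →
        ZeroOrderGe E (fun t => a * f₀ t + b * f₁ t + c * f₂ t) w 1 := by
      intro w hw k hk
      obtain rfl : k = 0 := by omega
      simpa using hw
    simp only [Finset.mem_insert, Finset.mem_singleton] at hu
    rcases hu with rfl | rfl | rfl
    · exact ⟨hr, le_rfl, hz _ zr⟩
    · exact ⟨hs, le_rfl, hz _ zs⟩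
    · exact ⟨ht, le_rfl, hz _ zt⟩)
  rw [Finset.sum_const, Finset.card_eq_three.2
    ⟨r, s, t, hrs.ne, (hrs.trans hst).ne, hst.ne, rfl⟩] at key
  norm_num at key

/-- The span of an ET-system contains `A`, `B` of zero mean such that the closed curve
`(∫ A, ∫ B)` encloses a non-zero signed area `∫ (∫ A) B`. -/
lemma exists_area {T : ℝ} (hT : 0 < T) {f₀ f₁ f₂ G₀ G₁ G₂ : ℝ → ℝ}
    (hf₀ : ContinuousOn f₀ (Icc 0 T)) (hf₁ : ContinuousOn f₁ (Icc 0 T))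
    (hf₂ : ContinuousOn f₂ (Icc 0 T))
    (hET : IsETSystem3 (Ico 0 T) f₀ f₁ f₂)
    (z₀ : G₀ 0 = 0) (z₁ : G₁ 0 = 0) (z₂ : G₂ 0 = 0)
    (hG₀ : ∀ t ∈ Icc (0:ℝ) T, HasDerivWithinAt G₀ (f₀ t) (Icc 0 T) t)
    (hG₁ : ∀ t ∈ Icc (0:ℝ) T, HasDerivWithinAt G₁ (f₁ t) (Icc 0 T) t)
    (hG₂ : ∀ t ∈ Icc (0:ℝ) T, HasDerivWithinAt G₂ (f₂ t) (Icc 0 T) t) :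
    ∃ a b c a' b' c' : ℝ, ∃ K : ℝ → ℝ,
      a * G₀ T + b * G₁ T + c * G₂ T = 0 ∧ a' * G₀ T + b' * G₁ T + c' * G₂ T = 0 ∧
      K 0 = 0 ∧ K T ≠ 0 ∧
      ∀ t ∈ Icc (0:ℝ) T, HasDerivWithinAt K
        ((a * G₀ t + b * G₁ t + c * G₂ t) * (a' * f₀ t + b' * f₁ t + c' * f₂ t)) (Icc 0 T) t := by
  have hlin : ∀ a b c : ℝ, ∀ t ∈ Icc (0:ℝ) T, HasDerivWithinAt
      (fun t => a * G₀ t + b * G₁ t + c * G₂ t) (a * f₀ t + b * f₁ t + c * f₂ t) (Icc 0 T) t :=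
    fun a b c t ht => (((hG₀ t ht).const_mul a).add ((hG₁ t ht).const_mul b)).add
      ((hG₂ t ht).const_mul c)
  have hcont : ∀ a b c : ℝ, ContinuousOn (fun t => a * f₀ t + b * f₁ t + c * f₂ t) (Icc 0 T) :=
    fun a b c => by fun_prop
  -- `B` has zero mean and vanishes at `0`
  obtain ⟨a', b', c', hne', hBT, hB0⟩ :=
    exists_common_kernel (G₀ T) (G₁ T) (G₂ T) (f₀ 0) (f₁ 0) (f₂ 0)
  set B : ℝ → ℝ := fun t => a' * f₀ t + b' * f₁ t + c' * f₂ t with hB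
  set IB : ℝ → ℝ := fun t => a' * G₀ t + b' * G₁ t + c' * G₂ t with hIB
  have hIB' := hlin a' b' c'
  have hIB0 : IB 0 = 0 := by simp [hIB, z₀, z₁, z₂]
  obtain ⟨τ, hτ, hBτ⟩ := rolle_Icc hIB' le_rfl hT le_rfl (hIB0.trans hBT.symm)
  have h0mem : (0:ℝ) ∈ Ico (0:ℝ) T := ⟨le_rfl, hT⟩
  have hτmem : τ ∈ Ico (0:ℝ) T := Ioo_subset_Ico_self hτ
  have B1 : ∀ t ∈ Ioo 0 τ, B t ≠ 0 := fun t ht h =>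
    no_three_zeros hET hne' h0mem ⟨ht.1.le, ht.2.trans hτ.2⟩ hτmem ht.1 ht.2 hB0 h hBτ
  have B2 : ∀ t ∈ Ioo τ T, B t ≠ 0 := fun t ht h =>
    no_three_zeros hET hne' h0mem hτmem ⟨hτ.1.le.trans ht.1.le, ht.2⟩ hτ.1 ht.1 hB0 hBτ h
  have sub1 : Ioo 0 τ ⊆ Icc 0 T := fun t ht => ⟨ht.1.le, ht.2.le.trans hτ.2.le⟩
  have sub2 : Ioo τ T ⊆ Icc 0 T := fun t ht => ⟨hτ.1.le.trans ht.1.le, ht.2.le⟩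
  have sB1 := const_sign ((hcont a' b' c').mono sub1) B1
  have sB2 := const_sign ((hcont a' b' c').mono sub2) B2
  -- `A` has zero mean on both `[0,τ]` and `[τ,T]`
  obtain ⟨a, b, c, hne, hAT, hAτ⟩ :=
    exists_common_kernel (G₀ T) (G₁ T) (G₂ T) (G₀ τ) (G₁ τ) (G₂ τ)
  set IA : ℝ → ℝ := fun t => a * G₀ t + b * G₁ t + c * G₂ t with hIA
  have hIA' := hlin a b c
  have hIA0 : IA 0 = 0 := by simp [hIA, z₀, z₁, z₂]
  have hIAc : ContinuousOn IA (Icc 0 T) := fun t ht => (hIA' t ht).continuousWithinAt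
  have A1 : ∀ t ∈ Ioo 0 τ, IA t ≠ 0 := by
    intro t ht h
    obtain ⟨r, hr, zr⟩ := rolle_Icc hIA' le_rfl ht.1 (ht.2.trans hτ.2).le (hIA0.trans h.symm)
    obtain ⟨s, hs, zs⟩ := rolle_Icc hIA' ht.1.le ht.2 hτ.2.le (h.trans hAτ.symm)
    obtain ⟨u, hu, zu⟩ := rolle_Icc hIA' hτ.1.le hτ.2 le_rfl (hAτ.trans hAT.symm)
    exact no_three_zeros hET hne ⟨hr.1.le, by linarith [hr.2, ht.2, hτ.2]⟩
      ⟨by linarith [hs.1, ht.1], by linarith [hs.2, hτ.2]⟩ ⟨by linarith [hu.1, hτ.1], hu.2⟩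
      (hr.2.trans hs.1) (hs.2.trans hu.1) zr zs zu
  have A2 : ∀ t ∈ Ioo τ T, IA t ≠ 0 := by
    intro t ht h
    obtain ⟨r, hr, zr⟩ := rolle_Icc hIA' le_rfl hτ.1 hτ.2.le (hIA0.trans hAτ.symm)
    obtain ⟨s, hs, zs⟩ := rolle_Icc hIA' hτ.1.le ht.1 ht.2.le (hAτ.trans h.symm)
    obtain ⟨u, hu, zu⟩ := rolle_Icc hIA' (hτ.1.trans ht.1).le ht.2 le_rfl (h.trans hAT.symm)
    exact no_three_zeros hET hne ⟨hr.1.le, by linarith [hr.2, hτ.2]⟩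
      ⟨by linarith [hs.1, hτ.1], by linarith [hs.2, ht.2]⟩
      ⟨by linarith [hu.1, hτ.1, ht.1], hu.2⟩
      (hr.2.trans hs.1) (hs.2.trans hu.1) zr zs zu
  have sA1 := const_sign (hIAc.mono sub1) A1
  have sA2 := const_sign (hIAc.mono sub2) A2
  -- an extremum of `IA` at `τ` would give `A` a third zero
  have noext : ¬ IsLocalExtr IA τ := by
    intro hext
    have zτ := hext.hasDerivAt_eq_zero
      ((hIA' τ (Ioo_subset_Icc_self hτ)).hasDerivAt (Icc_mem_nhds hτ.1 hτ.2))
    obtain ⟨r, hr, zr⟩ := rolle_Icc hIA' le_rfl hτ.1 hτ.2.le (hIA0.trans hAτ.symm)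
    obtain ⟨u, hu, zu⟩ := rolle_Icc hIA' hτ.1.le hτ.2 le_rfl (hAτ.trans hAT.symm)
    exact no_three_zeros hET hne ⟨hr.1.le, hr.2.trans hτ.2⟩ hτmem
      ⟨hτ.1.le.trans hu.1.le, hu.2⟩ hr.2 hu.1 zr zτ zu
  have nhτ : Ioo 0 T ∈ nhds τ := Ioo_mem_nhds hτ.1 hτ.2
  have noPP : ¬ ((∀ t ∈ Ioo 0 τ, 0 < IA t) ∧ ∀ t ∈ Ioo τ T, 0 < IA t) := by
    rintro ⟨h1, h2⟩
    refine noext (Or.inl ?_)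
    filter_upwards [nhτ] with t ht
    rw [show IA τ = 0 from hAτ]
    rcases lt_trichotomy t τ with h | h | h
    · exact (h1 t ⟨ht.1, h⟩).le
    · rw [h]; exact (show IA τ = 0 from hAτ).ge
    · exact (h2 t ⟨h, ht.2⟩).le
  have noNN : ¬ ((∀ t ∈ Ioo 0 τ, IA t < 0) ∧ ∀ t ∈ Ioo τ T, IA t < 0) := by
    rintro ⟨h1, h2⟩
    refine noext (Or.inr ?_)
    filter_upwards [nhτ] with t ht
    rw [show IA τ = 0 from hAτ]
    rcases lt_trichotomy t τ with h | h | h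
    · exact (h1 t ⟨ht.1, h⟩).le
    · rw [h]; exact (show IA τ = 0 from hAτ).le
    · exact (h2 t ⟨h, ht.2⟩).le
  -- `B` changes sign at `τ` because its mean vanishes
  have noBPP : ¬ ((∀ t ∈ Ioo 0 τ, 0 < B t) ∧ ∀ t ∈ Ioo τ T, 0 < B t) := by
    rintro ⟨h1, h2⟩
    have := lt_of_deriv_pos_pieces hτ hIB' h1 h2
    exact this.ne (hIB0.trans hBT.symm)
  have noBNN : ¬ ((∀ t ∈ Ioo 0 τ, B t < 0) ∧ ∀ t ∈ Ioo τ T, B t < 0) := by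
    rintro ⟨h1, h2⟩
    have := lt_of_deriv_pos_pieces hτ (fun t ht => (hIB' t ht).neg)
      (fun t ht => neg_pos.2 (h1 t ht)) (fun t ht => neg_pos.2 (h2 t ht))
    have e0 := hIB0.trans hBT.symm
    simp only [Pi.neg_apply] at this
    exact this.ne (congrArg Neg.neg e0)
  obtain ⟨K, hK0, hK⟩ := exists_primitive hT (hIAc.mul (hcont a' b' c'))
  refine ⟨a, b, c, a', b', c', K, hAT, hBT, hK0, ?_, hK⟩
  have pos : (∀ t ∈ Ioo 0 τ, 0 < IA t * B t) → (∀ t ∈ Ioo τ T, 0 < IA t * B t) → K T ≠ 0 := by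
    intro h1 h2
    have := lt_of_deriv_pos_pieces hτ hK h1 h2
    rw [hK0] at this
    exact this.ne'
  have neg : (∀ t ∈ Ioo 0 τ, IA t * B t < 0) → (∀ t ∈ Ioo τ T, IA t * B t < 0) → K T ≠ 0 := by
    intro h1 h2
    have := lt_of_deriv_pos_pieces hτ (fun t ht => (hK t ht).neg)
      (fun t ht => neg_pos.2 (h1 t ht)) (fun t ht => neg_pos.2 (h2 t ht))
    simp only [Pi.neg_apply, hK0] at this
    intro h
    simp [h] at this
  rcases sA1 with p | p <;> rcases sA2 with q | q
  · exact absurd ⟨p, q⟩ noPP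
  · rcases sB1 with u | u <;> rcases sB2 with v | v
    · exact absurd ⟨u, v⟩ noBPP
    · exact pos (fun t ht => mul_pos (p t ht) (u t ht))
        (fun t ht => mul_pos_of_neg_of_neg (q t ht) (v t ht))
    · exact neg (fun t ht => mul_neg_of_pos_of_neg (p t ht) (u t ht))
        (fun t ht => mul_neg_of_neg_of_pos (q t ht) (v t ht))
    · exact absurd ⟨u, v⟩ noBNN
  · rcases sB1 with u | u <;> rcases sB2 with v | v
    · exact absurd ⟨u, v⟩ noBPP
    · exact neg (fun t ht => mul_neg_of_neg_of_pos (p t ht) (u t ht))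
        (fun t ht => mul_neg_of_pos_of_neg (q t ht) (v t ht))
    · exact pos (fun t ht => mul_pos_of_neg_of_neg (p t ht) (u t ht))
        (fun t ht => mul_pos (q t ht) (v t ht))
    · exact absurd ⟨u, v⟩ noBNN
  · exact absurd ⟨p, q⟩ noNN

/-! ### Second-order expansion of the return map -/

/-- Data of the family `x' = ε A x³ + (ε B + ε² f) x²` on `[0,T]`: primitives `IA`, `IB`, `F` of
`A`, `B`, `f`, with `IA` and `IB` vanishing at both ends, and a primitive `K` of `IA * B`. The
common value `k` of `F T` and `K T` is the coefficient of the second-order displacement function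
`k (1 - r²)`. The constant `M` bounds `A`, `B`, `f` and `IA` on `[0,T]`. -/
structure AbelData (T : ℝ) (A B f IA IB F K : ℝ → ℝ) (k M : ℝ) : Prop where
  hT : 0 < T
  hA : ContinuousOn A (Icc 0 T)
  hB : ContinuousOn B (Icc 0 T)
  hf : ContinuousOn f (Icc 0 T)
  dIA : ∀ t ∈ Icc (0:ℝ) T, HasDerivWithinAt IA (A t) (Icc 0 T) t
  dIB : ∀ t ∈ Icc (0:ℝ) T, HasDerivWithinAt IB (B t) (Icc 0 T) t
  dF : ∀ t ∈ Icc (0:ℝ) T, HasDerivWithinAt F (f t) (Icc 0 T) t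
  dK : ∀ t ∈ Icc (0:ℝ) T, HasDerivWithinAt K (IA t * B t) (Icc 0 T) t
  IA0 : IA 0 = 0
  IAT : IA T = 0
  IB0 : IB 0 = 0
  IBT : IB T = 0
  F0 : F 0 = 0
  FT : F T = k
  K0 : K 0 = 0
  KT : K T = k
  hM : 0 < M
  bA : ∀ t ∈ Icc (0:ℝ) T, |A t| ≤ M
  bB : ∀ t ∈ Icc (0:ℝ) T, |B t| ≤ M
  bf : ∀ t ∈ Icc (0:ℝ) T, |f t| ≤ M
  bIA : ∀ t ∈ Icc (0:ℝ) T, |IA t| ≤ M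

/-- The cubic coefficient of the family. -/
def cubicCoeff (A : ℝ → ℝ) (ε : ℝ) : ℝ → ℝ := fun t => ε * A t

/-- The quadratic coefficient of the family. -/
def quadCoeff (B f : ℝ → ℝ) (ε : ℝ) : ℝ → ℝ := fun t => ε * B t + ε ^ 2 * f t

lemma abs_mul_sub_mul_le {a a₀ b b₀ m n α β : ℝ} (h1 : |a - a₀| ≤ m) (h2 : |b - b₀| ≤ n)
    (hα : |a₀| ≤ α) (hβ : |b| ≤ β) : |a * b - a₀ * b₀| ≤ m * β + α * n := by
  have e : a * b - a₀ * b₀ = (a - a₀) * b + a₀ * (b - b₀) := by ring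
  rw [e]
  refine (abs_add_le _ _).trans ?_
  rw [abs_mul, abs_mul]
  exact add_le_add (mul_le_mul h1 hβ (abs_nonneg _) ((abs_nonneg _).trans h1))
    (mul_le_mul hα h2 (abs_nonneg _) ((abs_nonneg _).trans hα))

namespace AbelData

variable {T : ℝ} {A B f IA IB F K : ℝ → ℝ} {k M : ℝ}

lemma abs_cubic_le (D : AbelData T A B f IA IB F K k M) {ε : ℝ} (h0 : 0 < ε) (t : ℝ)
    (ht : t ∈ Icc (0:ℝ) T) : |cubicCoeff A ε t| ≤ 2 * M * ε := by
  unfold cubicCoeff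
  rw [abs_mul, abs_of_pos h0]
  nlinarith [D.bA t ht, D.hM]

lemma abs_quad_le (D : AbelData T A B f IA IB F K k M) {ε : ℝ} (h0 : 0 < ε) (h1 : ε ≤ 1) (t : ℝ)
    (ht : t ∈ Icc (0:ℝ) T) : |quadCoeff B f ε t| ≤ 2 * M * ε := by
  unfold quadCoeff
  refine (abs_add_le _ _).trans ?_
  rw [abs_mul, abs_mul, abs_of_pos h0, abs_of_pos (by positivity : 0 < ε ^ 2)]
  have e1 : ε * |B t| ≤ ε * M := mul_le_mul_of_nonneg_left (D.bB t ht) h0.le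
  have e2 : ε ^ 2 * |f t| ≤ ε * M := by
    refine mul_le_mul ?_ (D.bf t ht) (abs_nonneg _) h0.le
    nlinarith
  linarith

lemma drift (D : AbelData T A B f IA IB F K k M) {ε : ℝ} (h0 : 0 < ε) (h1 : ε ≤ 1) {x : ℝ → ℝ}
    (hx : AbelSol (cubicCoeff A ε) (quadCoeff B f ε) T x)
    (hm : ∀ t ∈ Icc (0:ℝ) T, x t ∈ Icc (1 / 2 : ℝ) (3 / 2)) :
    ∀ t ∈ Icc (0:ℝ) T, |x t - x 0| ≤ 12 * M * T * ε := by
  intro t ht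
  have hM := D.hM
  have := norm_image_sub_le_of_norm_deriv_le_segment' hx (C := 12 * M * ε) (fun s hs => ?_) t ht
  · rw [Real.norm_eq_abs] at this
    refine this.trans ?_
    have : 12 * M * ε * (t - 0) ≤ 12 * M * ε * T :=
      mul_le_mul_of_nonneg_left (by linarith [ht.2]) (by positivity)
    linarith
  · have hs' := Ico_subset_Icc_self hs
    have ha := D.abs_cubic_le h0 s hs'
    have hb := D.abs_quad_le h0 h1 s hs'
    have hxs := hm s hs'
    have x0 : 0 ≤ x s := by linarith [hxs.1]
    have e3 : x s ^ 3 ≤ 27 / 8 := by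
      calc x s ^ 3 ≤ (3 / 2) ^ 3 := pow_le_pow_left₀ x0 hxs.2 3
        _ = 27 / 8 := by norm_num
    have e2 : x s ^ 2 ≤ 9 / 4 := by
      calc x s ^ 2 ≤ (3 / 2) ^ 2 := pow_le_pow_left₀ x0 hxs.2 2
        _ = 9 / 4 := by norm_num
    rw [Real.norm_eq_abs]
    refine (abs_add_le _ _).trans ?_
    rw [abs_mul, abs_mul, abs_of_nonneg (pow_nonneg x0 3), abs_of_nonneg (pow_nonneg x0 2)]
    have p : 0 ≤ 2 * M * ε := by positivity
    have i1 := mul_le_mul ha e3 (pow_nonneg x0 3) p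
    have i2 := mul_le_mul hb e2 (pow_nonneg x0 2) p
    nlinarith

/-- The reciprocal of a solution is differentiable, with derivative affine in the solution. -/
lemma deriv_inv {a b : ℝ → ℝ} {x : ℝ → ℝ} (hx : AbelSol a b T x)
    (hm : ∀ t ∈ Icc (0:ℝ) T, x t ∈ Icc (1 / 2 : ℝ) (3 / 2)) :
    ∀ t ∈ Icc (0:ℝ) T, HasDerivWithinAt (fun s => (x s)⁻¹) (-(a t * x t + b t)) (Icc 0 T) t := by
  intro t ht
  have hne : x t ≠ 0 := by linarith [(hm t ht).1]
  refine ((hx t ht).fun_inv hne).congr_deriv ?_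
  field_simp

/-- Expansion of the displacement of `1/x` over `[0,T]` up to an error of order `ε³`. -/
lemma displacement (D : AbelData T A B f IA IB F K k M) {ε : ℝ} (h0 : 0 < ε) (h1 : ε ≤ 1)
    {x : ℝ → ℝ} (hx : AbelSol (cubicCoeff A ε) (quadCoeff B f ε) T x)
    (hm : ∀ t ∈ Icc (0:ℝ) T, x t ∈ Icc (1 / 2 : ℝ) (3 / 2)) :
    |(x T)⁻¹ - (x 0)⁻¹ + ε ^ 2 * (k * (1 - x 0 ^ 2))|
      ≤ ε ^ 3 * ((120 * M ^ 3 * T + 3 * M ^ 2) * T) := by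
  have hM := D.hM
  have hT := D.hT
  have m0 : (0:ℝ) ∈ Icc (0:ℝ) T := ⟨le_rfl, hT.le⟩
  have mT : T ∈ Icc (0:ℝ) T := ⟨hT.le, le_rfl⟩
  -- adding correctors removes all terms of the derivative of `1/x` up to second order
  let H : ℝ → ℝ := fun t => (x t)⁻¹ + ε * (IA t * x t) + ε * IB t + ε ^ 2 * F t
    - ε ^ 2 * (x 0 ^ 3 / 2 * IA t ^ 2 + x 0 ^ 2 * K t)
  let H' : ℝ → ℝ := fun t => ε ^ 2 * (IA t * ((A t * x t ^ 3 + B t * x t ^ 2)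
    - (A t * x 0 ^ 3 + B t * x 0 ^ 2) + ε * (f t * x t ^ 2)))
  have hH : ∀ t ∈ Icc (0:ℝ) T, HasDerivWithinAt H (H' t) (Icc 0 T) t := by
    intro t ht
    have d1 := deriv_inv hx hm t ht
    have d2 := (((D.dIA t ht).fun_mul (hx t ht)).const_mul ε)
    have d3 := (D.dIB t ht).const_mul ε
    have d4 := (D.dF t ht).const_mul (ε ^ 2)
    have d5 := ((((D.dIA t ht).fun_pow 2).const_mul (x 0 ^ 3 / 2)).fun_add
      ((D.dK t ht).const_mul (x 0 ^ 2))).const_mul (ε ^ 2)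
    refine ((((d1.fun_add d2).fun_add d3).fun_add d4).fun_sub d5).congr_deriv ?_
    simp only [H', cubicCoeff, quadCoeff]
    push_cast
    ring
  have hb : ∀ t ∈ Ico (0:ℝ) T, ‖H' t‖ ≤ ε ^ 3 * (120 * M ^ 3 * T + 3 * M ^ 2) := by
    intro t ht'
    have ht := Ico_subset_Icc_self ht'
    have xt := hm t ht
    have x0 := hm 0 m0
    have i1 := abel_lipschitz (D.bA t ht) (D.bB t ht) (x := x t) (y := x 0) (R := 3 / 2)
      (by rw [abs_le]; constructor <;> linarith [xt.1, xt.2])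
      (by rw [abs_le]; constructor <;> linarith [x0.1, x0.2])
    have i2 := D.drift h0 h1 hx hm t ht
    have i3 : M * (3 * (3 / 2) ^ 2 + 2 * (3 / 2)) * |x t - x 0|
        ≤ M * 10 * (12 * M * T * ε) :=
      mul_le_mul (by nlinarith) i2 (abs_nonneg _) (by positivity)
    have e2 : |x t ^ 2| ≤ 3 := by
      rw [abs_of_nonneg (sq_nonneg _)]; nlinarith [xt.1, xt.2]
    have i4 : |ε * (f t * x t ^ 2)| ≤ ε * (M * 3) := by
      rw [abs_mul, abs_mul, abs_of_pos h0]
      exact mul_le_mul_of_nonneg_left (mul_le_mul (D.bf t ht) e2 (abs_nonneg _) hM.le) h0.le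
    have i5 := abs_add_le ((A t * x t ^ 3 + B t * x t ^ 2)
      - (A t * x 0 ^ 3 + B t * x 0 ^ 2)) (ε * (f t * x t ^ 2))
    have i6 : |(A t * x t ^ 3 + B t * x t ^ 2)
      - (A t * x 0 ^ 3 + B t * x 0 ^ 2) + ε * (f t * x t ^ 2)| ≤
        M * 10 * (12 * M * T * ε) + ε * (M * 3) := by linarith
    simp only [H']
    rw [Real.norm_eq_abs, abs_mul, abs_mul, abs_of_pos (by positivity : 0 < ε ^ 2)]
    calc _ ≤ ε ^ 2 * (M * (M * 10 * (12 * M * T * ε) + ε * (M * 3))) :=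
          mul_le_mul_of_nonneg_left (mul_le_mul (D.bIA t ht) i6 (abs_nonneg _) hM.le)
            (by positivity)
      _ = _ := by ring
  have key := norm_image_sub_le_of_norm_deriv_le_segment' hH hb T mT
  rw [Real.norm_eq_abs] at key
  have e : H T - H 0 = (x T)⁻¹ - (x 0)⁻¹ + ε ^ 2 * (k * (1 - x 0 ^ 2)) := by
    simp only [H, D.IA0, D.IAT, D.IB0, D.IBT, D.F0, D.FT, D.K0, D.KT]
    ring
  rw [e] at key
  refine key.trans (le_of_eq ?_)
  ring

/-- For small `ε`, two closed solutions staying in `[1/2, 3/2]` have the same initial value: for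
distinct ones the logarithmic derivative `ε A x y` of `1/x - 1/y` has zero integral, whereas that
integral equals `-ε² k x(0) y(0) (x(0) + y(0))` up to an error of order `ε³`. -/
lemma closed_unique (D : AbelData T A B f IA IB F K k M) {ε : ℝ} (h0 : 0 < ε) (h1 : ε ≤ 1)
    (hε : ε * ((1056 * M ^ 3 * T + 16 * M ^ 2) * T) < |k| / 4)
    {x y : ℝ → ℝ} (hx : AbelSol (cubicCoeff A ε) (quadCoeff B f ε) T x)
    (hm : ∀ t ∈ Icc (0:ℝ) T, x t ∈ Icc (1 / 2 : ℝ) (3 / 2))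
    (hy : AbelSol (cubicCoeff A ε) (quadCoeff B f ε) T y)
    (hn : ∀ t ∈ Icc (0:ℝ) T, y t ∈ Icc (1 / 2 : ℝ) (3 / 2))
    (cx : x 0 = x T) (cy : y 0 = y T) : y 0 = x 0 := by
  by_contra hne
  have hM := D.hM
  have hT := D.hT
  have m0 : (0:ℝ) ∈ Icc (0:ℝ) T := ⟨le_rfl, hT.le⟩
  have mT : T ∈ Icc (0:ℝ) T := ⟨hT.le, le_rfl⟩
  obtain ⟨Q, hQ0, hQ⟩ := exists_primitive hT
    (g := fun t => ε * (A t * (x t * y t)))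
    (continuousOn_const.mul (D.hA.mul (hx.continuousOn.mul hy.continuousOn)))
  have hQT : Q T = 0 := by
    have hw : ∀ t ∈ Icc (0:ℝ) T, HasDerivWithinAt
        (fun s => ((x s)⁻¹ - (y s)⁻¹) * Real.exp (-Q s)) 0 (Icc 0 T) t := by
      intro t ht
      have xne : x t ≠ 0 := by linarith [(hm t ht).1]
      have yne : y t ≠ 0 := by linarith [(hn t ht).1]
      refine (((deriv_inv hx hm t ht).fun_sub (deriv_inv hy hn t ht)).fun_mul
        (hQ t ht).fun_neg.exp).congr_deriv ?_
      simp only [cubicCoeff]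
      field_simp
      ring
    have := norm_image_sub_le_of_norm_deriv_le_segment' hw (C := 0) (by simp) T mT
    rw [zero_mul, norm_le_zero_iff, sub_eq_zero, hQ0, ← cx, ← cy] at this
    have wne : (x 0)⁻¹ - (y 0)⁻¹ ≠ 0 := by
      rw [sub_ne_zero]
      intro h
      exact hne (inv_injective h).symm
    have := mul_left_cancel₀ wne this
    have := Real.exp_injective this
    linarith
  -- `J` is `Q` with correctors removing all terms of its derivative up to second order
  let p : ℝ → ℝ := fun t => x t * x t * x t * y t + y t * y t * y t * x t
  let q : ℝ → ℝ := fun t => x t * x t * y t + y t * y t * x t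
  let J : ℝ → ℝ := fun t => Q t - ε * (IA t * (x t * y t))
    + ε ^ 2 * (p 0 / 2 * IA t ^ 2 + q 0 * K t)
  let J' : ℝ → ℝ := fun t => -(ε ^ 2 * (IA t * (A t * (p t - p 0) + B t * (q t - q 0)
    + ε * (f t * q t))))
  have hJ : ∀ t ∈ Icc (0:ℝ) T, HasDerivWithinAt J (J' t) (Icc 0 T) t := by
    intro t ht
    have d2 := ((D.dIA t ht).fun_mul ((hx t ht).fun_mul (hy t ht))).const_mul ε
    have d5 := ((((D.dIA t ht).fun_pow 2).const_mul (p 0 / 2)).fun_add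
      ((D.dK t ht).const_mul (q 0))).const_mul (ε ^ 2)
    refine (((hQ t ht).fun_sub d2).fun_add d5).congr_deriv ?_
    simp only [J', p, q, cubicCoeff, quadCoeff]
    push_cast
    ring
  have hb : ∀ t ∈ Ico (0:ℝ) T, ‖J' t‖ ≤ ε ^ 3 * (1056 * M ^ 3 * T + 16 * M ^ 2) := by
    intro t ht'
    have ht := Ico_subset_Icc_self ht'
    have bnd : ∀ {z : ℝ → ℝ}, (∀ t ∈ Icc (0:ℝ) T, z t ∈ Icc (1 / 2 : ℝ) (3 / 2)) →
        ∀ s ∈ Icc (0:ℝ) T, |z s| ≤ 2 := by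
      intro z hz s hs
      rw [abs_le]; constructor <;> linarith [(hz s hs).1, (hz s hs).2]
    have bx := bnd hm t ht
    have by' := bnd hn t ht
    have bx0 := bnd hm 0 m0
    have by0 := bnd hn 0 m0
    set d := 12 * M * T * ε with hd
    have dx := D.drift h0 h1 hx hm t ht
    have dy := D.drift h0 h1 hy hn t ht
    have sq : ∀ {u : ℝ}, |u| ≤ 2 → |u * u| ≤ 4 := by
      intro u hu
      rw [abs_mul]; nlinarith [abs_nonneg u]
    have cu : ∀ {u : ℝ}, |u| ≤ 2 → |u * u * u| ≤ 8 := by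
      intro u hu
      rw [abs_mul]; nlinarith [abs_nonneg u, sq hu, abs_nonneg (u * u)]
    have x2 := abs_mul_sub_mul_le dx dx bx0 bx
    have x3 := abs_mul_sub_mul_le x2 dx (sq bx0) bx
    have x3y := abs_mul_sub_mul_le x3 dy (cu bx0) by'
    have x2y := abs_mul_sub_mul_le x2 dy (sq bx0) by'
    have y2 := abs_mul_sub_mul_le dy dy by0 by'
    have y3 := abs_mul_sub_mul_le y2 dy (sq by0) by'
    have y3x := abs_mul_sub_mul_le y3 dx (cu by0) bx
    have y2x := abs_mul_sub_mul_le y2 dx (sq by0) bx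
    have hp : |p t - p 0| ≤ 64 * d := by
      have := abs_add_le (x t * x t * x t * y t - x 0 * x 0 * x 0 * y 0)
        (y t * y t * y t * x t - y 0 * y 0 * y 0 * x 0)
      have e : p t - p 0 = (x t * x t * x t * y t - x 0 * x 0 * x 0 * y 0)
        + (y t * y t * y t * x t - y 0 * y 0 * y 0 * x 0) := by simp only [p]; ring
      rw [e]; linarith
    have hq : |q t - q 0| ≤ 24 * d := by
      have := abs_add_le (x t * x t * y t - x 0 * x 0 * y 0)
        (y t * y t * x t - y 0 * y 0 * x 0)
      have e : q t - q 0 = (x t * x t * y t - x 0 * x 0 * y 0)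
        + (y t * y t * x t - y 0 * y 0 * x 0) := by simp only [q]; ring
      rw [e]; linarith
    have hq' : |q t| ≤ 16 := by
      have := abs_add_le (x t * x t * y t) (y t * y t * x t)
      rw [abs_mul (x t * x t), abs_mul (y t * y t)] at this
      have i1 := mul_le_mul (sq bx) by' (abs_nonneg _) (by norm_num)
      have i2 := mul_le_mul (sq by') bx (abs_nonneg _) (by norm_num)
      simp only [q]; linarith
    have i1 : |A t * (p t - p 0)| ≤ M * (64 * d) := by
      rw [abs_mul]; exact mul_le_mul (D.bA t ht) hp (abs_nonneg _) hM.le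
    have i2 : |B t * (q t - q 0)| ≤ M * (24 * d) := by
      rw [abs_mul]; exact mul_le_mul (D.bB t ht) hq (abs_nonneg _) hM.le
    have i3 : |ε * (f t * q t)| ≤ ε * (M * 16) := by
      rw [abs_mul, abs_mul, abs_of_pos h0]
      exact mul_le_mul_of_nonneg_left (mul_le_mul (D.bf t ht) hq' (abs_nonneg _) hM.le) h0.le
    have i4 := abs_add_three (A t * (p t - p 0)) (B t * (q t - q 0)) (ε * (f t * q t))
    have i5 : |A t * (p t - p 0) + B t * (q t - q 0) + ε * (f t * q t)|
        ≤ M * (88 * d) + ε * (M * 16) := by linarith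
    simp only [J']
    rw [norm_neg, Real.norm_eq_abs, abs_mul, abs_mul, abs_of_pos (by positivity : 0 < ε ^ 2)]
    calc _ ≤ ε ^ 2 * (M * (M * (88 * d) + ε * (M * 16))) :=
          mul_le_mul_of_nonneg_left (mul_le_mul (D.bIA t ht) i5 (abs_nonneg _) hM.le)
            (by positivity)
      _ = _ := by rw [hd]; ring
  have key := norm_image_sub_le_of_norm_deriv_le_segment' hJ hb T mT
  have e : J T - J 0 = ε ^ 2 * (q 0 * k) := by
    simp only [J, D.IA0, D.IAT, D.K0, D.KT, hQ0, hQT]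
    ring
  have hq0 : 1 / 4 ≤ q 0 := by
    have a := (hm 0 m0).1
    have b := (hn 0 m0).1
    have xx : 1 / 4 ≤ x 0 * x 0 := by nlinarith
    have yy : 1 / 4 ≤ y 0 * y 0 := by nlinarith
    simp only [q]
    nlinarith
  rw [e, Real.norm_eq_abs, abs_mul, abs_mul, abs_of_pos (by positivity : 0 < ε ^ 2),
    abs_of_pos (by linarith : 0 < q 0)] at key
  have k1 : q 0 * |k| ≤ ε * ((1056 * M ^ 3 * T + 16 * M ^ 2) * T) := by
    refine le_of_mul_le_mul_left ?_ (by positivity : 0 < ε ^ 2)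
    refine key.trans (le_of_eq ?_)
    ring
  nlinarith [abs_nonneg k]

/-- For all small `ε > 0` the family has a limit cycle near the zero `r = 1` of the second-order
displacement `k (1 - r²)`. -/
lemma exists_limitCycle (D : AbelData T A B f IA IB F K k M) (hk : k ≠ 0) :
    ∃ ε₀ > 0, ∀ ε, 0 < ε → ε < ε₀ →
      ∃ x, LimitCycle (cubicCoeff A ε) (quadCoeff B f ε) T x ∧ 0 < x 0 := by
  have hM := D.hM
  have hT := D.hT
  have hk' : 0 < |k| := abs_pos.2 hk
  set C₁ := (120 * M ^ 3 * T + 3 * M ^ 2) * T with hC₁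
  set C₂ := (1056 * M ^ 3 * T + 16 * M ^ 2) * T with hC₂
  have pC₁ : 0 < C₁ := by positivity
  have pC₂ : 0 < C₂ := by positivity
  refine ⟨min (min 1 (1 / (96 * M * T))) (min (|k| / 4 / C₁) (|k| / 4 / C₂)), by positivity, ?_⟩
  intro ε h0 hε
  simp only [lt_min_iff] at hε
  obtain ⟨⟨h1, h2⟩, h3, h4⟩ := hε
  rw [lt_div_iff₀ (by positivity)] at h2 h3 h4
  have cA : ContinuousOn (cubicCoeff A ε) (Icc 0 T) := continuousOn_const.mul D.hA
  have cB : ContinuousOn (quadCoeff B f ε) (Icc 0 T) :=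
    (continuousOn_const.mul D.hB).add (continuousOn_const.mul D.hf)
  obtain ⟨φ, hφ, hφc⟩ := abel_flow hT cA cB (D.abs_cubic_le h0)
    (D.abs_quad_le h0 h1.le) (by nlinarith)
  have mT : T ∈ Icc (0:ℝ) T := ⟨hT.le, le_rfl⟩
  -- `k (1/φ(T) - 1/r)` has the sign of `-(1 - r²)` when `|1 - r²| ≥ 7/16`
  have est : ∀ r ∈ Icc (3 / 4 : ℝ) (5 / 4),
      |k * ((φ r T)⁻¹ - r⁻¹) + ε ^ 2 * (k ^ 2 * (1 - r ^ 2))| < ε ^ 2 * (k ^ 2 / 4) := by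
    intro r hr
    obtain ⟨s, i, m⟩ := hφ r hr
    have := D.displacement h0 h1.le s m
    rw [i] at this
    have e : k * ((φ r T)⁻¹ - r⁻¹) + ε ^ 2 * (k ^ 2 * (1 - r ^ 2))
        = k * ((φ r T)⁻¹ - r⁻¹ + ε ^ 2 * (k * (1 - r ^ 2))) := by ring
    rw [e, abs_mul]
    calc _ ≤ |k| * (ε ^ 3 * C₁) := mul_le_mul_of_nonneg_left this hk'.le
      _ = |k| * ε ^ 2 * (ε * C₁) := by ring
      _ < |k| * ε ^ 2 * (|k| / 4) := mul_lt_mul_of_pos_left h3 (by positivity)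
      _ = ε ^ 2 * (|k| ^ 2 / 4) := by ring
      _ = _ := by rw [sq_abs]
  have conv : ∀ r ∈ Icc (3 / 4 : ℝ) (5 / 4),
      k * (φ r T - r) = -(k * ((φ r T)⁻¹ - r⁻¹)) * (φ r T * r) ∧ 0 < φ r T * r := by
    intro r hr
    have m := (hφ r hr).2.2 T mT
    have p1 : 0 < φ r T := by linarith [m.1]
    have p2 : 0 < r := by linarith [hr.1]
    refine ⟨?_, by positivity⟩
    field_simp
    ring
  have pk : 0 < ε ^ 2 * k ^ 2 := by positivity
  have lo : (3 / 4 : ℝ) ∈ Icc (3 / 4 : ℝ) (5 / 4) := by norm_num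
  have hi : (5 / 4 : ℝ) ∈ Icc (3 / 4 : ℝ) (5 / 4) := by norm_num
  have glo : 0 < k * (φ (3 / 4) T - 3 / 4) := by
    obtain ⟨e, p⟩ := conv _ lo
    rw [e]
    have := (abs_lt.1 (est _ lo)).2
    exact mul_pos (by nlinarith) p
  have ghi : k * (φ (5 / 4) T - 5 / 4) < 0 := by
    obtain ⟨e, p⟩ := conv _ hi
    rw [e]
    have := (abs_lt.1 (est _ hi)).1
    exact mul_neg_of_neg_of_pos (by nlinarith) p
  have hc : ContinuousOn (fun r => k * (φ r T - r)) (Icc (3 / 4 : ℝ) (5 / 4)) :=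
    continuousOn_const.mul (hφc.sub continuousOn_id)
  obtain ⟨r, hr, hr0⟩ := intermediate_value_Icc' (by norm_num) hc ⟨ghi.le, glo.le⟩
  simp only at hr0
  have r1 : 3 / 4 < r := lt_of_le_of_ne hr.1 (by rintro rfl; exact glo.ne' hr0)
  have r2 : r < 5 / 4 := lt_of_le_of_ne hr.2 (by rintro rfl; exact ghi.ne hr0)
  have hfix : φ r T = r := sub_eq_zero.1 ((mul_eq_zero.1 hr0).resolve_left hk)
  obtain ⟨sx, ix, mx⟩ := hφ r hr
  refine ⟨φ r, ⟨⟨sx, by rw [ix, hfix]⟩, min (r - 3 / 4) (5 / 4 - r),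
    lt_min (by linarith) (by linarith), ?_⟩, by rw [ix]; linarith⟩
  rintro y ⟨sy, cy⟩ hy
  rw [ix, lt_min_iff, abs_lt, abs_lt] at hy
  have hy0 : y 0 ∈ Icc (3 / 4 : ℝ) (5 / 4) := ⟨by linarith [hy.1.1], by linarith [hy.2.2]⟩
  obtain ⟨s', i', m'⟩ := hφ (y 0) hy0
  have heq := abel_unique cA cB sy s' i'.symm
  exact D.closed_unique h0 h1.le h4 sx mx sy (fun t ht => by rw [heq ht]; exact m' t ht)
    (by rw [ix, hfix]) cy

end AbelData

/-! ### Reflection and conclusion -/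

lemma AbelSol.neg {A B B' : ℝ → ℝ} {T : ℝ} (hB : ∀ t, B' t = -B t) {x : ℝ → ℝ}
    (h : AbelSol A B T x) : AbelSol A B' T (fun t => -x t) := by
  intro t ht
  refine (h t ht).fun_neg.congr_deriv ?_
  rw [hB]
  ring

/-- The reflection `x ↦ -x` exchanges the limit cycles of `(A, B)` and `(A, -B)`. -/
lemma LimitCycle.neg {A B B' : ℝ → ℝ} {T : ℝ} (hB : ∀ t, B' t = -B t) {x : ℝ → ℝ}
    (h : LimitCycle A B T x) : LimitCycle A B' T (fun t => -x t) := by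
  obtain ⟨⟨hs, hc⟩, ε, hε, hi⟩ := h
  refine ⟨⟨hs.neg hB, by simp [hc]⟩, ε, hε, ?_⟩
  rintro y ⟨sy, cy⟩ hy
  have hB' : ∀ t, B t = -B' t := fun t => by rw [hB]; ring
  have := hi (fun t => -y t) ⟨sy.neg hB', by simp [cy]⟩ (by
    rw [← abs_neg]
    convert hy using 2
    ring)
  simp only at this ⊢
  linarith

/-- Sharpness of the bound: there exist coefficients `A,B` in the span of
the ET-system `{f₀,f₁,f₂}` for which the Abel equation has at least two non-zero limit
cycles. -/
theorem abel_two_nonzero_limit_cycles_sharp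
    (T : ℝ) (hT : 0 < T) (f₀ f₁ f₂ : ℝ → ℝ)
    (hf₀C2 : ContDiffOn ℝ 2 f₀ (Set.Ico (0:ℝ) T))
    (hf₁C2 : ContDiffOn ℝ 2 f₁ (Set.Ico (0:ℝ) T))
    (hf₂C2 : ContDiffOn ℝ 2 f₂ (Set.Ico (0:ℝ) T))
    (hf₀c : ContinuousOn f₀ (Set.Icc (0:ℝ) T))
    (hf₁c : ContinuousOn f₁ (Set.Icc (0:ℝ) T))
    (hf₂c : ContinuousOn f₂ (Set.Icc (0:ℝ) T))
    (hET : IsETSystem3 (Set.Ico (0:ℝ) T) f₀ f₁ f₂)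
    (hf₀pos : ∀ t ∈ Set.Icc (0:ℝ) T, 0 < f₀ t) :
    ∃ A B : ℝ → ℝ,
      (∃ a b c : ℝ, A = fun t => a * f₀ t + b * f₁ t + c * f₂ t) ∧
      (∃ a b c : ℝ, B = fun t => a * f₀ t + b * f₁ t + c * f₂ t) ∧
      2 ≤ Set.encard {v | v ∈ LCInits A B T ∧ v ≠ 0} := by
  obtain ⟨G₀, z₀, dG₀⟩ := exists_primitive hT hf₀c
  obtain ⟨G₁, z₁, dG₁⟩ := exists_primitive hT hf₁c
  obtain ⟨G₂, z₂, dG₂⟩ := exists_primitive hT hf₂c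
  obtain ⟨a, b, c, a', b', c', K, hAT, hBT, hK0, hKT, hK⟩ :=
    exists_area hT hf₀c hf₁c hf₂c hET z₀ z₁ z₂ dG₀ dG₁ dG₂
  have hG₀T : 0 < G₀ T := by
    have hm : T / 2 ∈ Ioo 0 T := ⟨by linarith, by linarith⟩
    have := lt_of_deriv_pos_pieces hm dG₀
      (fun t ht => hf₀pos t ⟨ht.1.le, by linarith [ht.2]⟩)
      (fun t ht => hf₀pos t ⟨by linarith [ht.1], ht.2.le⟩)
    rwa [z₀] at this
  have hlin : ∀ a b c : ℝ, ∀ t ∈ Icc (0:ℝ) T, HasDerivWithinAt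
      (fun t => a * G₀ t + b * G₁ t + c * G₂ t) (a * f₀ t + b * f₁ t + c * f₂ t) (Icc 0 T) t :=
    fun a b c t ht => (((dG₀ t ht).const_mul a).add ((dG₁ t ht).const_mul b)).add
      ((dG₂ t ht).const_mul c)
  have hcont : ∀ a b c : ℝ, ContinuousOn (fun t => a * f₀ t + b * f₁ t + c * f₂ t) (Icc 0 T) :=
    fun a b c => by fun_prop
  set k := K T with hk
  -- the multiple of `f₀` whose integral is `k`
  set β := k / G₀ T with hβ
  have hβk : β * G₀ T = k := by rw [hβ]; field_simp
  set A : ℝ → ℝ := fun t => a * f₀ t + b * f₁ t + c * f₂ t with hA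
  set B : ℝ → ℝ := fun t => a' * f₀ t + b' * f₁ t + c' * f₂ t with hB
  set IA : ℝ → ℝ := fun t => a * G₀ t + b * G₁ t + c * G₂ t with hIA
  set IB : ℝ → ℝ := fun t => a' * G₀ t + b' * G₁ t + c' * G₂ t with hIB
  have dIA := hlin a b c
  have dIB := hlin a' b' c'
  have cf : ContinuousOn (fun t => β * f₀ t) (Icc 0 T) := continuousOn_const.mul hf₀c
  have dF : ∀ t ∈ Icc (0:ℝ) T,
      HasDerivWithinAt (fun t => β * G₀ t) (β * f₀ t) (Icc 0 T) t :=
    fun t ht => (dG₀ t ht).const_mul β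
  obtain ⟨M₁, p₁, b₁⟩ := exists_abs_bound (hcont a b c)
  obtain ⟨M₂, p₂, b₂⟩ := exists_abs_bound (hcont a' b' c')
  obtain ⟨M₃, p₃, b₃⟩ := exists_abs_bound cf
  obtain ⟨M₄, p₄, b₄⟩ := exists_abs_bound (g := IA)
    (fun t ht => (dIA t ht).continuousWithinAt)
  have IA0 : IA 0 = 0 := by simp [hIA, z₀, z₁, z₂]
  have IB0 : IB 0 = 0 := by simp [hIB, z₀, z₁, z₂]
  have D : AbelData T A B (fun t => β * f₀ t) IA IB (fun t => β * G₀ t) K k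
      (M₁ + M₂ + M₃ + M₄) :=
    { hT := hT, hA := hcont a b c, hB := hcont a' b' c', hf := cf
      dIA := dIA, dIB := dIB, dF := dF, dK := hK
      IA0 := IA0, IAT := hAT, IB0 := IB0, IBT := hBT
      F0 := by simp [z₀], FT := hβk, K0 := hK0, KT := rfl
      hM := by positivity
      bA := fun t ht => (b₁ t ht).trans (by linarith)
      bB := fun t ht => (b₂ t ht).trans (by linarith)
      bf := fun t ht => (b₃ t ht).trans (by linarith)
      bIA := fun t ht => (b₄ t ht).trans (by linarith) }
  have D' : AbelData T A (fun t => -B t) (fun t => -(β * f₀ t)) IA (fun t => -IB t)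
      (fun t => -(β * G₀ t)) (fun t => -K t) (-k) (M₁ + M₂ + M₃ + M₄) :=
    { hT := hT, hA := D.hA, hB := D.hB.neg, hf := D.hf.neg
      dIA := dIA
      dIB := fun t ht => (dIB t ht).fun_neg
      dF := fun t ht => (dF t ht).fun_neg
      dK := fun t ht => by
        have := (hK t ht).fun_neg
        rwa [neg_mul_eq_mul_neg] at this
      IA0 := IA0, IAT := hAT
      IB0 := by simp [IB0]
      IBT := by simpa using D.IBT
      F0 := by simp [z₀]
      FT := by simp [hβk]
      K0 := by simp [hK0]
      KT := rfl
      hM := D.hM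
      bA := D.bA
      bB := fun t ht => by rw [abs_neg]; exact D.bB t ht
      bf := fun t ht => by rw [abs_neg]; exact D.bf t ht
      bIA := D.bIA }
  obtain ⟨ε₁, hε₁, H₁⟩ := D.exists_limitCycle hKT
  obtain ⟨ε₂, hε₂, H₂⟩ := D'.exists_limitCycle (neg_ne_zero.2 hKT)
  have hm : 0 < min ε₁ ε₂ := lt_min hε₁ hε₂
  set ε := min ε₁ ε₂ / 2 with hε
  have e0 : 0 < ε := by positivity
  obtain ⟨x, hx, x0⟩ := H₁ ε e0 (by linarith [min_le_left ε₁ ε₂])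
  obtain ⟨y, hy, y0⟩ := H₂ ε e0 (by linarith [min_le_right ε₁ ε₂])
  have hy' : LimitCycle (cubicCoeff A ε) (quadCoeff B (fun t => β * f₀ t) ε) T
      (fun t => -y t) := hy.neg (fun t => by simp only [quadCoeff]; ring)
  refine ⟨cubicCoeff A ε, quadCoeff B (fun t => β * f₀ t) ε,
    ⟨ε * a, ε * b, ε * c, by funext t; simp only [cubicCoeff, hA]; ring⟩,
    ⟨ε * a' + ε ^ 2 * β, ε * b', ε * c', by funext t; simp only [quadCoeff, hB]; ring⟩, ?_⟩
  have hsub : ({x 0, -y 0} : Set ℝ) ⊆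
      {v | v ∈ LCInits (cubicCoeff A ε) (quadCoeff B (fun t => β * f₀ t) ε) T ∧ v ≠ 0} := by
    rintro v (rfl | rfl)
    · exact ⟨⟨x, hx, rfl⟩, x0.ne'⟩
    · exact ⟨⟨_, hy', rfl⟩, (neg_neg_of_pos y0).ne⟩
  rw [← Set.encard_pair (show x 0 ≠ -y 0 by linarith)]
  exact Set.encard_le_encard hsub
end
end

section
/- For all real parameters a₀, a₁, a₂, b₀, b₁, b₂, the Abel equation x' = (a₀ + a₁ sin t + a₂ cos t)x³ + (b₀ + b₁ sin t + b₂ cos t)x², t ∈ [0, 2π], has at most three limit cycles, where the trivial solution x = 0 is counted among them when it is isolated. -/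
/-!
Every limit cycle extends to a `2π`-periodic solution on `ℝ`, so it suffices to rule out three
isolated periodic solutions with distinct nonzero initial values.

*Independent case*, `a₁ b₂ ≠ a₂ b₁`. A time shift and `x ↦ -x` bring the equation to the normal form
`A = a₀ - r sin t`, `B = b₀ + b cos t + b' sin t` with `r, b > 0`. Two facts carry the proof.

* `no_neg`: if `b₀ ≤ 0 ≤ a₀` there is no negative periodic solution, by a comparison of `X(t)` with
  `X(-t)`. The reflection `(t, x) ↦ (-t, -x)` treats `a₀ ≤ 0`, so for `b₀ ≤ 0` all nonzero periodic
  solutions have one sign.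
* `singular_neg`: for a multiple positive periodic solution (`∫ A X² = 0`) the integral
  `∫ A X³ exp(∫ A X²)`, which has the sign of the second derivative of the return map, is negative,
  whatever the value of `b₀`.

The equation with `B + β` in place of `B` is a rotated family: the displacement map is strictly
increasing in `β`. Suppose two positive periodic solutions exist and the displacement is nonnegative
at some point below them. Raising `β` until the zeros disappear, one finds at the last value of `β`
a zero near which three solutions merge (`triple`), and there the integral above has to be
nonnegative (`triple_int`, `limit_int`), contradicting `singular_neg`. This is `no_two_above`. It
excludes three positive periodic solutions and, when `b₀ > 0`, even two, since the displacement is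
then positive near `0`. With the reflection, at most two nonzero periodic solutions remain in all
cases (`normal_form`).

*Dependent case*. If `A` is a nonzero constant, `const_two` gives at most one periodic solution of
each sign. If `B = k - m A` with `k ≠ 0`, periodic solutions avoid the value `m` and there is at most
one on each side of `m` (`line_two`). The remaining equations are separable, and then only a constant
solution can be isolated and nonzero (`sep_two`).
-/

open Set intervalIntegral

noncomputable section

namespace AbelTrig
open Real

/-! ### Periodic solutions -/

/-- A global `2π`-periodic solution of `x' = A x³ + B x²`. A closed solution on `[0, 2π]` of an
equation with periodic coefficients extends to one of these (`exists_PSol`). -/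
def PSol (A B x : ℝ → ℝ) : Prop :=
  (∀ t, HasDerivAt x (A t * x t ^ 3 + B t * x t ^ 2) t) ∧ ∀ t, x (t + 2 * π) = x t

theorem lin_ode {k e : ℝ → ℝ} (hk : Continuous k) (he : ∀ t, HasDerivAt e (k t * e t) t) (t : ℝ) :
    e t = e 0 * exp (∫ s in (0 : ℝ)..t, k s) := by
  have hI : ∀ t, HasDerivAt (fun t => ∫ s in (0 : ℝ)..t, k s) (k t) t := fun t =>
    hk.integral_hasStrictDerivAt 0 t |>.hasDerivAt
  have hF : ∀ t, HasDerivAt (fun t => e t * exp (-∫ s in (0 : ℝ)..t, k s)) 0 t := fun t => by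
    have := (he t).mul (hI t).neg.exp
    refine this.congr_deriv ?_
    ring
  have := is_const_of_deriv_eq_zero (fun t => (hF t).differentiableAt) (fun t => (hF t).deriv) t 0
  simp only [integral_same, neg_zero, exp_zero, mul_one] at this
  rw [← this, mul_assoc, ← exp_add]
  simp

theorem PSol.cont {A B x : ℝ → ℝ} (h : PSol A B x) : Continuous x :=
  continuous_iff_continuousAt.2 fun t => (h.1 t).continuousAt

/-- Nonzero solutions keep their sign: `x` solves the linear equation with coefficient
`A x² + B x`. -/
theorem PSol.sign {A B x : ℝ → ℝ} (hA : Continuous A) (hB : Continuous B) (h : PSol A B x) (t : ℝ) :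
    ∃ c > 0, x t = x 0 * c := by
  have hx := h.cont
  refine ⟨_, exp_pos _, lin_ode (k := fun t => A t * x t ^ 2 + B t * x t) (by fun_prop)
    (fun t => (h.1 t).congr_deriv (by ring)) t⟩

/-- Distinct solutions keep their order: the difference solves a linear equation. -/
theorem PSol.order {A B x y : ℝ → ℝ} (hA : Continuous A) (hB : Continuous B) (h : PSol A B x)
    (h' : PSol A B y) (t : ℝ) : ∃ c > 0, x t - y t = (x 0 - y 0) * c := by
  have hx := h.cont
  have hy := h'.cont
  refine ⟨_, exp_pos _, lin_ode (e := fun t => x t - y t)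
    (k := fun t => A t * (x t ^ 2 + x t * y t + y t ^ 2) + B t * (x t + y t)) (by fun_prop)
    (fun t => ((h.1 t).sub (h'.1 t)).congr_deriv (by ring)) t⟩

theorem PSol.pos {A B x : ℝ → ℝ} (hA : Continuous A) (hB : Continuous B) (h : PSol A B x)
    (h0 : 0 < x 0) (t : ℝ) : 0 < x t := by
  obtain ⟨c, hc, e⟩ := h.sign hA hB t
  rw [e]; positivity

theorem PSol.neg {A B x : ℝ → ℝ} (hA : Continuous A) (hB : Continuous B) (h : PSol A B x)
    (h0 : x 0 < 0) (t : ℝ) : x t < 0 := by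
  obtain ⟨c, hc, e⟩ := h.sign hA hB t
  rw [e]; nlinarith

theorem PSol.ne {A B x : ℝ → ℝ} (hA : Continuous A) (hB : Continuous B) (h : PSol A B x)
    (h0 : x 0 ≠ 0) (t : ℝ) : x t ≠ 0 := by
  obtain ⟨c, hc, e⟩ := h.sign hA hB t
  rw [e]; positivity

theorem PSol.lt {A B x y : ℝ → ℝ} (hA : Continuous A) (hB : Continuous B) (h : PSol A B x)
    (h' : PSol A B y) (h0 : x 0 < y 0) (t : ℝ) : x t < y t := by
  obtain ⟨c, hc, e⟩ := h.order hA hB h' t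
  nlinarith

theorem PSol.ne_of_ne {A B x y : ℝ → ℝ} (hA : Continuous A) (hB : Continuous B) (h : PSol A B x)
    (h' : PSol A B y) (h0 : x 0 ≠ y 0) (t : ℝ) : x t ≠ y t := by
  obtain ⟨c, hc, e⟩ := h.order hA hB h' t
  have : (x 0 - y 0) * c ≠ 0 := mul_ne_zero (sub_ne_zero.2 h0) hc.ne'
  rw [← e] at this
  exact sub_ne_zero.1 this

theorem PSol.shift {A B x : ℝ → ℝ} (h : PSol A B x) (s : ℝ) :
    PSol (fun t => A (t + s)) (fun t => B (t + s)) (fun t => x (t + s)) := by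
  refine ⟨fun t => ?_, fun t => ?_⟩
  · exact (h.1 (t + s)).comp_add_const t s
  · show x (t + 2 * π + s) = x (t + s)
    rw [← h.2 (t + s)]; ring_nf

theorem PSol.negx {A B x : ℝ → ℝ} (h : PSol A B x) :
    PSol A (fun t => - B t) (fun t => - x t) := by
  refine ⟨fun t => ?_, fun t => by simp [h.2 t]⟩
  exact (h.1 t).neg.congr_deriv (by ring)

/-- The symmetry `(t, x) ↦ (-t, -x)`. -/
theorem PSol.refl {A B x : ℝ → ℝ} (h : PSol A B x) :
    PSol (fun t => - A (-t)) (fun t => B (-t)) (fun t => - x (-t)) := by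
  refine ⟨fun t => ?_, fun t => ?_⟩
  · have := ((h.1 (-t)).comp t (hasDerivAt_neg t)).neg
    exact this.congr_deriv (by ring)
  · have := h.2 (-(t + 2 * π))
    rw [show -(t + 2 * π) + 2 * π = -t by ring] at this
    simp [this]

/-- A closed solution extends periodically to `ℝ`; the one-sided derivatives match at multiples
of `2π`. -/
theorem exists_PSol {A B x : ℝ → ℝ} (hA : ∀ t, A (t + 2 * π) = A t) (hB : ∀ t, B (t + 2 * π) = B t)
    (h : ClosedSol A B (2 * π) x) : ∃ X, PSol A B X ∧ ∀ t ∈ Icc 0 (2 * π), X t = x t := by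
  have hp := two_pi_pos
  have hfl : ∀ t, toIcoMod hp 0 (t + 2 * π) = toIcoMod hp 0 t := fun t => toIcoMod_add_right hp 0 t
  set X : ℝ → ℝ := fun t => x (toIcoMod hp 0 t) with hX
  have hper : ∀ t, X (t + 2 * π) = X t := fun t => by simp only [hX, hfl]
  have hXeq : ∀ t ∈ Icc 0 (2 * π), X t = x t := by
    intro t ht
    rcases ht.2.lt_or_eq with h2 | h2
    · simp only [hX]
      rw [(toIcoMod_eq_self hp).2 ⟨ht.1, by simpa using h2⟩]
    · have : X (0 + 2 * π) = x 0 := by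
        rw [hper]; simp only [hX]
        rw [(toIcoMod_eq_self hp).2 ⟨le_refl _, by simpa using hp⟩]
      rw [h2, ← h.2, ← this, zero_add]
  -- the derivative on one period
  have key : ∀ t ∈ Ico 0 (2 * π), HasDerivAt X (A t * X t ^ 3 + B t * X t ^ 2) t := by
    intro t ht
    rw [hXeq t ⟨ht.1, ht.2.le⟩]
    rcases ht.1.lt_or_eq with h0 | h0
    · have := (h.1 t ⟨ht.1, ht.2.le⟩).hasDerivAt (Icc_mem_nhds h0 ht.2)
      refine this.congr_of_eventuallyEq ?_
      filter_upwards [Icc_mem_nhds h0 ht.2] with s hs using hXeq s hs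
    · subst h0
      have hr : HasDerivWithinAt X (A 0 * x 0 ^ 3 + B 0 * x 0 ^ 2) (Ici 0) 0 := by
        have := (h.1 0 ⟨le_refl _, hp.le⟩).congr_of_mem hXeq ⟨le_refl _, hp.le⟩
        exact this.mono_of_mem_nhdsWithin (Icc_mem_nhdsGE hp)
      have hl : HasDerivWithinAt X (A 0 * x 0 ^ 3 + B 0 * x 0 ^ 2) (Iic 0) 0 := by
        have h1 := (h.1 (2 * π) ⟨hp.le, le_refl _⟩).congr_of_mem hXeq ⟨hp.le, le_refl _⟩
        have h2 : HasDerivWithinAt X _ (Iic (2 * π)) (2 * π) :=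
          h1.mono_of_mem_nhdsWithin (Icc_mem_nhdsLE hp)
        have h3 := HasDerivWithinAt.comp_of_eq (0 : ℝ) h2
          ((hasDerivWithinAt_id (0 : ℝ) (Iic 0)).add_const (2 * π))
          (fun s hs => by simpa using hs) (by simp)
        rw [← h.2] at h3
        have e1 := hA 0
        have e2 := hB 0
        rw [zero_add] at e1 e2
        rw [e1, e2] at h3
        rw [mul_one] at h3
        exact h3.congr_of_mem (fun s _ => (hper s).symm) (by simp)
      have := hl.union hr
      rwa [Iic_union_Ici, hasDerivWithinAt_univ] at this
  refine ⟨X, ⟨fun t => ?_, hper⟩, hXeq⟩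
  set n := toIcoDiv hp 0 t
  have hm : toIcoMod hp 0 t ∈ Ico 0 (2 * π) := by simpa using toIcoMod_mem_Ico hp 0 t
  have ht : t + (-n : ℤ) * (2 * π) = toIcoMod hp 0 t := by
    rw [toIcoMod]; simp only [zsmul_eq_mul]; push_cast; ring
  have hpz : ∀ (f : ℝ → ℝ), (∀ t, f (t + 2 * π) = f t) → ∀ s, f (s + (-n : ℤ) * (2 * π)) = f s :=
    fun f hf s => (Function.Periodic.int_mul (f := f) hf (-n)) s
  have := key _ hm
  rw [← ht, hpz A hA, hpz B hB, hpz X hper] at this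
  have h2 := this.comp_add_const t ((-n : ℤ) * (2 * π))
  simpa only [hpz X hper] using h2

theorem PSol.closed {A B x : ℝ → ℝ} (h : PSol A B x) : ClosedSol A B (2 * π) x :=
  ⟨fun t _ => (h.1 t).hasDerivWithinAt, by simpa using (h.2 0).symm⟩

/-! ### Negative solutions and multiple positive solutions in the normal form -/

/-- If `b₀ ≤ 0 ≤ a₀` there is no negative periodic solution. With `k(t) = r sin t · X(t) X(-t)` and
`J = exp ∫ k`, the function `Φ = (1/X(-t) - 1/X(t)) J - 2 b J sin t` is strictly decreasing on
`[-π, 0]`, yet vanishes at both ends. -/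
theorem no_neg {a₀ b₀ r b b' : ℝ} (hr : 0 < r) (hb : 0 < b) (ha : 0 ≤ a₀) (hb₀ : b₀ ≤ 0)
    {X : ℝ → ℝ}
    (h : PSol (fun t => a₀ - r * sin t) (fun t => b₀ + b * cos t + b' * sin t) X)
    (h0 : X 0 < 0) : False := by
  have hX := h.cont
  have hneg : ∀ t, X t < 0 := h.neg (by fun_prop) (by fun_prop) h0
  have hXi : ∀ t, HasDerivAt (fun t => -(X t)⁻¹)
      ((a₀ - r * sin t) * X t + (b₀ + b * cos t + b' * sin t)) t := fun t => by
    have := ((h.1 t).inv (hneg t).ne).neg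
    refine this.congr_deriv ?_
    have := (hneg t).ne
    field_simp
  have hXi' : ∀ t, HasDerivAt (fun t => -(X (-t))⁻¹)
      (-((a₀ + r * sin t) * X (-t) + (b₀ + b * cos t - b' * sin t))) t := fun t => by
    have := (hXi (-t)).comp t (hasDerivAt_neg t)
    refine this.congr_deriv ?_
    simp only [sin_neg, cos_neg]; ring
  have hk : Continuous fun s => r * sin s * (X s * X (-s)) := by fun_prop
  set J : ℝ → ℝ := fun t => exp (∫ s in (0 : ℝ)..t, r * sin s * (X s * X (-s))) with hJ
  have hJ' : ∀ t, HasDerivAt J (J t * (r * sin t * (X t * X (-t)))) t := fun t =>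
    (hk.integral_hasStrictDerivAt 0 t).hasDerivAt.exp
  set Φ : ℝ → ℝ := fun t => (-(X t)⁻¹ - -(X (-t))⁻¹) * J t - 2 * b * (J t * sin t) with hΦ
  have hΦ' : ∀ t, HasDerivAt Φ
      (J t * (2 * b₀ + a₀ * (X t + X (-t)) - 2 * b * r * sin t ^ 2 * (X t * X (-t)))) t := by
    intro t
    have := (((hXi t).sub (hXi' t)).mul (hJ' t)).sub (((hJ' t).mul (hasDerivAt_sin t)).const_mul (2 * b))
    refine this.congr_deriv ?_
    have h1 := (hneg t).ne
    have h2 := (hneg (-t)).ne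
    simp only [Pi.sub_apply]
    field_simp
    ring
  have hanti : StrictAntiOn Φ (Icc (-π) 0) := by
    refine strictAntiOn_of_deriv_neg (convex_Icc _ _)
      (continuous_iff_continuousAt.2 fun t => (hΦ' t).continuousAt).continuousOn fun t ht => ?_
    rw [interior_Icc] at ht
    rw [(hΦ' t).deriv]
    have hs : sin t < 0 := sin_neg_of_neg_of_neg_pi_lt ht.2 ht.1
    have h1 := hneg t
    have h2 := hneg (-t)
    have h3 : 0 < X t * X (-t) := mul_pos_of_neg_of_neg h1 h2
    have h4 : 0 < 2 * b * r * sin t ^ 2 * (X t * X (-t)) := by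
      have : 0 < sin t ^ 2 := by nlinarith
      positivity
    have h5 : a₀ * (X t + X (-t)) ≤ 0 := mul_nonpos_of_nonneg_of_nonpos ha (by linarith)
    exact mul_neg_of_pos_of_neg (exp_pos _) (by linarith)
  have := hanti (left_mem_Icc.2 (by linarith [pi_pos])) (right_mem_Icc.2 (by linarith [pi_pos]))
    (by linarith [pi_pos])
  have hp : X π = X (-π) := by
    have := h.2 (-π)
    rw [← this]; ring_nf
  simp [hΦ, hp] at this

/-- A linear trigonometric polynomial with two zeros in one period factors through half-angle sines. -/
theorem trig_factor {c₀ c₁ c₂ ξ₁ ξ₂ : ℝ} (h1 : c₀ + c₁ * cos ξ₁ + c₂ * sin ξ₁ = 0)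
    (h2 : c₀ + c₁ * cos ξ₂ + c₂ * sin ξ₂ = 0) (h : ξ₁ < ξ₂) (h' : ξ₂ < ξ₁ + 2 * π) :
    ∃ κ, ∀ t, c₀ + c₁ * cos t + c₂ * sin t = -κ * (sin ((t - ξ₁) / 2) * sin ((t - ξ₂) / 2)) := by
  obtain ⟨σ, d, rfl, rfl⟩ : ∃ σ d, ξ₁ = σ - d ∧ ξ₂ = σ + d :=
    ⟨(ξ₁ + ξ₂) / 2, (ξ₂ - ξ₁) / 2, by ring, by ring⟩
  have hd : 0 < sin d := sin_pos_of_pos_of_lt_pi (by linarith) (by linarith)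
  have e2 : -c₁ * sin σ + c₂ * cos σ = 0 := by
    rw [cos_sub, sin_sub] at h1
    rw [cos_add, sin_add] at h2
    have : 2 * sin d * (-c₁ * sin σ + c₂ * cos σ) = 0 := by linear_combination h2 - h1
    rcases mul_eq_zero.1 this with h | h
    · linarith
    · exact h
  have e1 : c₀ = -(c₁ * cos σ + c₂ * sin σ) * cos d := by
    rw [cos_sub, sin_sub] at h1
    rw [cos_add, sin_add] at h2
    linear_combination (h1 + h2) / 2
  refine ⟨2 * (c₁ * cos σ + c₂ * sin σ), fun t => ?_⟩
  have e3 : sin ((t - (σ - d)) / 2) * sin ((t - (σ + d)) / 2) =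
      (cos d - cos (t - σ)) / 2 := by
    have := cos_sub_cos d (t - σ)
    rw [this, show (t - (σ + d)) / 2 = - ((d - (t - σ)) / 2) by ring, sin_neg,
      show (t - (σ - d)) / 2 = (d + (t - σ)) / 2 by ring]
    ring
  rw [e3, e1, cos_sub]
  have hs := sin_sq_add_cos_sq σ
  linear_combination (sin t * cos σ - cos t * sin σ) * e2 - (c₁ * cos t + c₂ * sin t) * hs

theorem sin_half_neg {x : ℝ} (h1 : x < 0) (h2 : -(2 * π) < x) : sin (x / 2) < 0 :=
  sin_neg_of_neg_of_neg_pi_lt (by linarith) (by linarith)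
theorem sin_half_pos {x : ℝ} (h1 : 0 < x) (h2 : x < 2 * π) : 0 < sin (x / 2) :=
  sin_pos_of_pos_of_lt_pi (by linarith) (by linarith)

set_option maxHeartbeats 2000000 in
/-- If a positive periodic solution is multiple, that is `∫ A X² = 0`, then the quantity
`∫ A X³ exp(∫ A X²)` governing the second derivative of the return map is negative.

With `g = ∫ A X²`, `p = exp (-g)` and `q = X p`, the curve `(p, q)` is closed, and
`p' = -A X² p`, `q' = B X² p`. Let `N` be the vertical distance of the curve from the chord joining
the points where `p` is extremal (the zeros of `A`). Then `N'` is a positive function times a linear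
trigonometric polynomial; Rolle supplies all of its zeros, so `N` is negative where `A > 0` and
positive where `A < 0`. The integral differs from `∫ A X² N exp (2 g) < 0` by the integral of the
derivative of a periodic function. -/
theorem singular_neg {a₀ b₀ r b b' : ℝ} (hr : 0 < r) (hb : 0 < b) {X : ℝ → ℝ}
    (h : PSol (fun t => a₀ - r * sin t) (fun t => b₀ + b * cos t + b' * sin t) X)
    (h0 : 0 < X 0) (hs : ∫ t in (0 : ℝ)..(2 * π), (a₀ - r * sin t) * X t ^ 2 = 0) :
    ∫ t in (0 : ℝ)..(2 * π), (a₀ - r * sin t) * X t ^ 3 *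
      exp (∫ s in (0 : ℝ)..t, (a₀ - r * sin s) * X s ^ 2) < 0 := by
  have hX := h.cont
  have hpos : ∀ t, 0 < X t := h.pos (by fun_prop) (by fun_prop) h0
  have hpi := pi_pos
  have hk : Continuous fun s => (a₀ - r * sin s) * X s ^ 2 := by fun_prop
  -- `A` changes sign
  have ha1 : a₀ < r := by
    by_contra! hc
    refine (integral_pos (by linarith : (0:ℝ) < 2 * π) hk.continuousOn (fun t _ => ?_)
      ⟨3 * π / 2, ⟨by linarith, by linarith⟩, ?_⟩).ne' hs
    · have := sin_le_one t
      exact mul_nonneg (by nlinarith) (sq_nonneg _)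
    · have : sin (3 * π / 2) = -1 := by
        rw [show 3 * π / 2 = π / 2 + π by ring, sin_add_pi, sin_pi_div_two]
      have := hpos (3 * π / 2)
      rw [‹sin (3 * π / 2) = -1›]
      have : 0 < a₀ - r * -1 := by linarith
      positivity
  have ha2 : -r < a₀ := by
    by_contra! hc
    refine (integral_pos (by linarith : (0:ℝ) < 2 * π) hk.neg.continuousOn (fun t _ => ?_)
      ⟨π / 2, ⟨by linarith, by linarith⟩, ?_⟩).ne' (by simp [hs])
    · show 0 ≤ -((a₀ - r * sin t) * X t ^ 2)
      have := sin_le_one t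
      have := neg_one_le_sin t
      have : (a₀ - r * sin t) ≤ 0 := by nlinarith
      nlinarith [sq_nonneg (X t)]
    · show 0 < -((a₀ - r * sin (π / 2)) * X (π / 2) ^ 2)
      have := hpos (π / 2)
      rw [sin_pi_div_two]
      have h1 : a₀ - r * 1 < 0 := by linarith
      have h2 : 0 < X (π / 2) ^ 2 := by positivity
      nlinarith
  set α := arcsin (a₀ / r) with hα
  have hsα : sin α = a₀ / r := sin_arcsin (by rw [le_div_iff₀ hr]; linarith)
    (by rw [div_le_iff₀ hr]; linarith)
  have hα1 : -(π / 2) < α := neg_pi_div_two_lt_arcsin.2 (by rw [lt_div_iff₀ hr]; linarith)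
  have hα2 : α < π / 2 := arcsin_lt_pi_div_two.2 (by rw [div_lt_iff₀ hr]; linarith)
  have hcα : 0 < cos α := cos_pos_of_mem_Ioo ⟨hα1, hα2⟩
  have ha0 : a₀ = r * sin α := by rw [hsα]; field_simp
  have hAf : ∀ t, a₀ - r * sin t = 2 * r * (sin ((α - t) / 2) * cos ((α + t) / 2)) := fun t => by
    have := sin_sub_sin α t
    rw [ha0]; linear_combination r * this
  have hAp : ∀ t ∈ Ioo (-π - α) α, 0 < a₀ - r * sin t := fun t ht => by
    rw [hAf]
    have h1 := sin_half_pos (x := α - t) (by linarith [ht.2]) (by linarith [ht.1])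
    have h2 : 0 < cos ((α + t) / 2) := cos_pos_of_mem_Ioo ⟨by linarith [ht.1], by linarith [ht.2]⟩
    positivity
  have hAn : ∀ t ∈ Ioo α (π - α), a₀ - r * sin t < 0 := fun t ht => by
    rw [hAf]
    have h1 := sin_half_neg (x := α - t) (by linarith [ht.1]) (by linarith [ht.2])
    have h2 : 0 < cos ((α + t) / 2) := cos_pos_of_mem_Ioo ⟨by linarith [ht.1], by linarith [ht.2]⟩
    have := mul_neg_of_neg_of_pos h1 h2
    nlinarith
  have hA2 : a₀ - r * sin α = 0 := by rw [ha0]; ring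
  have hs1 : sin (-π - α) = sin α := by
    rw [show -π - α = -(α + π) by ring, sin_neg, sin_add_pi]; ring
  have hc1 : cos (-π - α) = -cos α := by
    rw [show -π - α = -(α + π) by ring, cos_neg, cos_add_pi]
  have hs3 : sin (π - α) = sin α := sin_pi_sub α
  -- the closed curve `(p, q)`
  set g : ℝ → ℝ := fun t => ∫ s in (0 : ℝ)..t, (a₀ - r * sin s) * X s ^ 2 with hg
  have hg' : ∀ t, HasDerivAt g ((a₀ - r * sin t) * X t ^ 2) t := fun t =>
    (hk.integral_hasStrictDerivAt 0 t).hasDerivAt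
  have hgc : Continuous g := continuous_iff_continuousAt.2 fun t => (hg' t).continuousAt
  have hkper : Function.Periodic (fun s => (a₀ - r * sin s) * X s ^ 2) (2 * π) := fun s => by
    simp [h.2 s]
  have hgper : ∀ t, g (t + 2 * π) = g t := fun t => by
    have h1 := hkper.intervalIntegral_add_eq t 0
    rw [zero_add, hs] at h1
    have := integral_add_adjacent_intervals (hk.intervalIntegrable 0 t)
      (hk.intervalIntegrable t (t + 2 * π)) (μ := MeasureTheory.volume)
    simp only [hg]
    rw [← this, h1, add_zero]
  set p : ℝ → ℝ := fun t => exp (-g t) with hp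
  set q : ℝ → ℝ := fun t => X t * p t with hq
  have hp' : ∀ t, HasDerivAt p (-(a₀ - r * sin t) * X t ^ 2 * p t) t := fun t =>
    (hg' t).neg.exp.congr_deriv (by simp only [hp, Pi.neg_apply]; ring)
  have hq' : ∀ t, HasDerivAt q ((b₀ + b * cos t + b' * sin t) * X t ^ 2 * p t) t := fun t =>
    ((h.1 t).mul (hp' t)).congr_deriv (by ring)
  have hpp : ∀ t, 0 < p t := fun t => exp_pos _
  have hpc : Continuous p := by fun_prop
  have e13 : -π - α + 2 * π = π - α := by ring
  have hp13 : p (π - α) = p (-π - α) := by rw [← e13]; simp only [hp, hgper]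
  have hq13 : q (π - α) = q (-π - α) := by
    simp only [hq, hp13]; rw [← e13, h.2]
  have hp12 : p α < p (-π - α) := by
    have : StrictAntiOn p (Icc (-π - α) α) := by
      refine strictAntiOn_of_deriv_neg (convex_Icc _ _) hpc.continuousOn fun t ht => ?_
      rw [interior_Icc] at ht
      rw [(hp' t).deriv]
      have h1 := hAp t ht
      have h2 := hpp t
      have h3 := hpos t
      have : 0 < (a₀ - r * sin t) * X t ^ 2 * p t := by positivity
      linarith
    exact this (left_mem_Icc.2 (by linarith)) (right_mem_Icc.2 (by linarith)) (by linarith)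
  -- chord through the two extreme points
  set m := (q (-π - α) - q α) / (p (-π - α) - p α) with hm
  have hmd : m * (p (-π - α) - p α) = q (-π - α) - q α :=
    div_mul_cancel₀ _ (by linarith)
  set N : ℝ → ℝ := fun t => q t - q α - m * (p t - p α) with hN
  have hN' : ∀ t, HasDerivAt N (X t ^ 2 * p t *
      ((b₀ + m * a₀) + b * cos t + (b' - m * r) * sin t)) t := fun t =>
    (((hq' t).sub_const _).sub (((hp' t).sub_const _).const_mul m)).congr_deriv (by ring)
  have hNc : Continuous N := continuous_iff_continuousAt.2 fun t => (hN' t).continuousAt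
  have hN1 : N (-π - α) = 0 := by simp only [hN]; linarith
  have hN2 : N α = 0 := by simp [hN]
  have hN3 : N (π - α) = 0 := by simp only [hN, hp13, hq13]; linarith
  obtain ⟨ξ₁, hξ₁, hz1⟩ := exists_hasDerivAt_eq_zero (by linarith : -π - α < α) hNc.continuousOn
    (hN1.trans hN2.symm) (fun t _ => hN' t)
  obtain ⟨ξ₂, hξ₂, hz2⟩ := exists_hasDerivAt_eq_zero (by linarith : α < π - α) hNc.continuousOn
    (hN2.trans hN3.symm) (fun t _ => hN' t)
  have hw : ∀ t, 0 < X t ^ 2 * p t := fun t => by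
    have h2 := hpp t
    have h3 := hpos t
    positivity
  replace hz1 := (mul_eq_zero.1 hz1).resolve_left (hw _).ne'
  replace hz2 := (mul_eq_zero.1 hz2).resolve_left (hw _).ne'
  obtain ⟨κ, hC⟩ := trig_factor hz1 hz2 (by linarith [hξ₁.2, hξ₂.1]) (by linarith [hξ₁.1, hξ₂.2])
  have hκ : 0 < κ := by
    have h2 := hC α
    have h1 := hC (-π - α)
    rw [hs1, hc1] at h1
    have p1 := mul_pos_of_neg_of_neg
      (sin_half_neg (x := -π - α - ξ₁) (by linarith [hξ₁.1]) (by linarith [hξ₁.2]))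
      (sin_half_neg (x := -π - α - ξ₂) (by linarith [hξ₂.1]) (by linarith [hξ₂.2]))
    have p2 := mul_neg_of_pos_of_neg
      (sin_half_pos (x := α - ξ₁) (by linarith [hξ₁.2]) (by linarith [hξ₁.1]))
      (sin_half_neg (x := α - ξ₂) (by linarith [hξ₂.1]) (by linarith [hξ₂.2]))
    have p3 : 0 < b * cos α := by positivity
    by_contra! hc
    nlinarith
  have m1 : StrictAntiOn N (Icc (-π - α) ξ₁) := by
    refine strictAntiOn_of_deriv_neg (convex_Icc _ _) hNc.continuousOn fun t ht => ?_
    rw [interior_Icc] at ht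
    rw [(hN' t).deriv, hC]
    have := mul_pos_of_neg_of_neg
      (sin_half_neg (x := t - ξ₁) (by linarith [ht.2]) (by linarith [ht.1, hξ₁.2]))
      (sin_half_neg (x := t - ξ₂) (by linarith [ht.2, hξ₁.2, hξ₂.1]) (by linarith [ht.1, hξ₂.2]))
    exact mul_neg_of_pos_of_neg (hw t) (by nlinarith)
  have m2 : StrictMonoOn N (Icc ξ₁ ξ₂) := by
    refine strictMonoOn_of_deriv_pos (convex_Icc _ _) hNc.continuousOn fun t ht => ?_
    rw [interior_Icc] at ht
    rw [(hN' t).deriv, hC]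
    have := mul_neg_of_pos_of_neg
      (sin_half_pos (x := t - ξ₁) (by linarith [ht.1]) (by linarith [ht.2, hξ₁.1, hξ₂.2]))
      (sin_half_neg (x := t - ξ₂) (by linarith [ht.2]) (by linarith [ht.1, hξ₁.1, hξ₂.2]))
    exact mul_pos (hw t) (by nlinarith)
  have m3 : StrictAntiOn N (Icc ξ₂ (π - α)) := by
    refine strictAntiOn_of_deriv_neg (convex_Icc _ _) hNc.continuousOn fun t ht => ?_
    rw [interior_Icc] at ht
    rw [(hN' t).deriv, hC]
    have := mul_pos
      (sin_half_pos (x := t - ξ₁) (by linarith [ht.1, hξ₁.2, hξ₂.1]) (by linarith [ht.2, hξ₁.1]))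
      (sin_half_pos (x := t - ξ₂) (by linarith [ht.1]) (by linarith [ht.2, hξ₂.1]))
    exact mul_neg_of_pos_of_neg (hw t) (by nlinarith)
  have hNn : ∀ t ∈ Ioo (-π - α) α, N t < 0 := fun t ht => by
    rcases le_total t ξ₁ with h | h
    · rw [← hN1]
      exact m1 ⟨le_refl _, hξ₁.1.le⟩ ⟨ht.1.le, h⟩ ht.1
    · rw [← hN2]
      exact m2 ⟨h, (ht.2.trans hξ₂.1).le⟩ ⟨hξ₁.2.le, hξ₂.1.le⟩ ht.2
  have hNp : ∀ t ∈ Ioo α (π - α), 0 < N t := fun t ht => by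
    rcases le_total t ξ₂ with h | h
    · rw [← hN2]
      exact m2 ⟨hξ₁.2.le, hξ₂.1.le⟩ ⟨(hξ₁.2.trans ht.1).le, h⟩ ht.1
    · rw [← hN3]
      exact m3 ⟨h, ht.2.le⟩ ⟨hξ₂.2.le, le_refl _⟩ ht.2
  -- the part of the integrand that is the derivative of a periodic function
  set c := q α - m * p α with hc
  set Ψ : ℝ → ℝ := fun t => c * exp (2 * g t) / 2 + m * exp (g t) with hΨ
  have hΨ' : ∀ t, HasDerivAt Ψ ((a₀ - r * sin t) * X t ^ 2 * (c * exp (2 * g t) + m * exp (g t))) t :=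
    fun t => ((((hg' t).const_mul 2).exp.const_mul c).div_const 2 |>.add
      ((hg' t).exp.const_mul m)).congr_deriv (by ring)
  have hfper : Function.Periodic (fun t => (a₀ - r * sin t) * X t ^ 3 * exp (g t)) (2 * π) :=
    fun t => by simp [h.2 t, hgper t]
  have hI := hfper.intervalIntegral_add_eq (-π - α) 0
  rw [zero_add, e13] at hI
  rw [← hI]
  have hsplit : ∀ t, (a₀ - r * sin t) * X t ^ 3 * exp (g t) =
      (a₀ - r * sin t) * X t ^ 2 * N t * exp (2 * g t) +
      (a₀ - r * sin t) * X t ^ 2 * (c * exp (2 * g t) + m * exp (g t)) := fun t => by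
    have e1 : p t * exp (g t) = 1 := by simp only [hp]; rw [← exp_add]; simp
    have e2 : exp (2 * g t) = exp (g t) ^ 2 := by rw [← exp_nat_mul]; norm_num
    simp only [hN, hq, e2, hc]
    linear_combination ((a₀ - r * sin t) * X t ^ 2 * exp (g t) * (m - X t)) * e1
  have hc1' : Continuous fun t => (a₀ - r * sin t) * X t ^ 2 * N t * exp (2 * g t) := by fun_prop
  have hc2' : Continuous fun t =>
    (a₀ - r * sin t) * X t ^ 2 * (c * exp (2 * g t) + m * exp (g t)) := by fun_prop
  have hintg : ∫ t in (-π - α)..(π - α), (a₀ - r * sin t) * X t ^ 2 *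
      (c * exp (2 * g t) + m * exp (g t)) = 0 := by
    rw [integral_eq_sub_of_hasDerivAt (fun t _ => hΨ' t) (hc2'.intervalIntegrable _ _)]
    simp only [hΨ, ← e13, hgper, sub_self]
  simp_rw [hsplit]
  rw [integral_add (hc1'.intervalIntegrable _ _) (hc2'.intervalIntegrable _ _), hintg, add_zero]
  have hlt : ∀ t ∈ Ioo (-π - α) α, (a₀ - r * sin t) * X t ^ 2 * N t * exp (2 * g t) < 0 :=
    fun t ht => by
      have h1 := mul_pos (mul_pos (hAp t ht) (pow_pos (hpos t) 2)) (exp_pos (2 * g t))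
      have h2 := mul_neg_of_pos_of_neg h1 (hNn t ht)
      linarith
  have hlt2 : ∀ t ∈ Ioo α (π - α), (a₀ - r * sin t) * X t ^ 2 * N t * exp (2 * g t) < 0 :=
    fun t ht => by
      have h1 := mul_pos (mul_pos (hNp t ht) (pow_pos (hpos t) 2)) (exp_pos (2 * g t))
      have h2 := mul_neg_of_pos_of_neg h1 (hAn t ht)
      linarith
  have := integral_pos (by linarith : -π - α < π - α) hc1'.neg.continuousOn (fun t ht => by
      show 0 ≤ -((a₀ - r * sin t) * X t ^ 2 * N t * exp (2 * g t))
      rcases lt_trichotomy t α with h | h | h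
      · exact (neg_pos.2 (hlt t ⟨ht.1, h⟩)).le
      · rw [h, hA2]; simp
      · rcases ht.2.lt_or_eq with h3 | h3
        · exact (neg_pos.2 (hlt2 t ⟨h, h3⟩)).le
        · rw [h3, hs3, hA2]; simp)
    ⟨-π / 2, ⟨by linarith, by linarith⟩, by
      rcases lt_trichotomy (-π/2) α with h | h | h
      · exact neg_pos.2 (hlt _ ⟨by linarith, h⟩)
      · linarith
      · linarith⟩
  simp only [Pi.neg_apply, intervalIntegral.integral_neg] at this
  linarith

/-! ### The truncated equation -/

/-- Truncation of `x` to `[-R, R]`. -/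
def cl (R x : ℝ) : ℝ := max (-R) (min R x)

theorem cl_abs {R : ℝ} (hR : 0 < R) (x : ℝ) : |cl R x| ≤ R := by
  unfold cl
  rw [abs_le]
  exact ⟨le_max_left _ _, max_le (by linarith) (min_le_left _ _)⟩

theorem cl_lip (R x y : ℝ) : |cl R x - cl R y| ≤ |x - y| := by
  unfold cl
  have h1 := abs_max_sub_max_le_max (-R) (min R x) (-R) (min R y)
  have h2 := abs_min_sub_min_le_max R x R y
  simp only [sub_self, abs_zero, abs_nonneg, max_eq_right] at h1 h2
  exact h1.trans h2

theorem cl_eq {R x : ℝ} (h : |x| ≤ R) : cl R x = x := by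
  rw [abs_le] at h
  unfold cl
  rw [min_eq_right h.2, max_eq_right h.1]

theorem cl_pos {R x : ℝ} (hR : 0 < R) (h : 0 < x) : 0 < cl R x :=
  lt_max_of_lt_right (lt_min hR h)

/-- The Abel vector field, truncated outside `[-R, R]` so as to be globally Lipschitz. -/
def fld (A B : ℝ → ℝ) (R t x : ℝ) : ℝ := A t * cl R x ^ 3 + B t * cl R x ^ 2

theorem fld_lip {A B : ℝ → ℝ} {M R t : ℝ} (hR : 0 < R) (hA : |A t| ≤ M) (hB : |B t| ≤ M)
    (x y : ℝ) : |fld A B R t x - fld A B R t y| ≤ M * (3 * R ^ 2 + 2 * R) * |x - y| := by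
  have hx := cl_abs hR x
  have hy := cl_abs hR y
  have h := cl_lip R x y
  set u := cl R x with hu
  set v := cl R y with hv
  have e : fld A B R t x - fld A B R t y =
      (A t * (u ^ 2 + u * v + v ^ 2) + B t * (u + v)) * (u - v) := by
    simp only [fld, ← hu, ← hv]; ring
  have hM : 0 ≤ M := (abs_nonneg _).trans hA
  have e1 : |u ^ 2 + u * v + v ^ 2| ≤ 3 * R ^ 2 := by
    rw [abs_le] at *
    constructor <;> nlinarith
  have e2 : |u + v| ≤ 2 * R := (abs_add_le _ _).trans (by linarith)
  rw [e, abs_mul]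
  refine mul_le_mul ?_ h (abs_nonneg _) (by positivity)
  refine (abs_add_le _ _).trans ?_
  rw [abs_mul, abs_mul, mul_add]
  exact add_le_add (mul_le_mul hA e1 (abs_nonneg _) hM) (mul_le_mul hB e2 (abs_nonneg _) hM)

theorem fld_bound {A B : ℝ → ℝ} {M R t : ℝ} (hR : 0 < R) (hA : |A t| ≤ M) (hB : |B t| ≤ M)
    (x : ℝ) : |fld A B R t x| ≤ M * (R ^ 3 + R ^ 2) := by
  have hx := cl_abs hR x
  have hM : 0 ≤ M := (abs_nonneg _).trans hA
  refine (abs_add_le _ _).trans ?_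
  rw [abs_mul, abs_mul, mul_add, abs_pow, abs_pow]
  gcongr

/-- Solutions of the truncated equation on `[0, 2π]`; two-sided derivatives are required at the
endpoints as well. -/
def CSol (A B : ℝ → ℝ) (R : ℝ) (y : ℝ → ℝ) : Prop :=
  ∀ t ∈ Icc 0 (2 * π), HasDerivAt y (fld A B R t (y t)) t

theorem CSol.exists {A B : ℝ → ℝ} {M R : ℝ} (hA : Continuous A) (hB : Continuous B) (hR : 0 < R)
    (hAM : ∀ t, |A t| ≤ M) (hBM : ∀ t, |B t| ≤ M) (x₀ : ℝ) : ∃ y, CSol A B R y ∧ y 0 = x₀ := by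
  have hM : 0 ≤ M := (abs_nonneg _).trans (hAM 0)
  have hp := pi_pos
  have h0 : (0 : ℝ) ∈ Icc (-1) (2 * π + 1) := ⟨by linarith, by linarith⟩
  have hPL : IsPicardLindelof (fld A B R) (⟨0, h0⟩ : Icc (-1) (2 * π + 1)) x₀
      (⟨M * (R ^ 3 + R ^ 2) * (2 * π + 1), by positivity⟩) 0
      ⟨M * (R ^ 3 + R ^ 2), by positivity⟩ ⟨M * (3 * R ^ 2 + 2 * R), by positivity⟩ := by
    refine ⟨fun t _ => ?_, fun x _ => ?_, fun t _ x _ => fld_bound hR (hAM t) (hBM t) x, ?_⟩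
    · refine (LipschitzWith.of_dist_le_mul fun x y => ?_).lipschitzOnWith
      rw [Real.dist_eq, Real.dist_eq]
      exact fld_lip hR (hAM t) (hBM t) x y
    · unfold fld; fun_prop
    · simp only [NNReal.coe_zero, sub_zero, zero_sub, neg_neg]
      rw [max_eq_left (by linarith)]
      exact le_refl _
  obtain ⟨y, hy0, hy⟩ := hPL.exists_eq_forall_mem_Icc_hasDerivWithinAt₀
  exact ⟨y, fun t ht => (hy t ⟨by linarith [ht.1], by linarith [ht.2]⟩).hasDerivAt
    (Icc_mem_nhds (by linarith [ht.1]) (by linarith [ht.2])), hy0⟩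

theorem CSol.contOn {A B : ℝ → ℝ} {R : ℝ} {y : ℝ → ℝ} (h : CSol A B R y) :
    ContinuousOn y (Icc 0 (2 * π)) := fun t ht => (h t ht).continuousAt.continuousWithinAt

/-- Lipschitz dependence of the truncated solutions on initial value and on `B`. -/
theorem CSol.dist_le {A : ℝ → ℝ} {M R : ℝ} (hR : 0 < R) (hM : 0 < M) (hAM : ∀ t, |A t| ≤ M) :
    ∃ C > 0, ∀ (B B' y z : ℝ → ℝ) (η : ℝ), 0 ≤ η → (∀ t, |B t| ≤ M) → (∀ t, |B' t - B t| ≤ η) →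
      CSol A B R y → CSol A B' R z → ∀ t ∈ Icc 0 (2 * π), |z t - y t| ≤ C * (|z 0 - y 0| + η) := by
  set K := M * (3 * R ^ 2 + 2 * R) with hK
  have hKp : 0 < K := by positivity
  have hp := pi_pos
  refine ⟨exp (K * (2 * π)) * (1 + R ^ 2 / K), by positivity, ?_⟩
  intro B B' y z η hη hBM hBB hy hz t ht
  have := dist_le_of_approx_trajectories_ODE (v := fld A B R) (K := ⟨K, hKp.le⟩) (f := z) (g := y)
    (f' := fun t => fld A B' R t (z t)) (g' := fun t => fld A B R t (y t)) (a := 0) (b := 2 * π)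
    (εf := η * R ^ 2) (εg := 0) (δ := |z 0 - y 0|)
    (fun t => LipschitzWith.of_dist_le_mul fun x y => by
      rw [Real.dist_eq, Real.dist_eq]
      exact fld_lip hR (hAM t) (hBM t) x y)
    hz.contOn (fun t ht => (hz t ⟨ht.1, ht.2.le⟩).hasDerivWithinAt)
    (fun t ht => by
      rw [Real.dist_eq, show fld A B' R t (z t) - fld A B R t (z t) =
        (B' t - B t) * cl R (z t) ^ 2 by unfold fld; ring, abs_mul, abs_pow]
      have := cl_abs hR (z t)
      have := hBB t
      gcongr)
    hy.contOn (fun t ht => (hy t ⟨ht.1, ht.2.le⟩).hasDerivWithinAt)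
    (fun t ht => by simp) (by rw [Real.dist_eq]) t ht
  rw [Real.dist_eq, sub_zero, add_zero] at this
  refine this.trans ?_
  have hmono := gronwallBound_mono (K := K) (abs_nonneg (z 0 - y 0)) (by positivity : 0 ≤ η * R ^ 2)
    hKp.le ht.2
  refine hmono.trans ?_
  rw [gronwallBound_of_K_ne_0 hKp.ne']
  have h1 : 0 ≤ |z 0 - y 0| := abs_nonneg _
  have h2 : 0 ≤ R ^ 2 / K := by positivity
  have h3 := exp_pos (K * (2 * π))
  have h4 : η * R ^ 2 / K = η * (R ^ 2 / K) := by ring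
  simp only [h4]
  have h5 : 0 ≤ η * (R ^ 2 / K) := by positivity
  have h6 : 0 ≤ exp (K * (2 * π)) * (|z 0 - y 0| * (R ^ 2 / K)) := by positivity
  have h7 : 0 ≤ exp (K * (2 * π)) * η := by positivity
  nlinarith

/-- Differential inequality `e' ≥ -L |e|` preserves nonnegativity. -/
theorem cmp_nonneg {e e' : ℝ → ℝ} {a b L : ℝ} (he : ∀ t ∈ Icc a b, HasDerivAt e (e' t) t)
    (hL : ∀ t ∈ Icc a b, -L * |e t| ≤ e' t) (h0 : 0 ≤ e a) : ∀ t ∈ Icc a b, 0 ≤ e t := by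
  intro t₁ ht₁
  by_contra! hneg
  have hc : ContinuousOn e (Icc a t₁) := fun t ht =>
    (he t ⟨ht.1, ht.2.trans ht₁.2⟩).continuousAt.continuousWithinAt
  obtain ⟨s, hs, hmax⟩ := (isCompact_Icc.of_isClosed_subset
    (hc.preimage_isClosed_of_isClosed isClosed_Icc isClosed_Ici)
    inter_subset_left : IsCompact (Icc a t₁ ∩ e ⁻¹' Ici 0)).exists_isGreatest
    ⟨a, ⟨le_refl _, ht₁.1⟩, h0⟩
  have hs0 : 0 ≤ e s := hs.2
  have hlt : ∀ t ∈ Ioc s t₁, e t < 0 := fun t ht => by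
    by_contra! h
    exact absurd (hmax ⟨⟨hs.1.1.trans ht.1.le, ht.2⟩, h⟩) (not_le.2 ht.1)
  have hmono : MonotoneOn (fun t => e t * exp (-(L * t))) (Icc s t₁) := by
    have hd : ∀ t ∈ Icc s t₁, HasDerivAt (fun t => e t * exp (-(L * t)))
        ((e' t - L * e t) * exp (-(L * t))) t := fun t ht =>
      ((he t ⟨hs.1.1.trans ht.1, ht.2.trans ht₁.2⟩).mul
        ((hasDerivAt_id t).const_mul L).neg.exp).congr_deriv (by simp only [Pi.neg_apply, id]; ring)
    refine monotoneOn_of_deriv_nonneg (convex_Icc _ _)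
      (fun t ht => (hd t ht).continuousAt.continuousWithinAt)
      (fun t ht => (hd t (interior_subset ht)).differentiableAt.differentiableWithinAt) fun t ht => ?_
    rw [(hd t (interior_subset ht)).deriv]
    rw [interior_Icc] at ht
    have h1 := hL t ⟨hs.1.1.trans ht.1.le, ht.2.le.trans ht₁.2⟩
    rw [abs_of_neg (hlt t ⟨ht.1, ht.2.le⟩)] at h1
    exact mul_nonneg (by linarith) (exp_pos _).le
  have := hmono ⟨le_refl _, hs.1.2⟩ ⟨hs.1.2, le_refl _⟩ hs.1.2
  simp only at this
  have h1 : 0 ≤ e s * exp (-(L * s)) := mul_nonneg hs0 (exp_pos _).le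
  have h2 : e t₁ * exp (-(L * t₁)) < 0 := mul_neg_of_neg_of_pos hneg (exp_pos _)
  linarith

theorem cmp_pos {e e' : ℝ → ℝ} {a b L : ℝ} (he : ∀ t ∈ Icc a b, HasDerivAt e (e' t) t)
    (hL : ∀ t ∈ Icc a b, -L * |e t| ≤ e' t) (h0 : 0 < e a) : ∀ t ∈ Icc a b, 0 < e t := by
  intro t ht
  have hn := cmp_nonneg he hL h0.le
  have hd : ∀ t ∈ Icc a b, HasDerivAt (fun t => e t * exp (L * t))
      ((e' t + L * e t) * exp (L * t)) t := fun t ht =>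
    ((he t ht).mul ((hasDerivAt_id t).const_mul L).exp).congr_deriv (by simp only [id]; ring)
  have hmono : MonotoneOn (fun t => e t * exp (L * t)) (Icc a b) := by
    refine monotoneOn_of_deriv_nonneg (convex_Icc _ _)
      (fun t ht => (hd t ht).continuousAt.continuousWithinAt)
      (fun t ht => (hd t (interior_subset ht)).differentiableAt.differentiableWithinAt) fun t ht => ?_
    rw [(hd t (interior_subset ht)).deriv]
    replace ht := interior_subset ht
    have h1 := hL t ht
    rw [abs_of_nonneg (hn t ht)] at h1
    exact mul_nonneg (by linarith) (exp_pos _).le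
  have := hmono ⟨le_refl _, ht.1.trans ht.2⟩ ht ht.1
  simp only at this
  have h1 : 0 < e a * exp (L * a) := mul_pos h0 (exp_pos _)
  exact (pos_iff_pos_of_mul_pos (h1.trans_le this)).2 (exp_pos _)

theorem cmp_strict {e e' : ℝ → ℝ} {a b L : ℝ} (hab : a < b)
    (he : ∀ t ∈ Icc a b, HasDerivAt e (e' t) t)
    (hL : ∀ t ∈ Icc a b, -L * |e t| < e' t) (h0 : 0 ≤ e a) : 0 < e b := by
  have hn := cmp_nonneg he (fun t ht => (hL t ht).le) h0
  have hd : ∀ t ∈ Icc a b, HasDerivAt (fun t => e t * exp (L * t))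
      ((e' t + L * e t) * exp (L * t)) t := fun t ht =>
    ((he t ht).mul ((hasDerivAt_id t).const_mul L).exp).congr_deriv (by simp only [id]; ring)
  have hmono : StrictMonoOn (fun t => e t * exp (L * t)) (Icc a b) := by
    refine strictMonoOn_of_deriv_pos (convex_Icc _ _)
      (fun t ht => (hd t ht).continuousAt.continuousWithinAt) fun t ht => ?_
    rw [(hd t (interior_subset ht)).deriv]
    replace ht := interior_subset ht
    have h1 := hL t ht
    rw [abs_of_nonneg (hn t ht)] at h1
    exact mul_pos (by linarith) (exp_pos _)
  have := hmono ⟨le_refl _, hab.le⟩ ⟨hab.le, le_refl _⟩ hab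
  simp only at this
  have h1 : 0 ≤ e a * exp (L * a) := mul_nonneg h0 (exp_pos _).le
  exact (pos_iff_pos_of_mul_pos (h1.trans_lt this)).2 (exp_pos _)

theorem fld_zero {A B : ℝ → ℝ} {R t : ℝ} (hR : 0 < R) : fld A B R t 0 = 0 := by
  simp [fld, cl_eq (R := R) (x := 0) (by simpa using hR.le)]

theorem CSol.pos {A B : ℝ → ℝ} {M R : ℝ} (hR : 0 < R) (hAM : ∀ t, |A t| ≤ M) (hBM : ∀ t, |B t| ≤ M)
    {y : ℝ → ℝ} (h : CSol A B R y) (h0 : 0 < y 0) : ∀ t ∈ Icc 0 (2 * π), 0 < y t := by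
  refine cmp_pos (L := M * (3 * R ^ 2 + 2 * R)) h (fun t ht => ?_) h0
  have := fld_lip hR (hAM t) (hBM t) (y t) 0
  rw [fld_zero hR, sub_zero, sub_zero] at this
  linarith [neg_le_of_abs_le this]

theorem CSol.lt {A B : ℝ → ℝ} {M R : ℝ} (hR : 0 < R) (hAM : ∀ t, |A t| ≤ M) (hBM : ∀ t, |B t| ≤ M)
    {y z : ℝ → ℝ} (h : CSol A B R y) (h' : CSol A B R z) (h0 : y 0 < z 0) :
    ∀ t ∈ Icc 0 (2 * π), y t < z t := by
  intro t ht
  refine sub_pos.1 (cmp_pos (L := M * (3 * R ^ 2 + 2 * R)) (e := fun t => z t - y t)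
    (fun t ht => (h' t ht).sub (h t ht)) (fun t ht => ?_) (sub_pos.2 h0) t ht)
  have := fld_lip hR (hAM t) (hBM t) (z t) (y t)
  linarith [neg_le_of_abs_le this]

/-- Raising `B` by a positive constant strictly raises positive solutions. -/
theorem CSol.raise {A B : ℝ → ℝ} {M R a δ : ℝ} (hR : 0 < R) (hAM : ∀ t, |A t| ≤ M)
    (hBM : ∀ t, |B t| ≤ M) (hδ : 0 < δ)
    {y z : ℝ → ℝ} (ha : 0 ≤ a) (ha' : a < 2 * π)
    (h : CSol A B R y) (h' : CSol A (fun t => B t + δ) R z)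
    (hz : ∀ t ∈ Icc 0 (2 * π), 0 < z t) (h0 : y a ≤ z a) : y (2 * π) < z (2 * π) := by
  refine sub_pos.1 (cmp_strict (L := M * (3 * R ^ 2 + 2 * R)) (e := fun t => z t - y t) ha'
    (fun t ht => (h' t ⟨ha.trans ht.1, ht.2⟩).sub (h t ⟨ha.trans ht.1, ht.2⟩))
    (fun t ht => ?_) (sub_nonneg.2 h0))
  have h1 := neg_le_of_abs_le (fld_lip hR (hAM t) (hBM t) (z t) (y t))
  have h2 : fld A (fun t => B t + δ) R t (z t) = fld A B R t (z t) + δ * cl R (z t) ^ 2 := by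
    unfold fld; ring
  have h3 := cl_pos hR (hz t ⟨ha.trans ht.1, ht.2⟩)
  have h4 : 0 < δ * cl R (z t) ^ 2 := by positivity
  linarith

theorem PSol.csol {A B x : ℝ → ℝ} {R : ℝ} (h : PSol A B x) (hR : ∀ t, |x t| ≤ R) : CSol A B R x :=
  fun t _ => (h.1 t).congr_deriv (by simp [fld, cl_eq (hR t)])

theorem CSol.psol {A B y : ℝ → ℝ} {R : ℝ} (hA : ∀ t, A (t + 2 * π) = A t)
    (hB : ∀ t, B (t + 2 * π) = B t) (h : CSol A B R y) (hc : y (2 * π) = y 0)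
    (hR : ∀ t ∈ Icc 0 (2 * π), |y t| ≤ R) :
    ∃ X, PSol A B X ∧ ∀ t ∈ Icc 0 (2 * π), X t = y t :=
  exists_PSol hA hB ⟨fun t ht => ((h t ht).congr_deriv
    (by simp [fld, cl_eq (hR t ht)])).hasDerivWithinAt, hc.symm⟩

/-! ### Merging of zeros in a monotone family -/

/-- Let `φ x β` be continuous and strictly increasing in `β`, with `φ · 0` nonnegative at the ends of
`[p, q]` and zero at an interior point. At the largest `β` for which `φ · β` has a zero, every
neighbourhood of a suitable zero `x` contains a zero `xc` at level `β` flanked by two zeros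
`xl < xc < xr` at a level `β' ≤ β` arbitrarily close to `β`. -/
theorem triple {φ : ℝ → ℝ → ℝ} {p q x₂ βm : ℝ} (hpx : p < x₂) (hxq : x₂ < q)
    (hc : ContinuousOn (fun z : ℝ × ℝ => φ z.1 z.2) (Icc p q ×ˢ Icc (-1) βm))
    (hmono : ∀ x ∈ Icc p q, StrictMonoOn (φ x) (Icc (-1) βm)) (hβm : 0 < βm)
    (hp : 0 ≤ φ p 0) (hq : 0 ≤ φ q 0) (h2 : φ x₂ 0 = 0) (hm : ∀ x ∈ Icc p q, 0 < φ x βm) :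
    ∃ x ∈ Ioo p q, ∃ β ∈ Ico 0 βm, φ x β = 0 ∧ ∀ ε > 0, ∃ xl xc xr β', xl < xc ∧ xc < xr ∧
      xl ∈ Icc p q ∧ xc ∈ Icc p q ∧ xr ∈ Icc p q ∧ |xl - x| < ε ∧ |xc - x| < ε ∧ |xr - x| < ε ∧
      -1 ≤ β' ∧ β' ≤ β ∧ β - β' < ε ∧ φ xl β' = 0 ∧ φ xr β' = 0 ∧ φ xc β = 0 := by
  have hcx : ∀ β ∈ Icc (-1) βm, ContinuousOn (fun x => φ x β) (Icc p q) := fun β hβ =>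
    hc.comp (f := fun x => (x, β)) (by fun_prop) fun x hx => ⟨hx, hβ⟩
  have hcβ : ∀ x ∈ Icc p q, ContinuousOn (fun β => φ x β) (Icc (-1) βm) := fun x hx =>
    hc.comp (f := fun β => (x, β)) (by fun_prop) fun β hβ => ⟨hx, hβ⟩
  have hpq : p < q := hpx.trans hxq
  have h0m : (0 : ℝ) ∈ Icc (-1) βm := ⟨by norm_num, hβm.le⟩
  -- the largest `β` for which `φ · β` has a zero, by compactness
  have hsub : Icc p q ×ˢ Icc 0 βm ⊆ Icc p q ×ˢ Icc (-1) βm :=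
    prod_mono_right (Icc_subset_Icc_left (by norm_num))
  have hK : IsCompact ((Icc p q ×ˢ Icc 0 βm) ∩ (fun z : ℝ × ℝ => φ z.1 z.2) ⁻¹' {0}) :=
    (isCompact_Icc.prod isCompact_Icc).of_isClosed_subset
      ((hc.mono hsub).preimage_isClosed_of_isClosed (isClosed_Icc.prod isClosed_Icc)
        isClosed_singleton) inter_subset_left
  obtain ⟨⟨x₁, β⟩, ⟨⟨hx₁, hβ⟩, hz₁⟩, hmax⟩ := hK.exists_isMaxOn (f := fun z => z.2)
    ⟨(x₂, 0), ⟨⟨⟨hpx.le, hxq.le⟩, ⟨le_refl _, hβm.le⟩⟩, h2⟩⟩ (by fun_prop)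
  simp only [mem_preimage, mem_singleton_iff] at hx₁ hβ hz₁
  have hmax' : ∀ x ∈ Icc p q, ∀ b ∈ Icc 0 βm, φ x b = 0 → b ≤ β := fun x hx b hb h =>
    hmax (show (x, b) ∈ (Icc p q ×ˢ Icc 0 βm) ∩ (fun z : ℝ × ℝ => φ z.1 z.2) ⁻¹' {0} from
      ⟨⟨hx, hb⟩, h⟩)
  have hβ1 : β ∈ Icc (-1) βm := ⟨by linarith [hβ.1], hβ.2⟩
  have hβlt : β < βm := hβ.2.lt_of_ne fun h => (hm x₁ hx₁).ne' (h ▸ hz₁)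
  have hnn : ∀ x ∈ Icc p q, 0 ≤ φ x β := by
    intro x hx
    by_contra! hneg
    obtain ⟨b, hb, hb0⟩ := intermediate_value_Ioo hβ.2
      ((hcβ x hx).mono (Icc_subset_Icc_left hβ1.1)) (show (0 : ℝ) ∈ Ioo _ _ from ⟨hneg, hm x hx⟩)
    exact absurd (hmax' x hx b ⟨hβ.1.trans hb.1.le, hb.2.le⟩ hb0) (not_le.2 hb.1)
  obtain ⟨x, hx, hz⟩ : ∃ x ∈ Ioo p q, φ x β = 0 := by
    rcases hβ.1.lt_or_eq with h | h
    · refine ⟨x₁, ⟨hx₁.1.lt_of_ne ?_, hx₁.2.lt_of_ne ?_⟩, hz₁⟩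
      · rintro rfl
        linarith [hmono p hx₁ h0m hβ1 h]
      · rintro rfl
        linarith [hmono x₁ hx₁ h0m hβ1 h]
    · exact ⟨x₂, ⟨hpx, hxq⟩, h ▸ h2⟩
  refine ⟨x, hx, β, ⟨hβ.1, hβlt⟩, hz, fun ε hε => ?_⟩
  obtain ⟨ρ, hρ, hρε, hρp, hρq⟩ : ∃ ρ > 0, ρ < ε ∧ p < x - ρ ∧ x + ρ < q := by
    obtain ⟨ρ, h1, h2⟩ := exists_between (show 0 < min ε (min (x - p) (q - x)) from
      lt_min hε (lt_min (by linarith [hx.1]) (by linarith [hx.2])))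
    exact ⟨ρ, h1, h2.trans_le (min_le_left _ _),
      by linarith [h2.trans_le ((min_le_right _ _).trans (min_le_left _ _))],
      by linarith [h2.trans_le ((min_le_right _ _).trans (min_le_right _ _))]⟩
  -- a plateau of zeros gives the triple at `β` itself
  have plateau : ∀ c d, p ≤ c → d ≤ q → x - ρ ≤ c → d ≤ x + ρ → c < d →
      (∀ y ∈ Ioo c d, φ y β = 0) → ∃ xl xc xr β', xl < xc ∧ xc < xr ∧
      xl ∈ Icc p q ∧ xc ∈ Icc p q ∧ xr ∈ Icc p q ∧ |xl - x| < ε ∧ |xc - x| < ε ∧ |xr - x| < ε ∧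
      -1 ≤ β' ∧ β' ≤ β ∧ β - β' < ε ∧ φ xl β' = 0 ∧ φ xr β' = 0 ∧ φ xc β = 0 := by
    intro c d h1 h2 h3 h4 h5 h6
    refine ⟨(3 * c + d) / 4, (c + d) / 2, (c + 3 * d) / 4, β, by linarith, by linarith,
      ⟨by linarith, by linarith⟩, ⟨by linarith, by linarith⟩, ⟨by linarith, by linarith⟩,
      abs_lt.2 ⟨by linarith, by linarith⟩, abs_lt.2 ⟨by linarith, by linarith⟩,
      abs_lt.2 ⟨by linarith, by linarith⟩, hβ1.1, le_refl _, by linarith,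
      h6 _ ⟨by linarith, by linarith⟩, h6 _ ⟨by linarith, by linarith⟩,
      h6 _ ⟨by linarith, by linarith⟩⟩
  by_cases hL : ∀ y ∈ Ioo (x - ρ) x, φ y β = 0
  · exact plateau _ _ hρp.le hx.2.le (le_refl _) (by linarith) (by linarith) hL
  by_cases hR : ∀ y ∈ Ioo x (x + ρ), φ y β = 0
  · exact plateau _ _ hx.1.le hρq.le (by linarith) (le_refl _) (by linarith) hR
  push Not at hL hR
  obtain ⟨y, hy, hy0⟩ := hL
  obtain ⟨w, hw, hw0⟩ := hR
  have hyI : y ∈ Icc p q := ⟨by linarith [hy.1], by linarith [hy.2, hx.2]⟩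
  have hwI : w ∈ Icc p q := ⟨by linarith [hw.1, hx.1], by linarith [hw.2]⟩
  have hyp := (hnn y hyI).lt_of_ne hy0.symm
  have hwp := (hnn w hwI).lt_of_ne hw0.symm
  have hnb : Icc (-1) βm ∈ nhds β := Icc_mem_nhds (by linarith [hβ.1]) hβlt
  have ev1 := ((hcβ y hyI).continuousAt hnb).eventually (lt_mem_nhds hyp)
  have ev2 := ((hcβ w hwI).continuousAt hnb).eventually (lt_mem_nhds hwp)
  have ev3 := (ev1.and (ev2.and hnb)).and (Ioo_mem_nhds (by linarith : β - ε < β) hβlt)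
  obtain ⟨b, ⟨hb1, hb2⟩, hb4⟩ : ∃ b, ((0 < φ y b ∧ 0 < φ w b ∧ b ∈ Icc (-1) βm) ∧
      b ∈ Ioo (β - ε) βm) ∧ b < β := by
    have := ((ev3.filter_mono nhdsWithin_le_nhds : ∀ᶠ b in nhdsWithin β (Iio β), _).and
      self_mem_nhdsWithin).exists
    obtain ⟨b, h, h'⟩ := this
    exact ⟨b, ⟨⟨h.1.1, h.1.2.1, h.1.2.2⟩, h.2⟩, h'⟩
  have hxI : x ∈ Icc p q := ⟨hx.1.le, hx.2.le⟩
  have hxb : φ x b < 0 := hz ▸ hmono x hxI hb1.2.2 hβ1 hb4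
  obtain ⟨xl, hxl, hl⟩ := intermediate_value_Ioo' hy.2.le
    ((hcx b hb1.2.2).mono (Icc_subset_Icc hyI.1 hxI.2)) (show (0 : ℝ) ∈ Ioo _ _ from ⟨hxb, hb1.1⟩)
  obtain ⟨xr, hxr, hr⟩ := intermediate_value_Ioo hw.1.le
    ((hcx b hb1.2.2).mono (Icc_subset_Icc hxI.1 hwI.2)) (show (0 : ℝ) ∈ Ioo _ _ from ⟨hxb, hb1.2.1⟩)
  simp only [mem_Ioo] at hxl hxr hy hw
  exact ⟨xl, x, xr, b, hxl.2, hxr.1, ⟨by linarith [hyI.1], by linarith⟩, hxI,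
    ⟨by linarith, by linarith [hwI.2]⟩, abs_lt.2 ⟨by linarith, by linarith⟩, by simpa using hε,
    abs_lt.2 ⟨by linarith, by linarith⟩, hb1.2.2.1, hb4.le, by linarith [hb2.1], hl, hr, hz⟩

/-! ### Integral conditions from three neighbouring solutions -/

/-- The reciprocal of a nonvanishing solution satisfies `(1/x)' = -(A x + B)`. -/
theorem PSol.inv_deriv {A B x : ℝ → ℝ} (h : PSol A B x) {t : ℝ} (ht : x t ≠ 0) :
    HasDerivAt (fun t => (x t)⁻¹) (-(A t * x t + B t)) t :=
  ((h.1 t).inv ht).congr_deriv (by field_simp)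

theorem PSol.period0 {A B x : ℝ → ℝ} (h : PSol A B x) : x (2 * π) = x 0 := by
  simpa using h.2 0

/-- Two periodic solutions `xl < xr` at level `B` with a periodic solution `xc` at level
`B + δ ≥ B` starting between them: a divided-difference form of `∫ A X² = 0` and
`∫ A X³ exp(∫ A X²) ≥ 0`. -/
theorem triple_int {A B xl xc xr : ℝ → ℝ} {δ : ℝ} (hA : Continuous A) (hB : Continuous B)
    (hδ : 0 ≤ δ) (hl : PSol A B xl) (hr : PSol A B xr) (hc : PSol A (fun t => B t + δ) xc)
    (h0 : 0 < xl 0) (h1 : xl 0 < xc 0) (h2 : xc 0 < xr 0) :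
    ∫ t in (0 : ℝ)..(2 * π), A t * (xl t * xr t) = 0 ∧
    0 ≤ ∫ t in (0 : ℝ)..(2 * π), A t * (xc t * (xl t * xr t)) *
      exp (∫ s in (0 : ℝ)..t, A s * (xl s * xr s)) := by
  have cl := hl.cont
  have cc := hc.cont
  have cr := hr.cont
  have hlp := hl.pos hA hB h0
  have hcp := hc.pos hA (by fun_prop) (h0.trans h1)
  have hrp := hr.pos hA hB (h0.trans (h1.trans h2))
  have hpi := pi_pos
  have J : ∀ k : ℝ → ℝ, Continuous k → ∀ t, HasDerivAt (fun t => exp (-∫ s in (0 : ℝ)..t, k s))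
      (-(k t) * exp (-∫ s in (0 : ℝ)..t, k s)) t := fun k hk t =>
    (hk.integral_hasStrictDerivAt 0 t).hasDerivAt.neg.exp.congr_deriv
      (by simp only [Pi.neg_apply]; ring)
  -- `i1` and `i2`: the reciprocal differences satisfy linear equations with a source of sign `δ`
  have i1 : ∫ t in (0 : ℝ)..(2 * π), A t * (xl t * xc t) ≤ 0 := by
    have hd : ∀ t, HasDerivAt (fun t => ((xl t)⁻¹ - (xc t)⁻¹) *
        exp (-∫ s in (0 : ℝ)..t, A s * (xl s * xc s)))
        (δ * exp (-∫ s in (0 : ℝ)..t, A s * (xl s * xc s))) t := fun t => by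
      have n1 := (hlp t).ne'
      have n2 := (hcp t).ne'
      refine (((hl.inv_deriv n1).sub (hc.inv_deriv n2)).mul (J _ (by fun_prop) t)).congr_deriv ?_
      simp only [Pi.sub_apply]
      field_simp
      ring
    have hm := monotone_of_hasDerivAt_nonneg hd fun t => mul_nonneg hδ (exp_pos _).le
    have := hm (by linarith : (0 : ℝ) ≤ 2 * π)
    simp only [hl.period0, hc.period0, integral_same, neg_zero, exp_zero, mul_one] at this
    have hE : 0 < (xl 0)⁻¹ - (xc 0)⁻¹ := sub_pos.2 (inv_strictAnti₀ h0 h1)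
    have h3 : 1 ≤ exp (-∫ s in (0 : ℝ)..(2 * π), A s * (xl s * xc s)) := by
      by_contra! hh
      nlinarith
    have := one_le_exp_iff.1 h3
    linarith
  have i2 : 0 ≤ ∫ t in (0 : ℝ)..(2 * π), A t * (xc t * xr t) := by
    have hd : ∀ t, HasDerivAt (fun t => ((xc t)⁻¹ - (xr t)⁻¹) *
        exp (-∫ s in (0 : ℝ)..t, A s * (xc s * xr s)))
        (-(δ * exp (-∫ s in (0 : ℝ)..t, A s * (xc s * xr s)))) t := fun t => by
      have n1 := (hcp t).ne'
      have n2 := (hrp t).ne'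
      refine (((hc.inv_deriv n1).sub (hr.inv_deriv n2)).mul (J _ (by fun_prop) t)).congr_deriv ?_
      simp only [Pi.sub_apply]
      field_simp
      ring
    have hm := antitone_of_hasDerivAt_nonpos hd fun t =>
      neg_nonpos.2 (mul_nonneg hδ (exp_pos _).le)
    have := hm (by linarith : (0 : ℝ) ≤ 2 * π)
    simp only [hr.period0, hc.period0, integral_same, neg_zero, exp_zero, mul_one] at this
    have hE : 0 < (xc 0)⁻¹ - (xr 0)⁻¹ := sub_pos.2 (inv_strictAnti₀ (h0.trans h1) h2)
    have h3 : exp (-∫ s in (0 : ℝ)..(2 * π), A s * (xc s * xr s)) ≤ 1 := by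
      by_contra! hh
      nlinarith
    have := exp_le_one_iff.1 h3
    linarith
  have hk : Continuous fun t => A t * (xl t * xr t) := by fun_prop
  have hD := lin_ode (e := fun t => (xl t)⁻¹ - (xr t)⁻¹) hk fun t => by
    have n1 := (hlp t).ne'
    have n2 := (hrp t).ne'
    refine ((hl.inv_deriv n1).sub (hr.inv_deriv n2)).congr_deriv ?_
    field_simp
    ring
  have hD0 : 0 < (xl 0)⁻¹ - (xr 0)⁻¹ := sub_pos.2 (inv_strictAnti₀ h0 (h1.trans h2))
  constructor
  · have := hD (2 * π)
    rw [hl.period0, hr.period0] at this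
    have h3 : exp (∫ t in (0 : ℝ)..(2 * π), A t * (xl t * xr t)) = 1 := by
      have : ((xl 0)⁻¹ - (xr 0)⁻¹) * (exp (∫ t in (0 : ℝ)..(2 * π), A t * (xl t * xr t)) - 1) = 0 := by
        linarith
      rcases mul_eq_zero.1 this with h | h <;> linarith
    exact (exp_eq_one_iff _).1 h3
  · have hI : ∫ t in (0 : ℝ)..(2 * π), (((xl 0)⁻¹ - (xr 0)⁻¹) * (A t * (xc t * (xl t * xr t)) *
        exp (∫ s in (0 : ℝ)..t, A s * (xl s * xr s)))) =
        (∫ t in (0 : ℝ)..(2 * π), A t * (xc t * xr t)) -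
          ∫ t in (0 : ℝ)..(2 * π), A t * (xl t * xc t) := by
      rw [← integral_sub (Continuous.intervalIntegrable (by fun_prop) _ _)
        (Continuous.intervalIntegrable (by fun_prop) _ _)]
      refine integral_congr fun t _ => ?_
      have n1 := (hlp t).ne'
      have n2 := (hrp t).ne'
      have e : xl t * xr t * ((xl t)⁻¹ - (xr t)⁻¹) = xr t - xl t := by field_simp
      rw [hD t] at e
      linear_combination (A t * xc t) * e
    rw [intervalIntegral.integral_const_mul] at hI
    by_contra! hh
    nlinarith

/-- The conclusion of `triple_int` passes to the limit when the three solutions merge into `X`. -/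
theorem limit_int {A X : ℝ → ℝ} {R : ℝ} (hA : Continuous A) (hXR : ∀ t ∈ Icc 0 (2 * π), |X t| ≤ R)
    (H : ∀ n : ℕ, ∃ l c r : ℝ → ℝ, (Continuous l ∧ Continuous c ∧ Continuous r) ∧
      (∀ t ∈ Icc 0 (2 * π), |l t - X t| ≤ 1 / ((n : ℝ) + 1) ∧ |c t - X t| ≤ 1 / ((n : ℝ) + 1) ∧
        |r t - X t| ≤ 1 / ((n : ℝ) + 1)) ∧
      ∫ t in (0 : ℝ)..(2 * π), A t * (l t * r t) = 0 ∧
      0 ≤ ∫ t in (0 : ℝ)..(2 * π), A t * (c t * (l t * r t)) *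
        exp (∫ s in (0 : ℝ)..t, A s * (l s * r s))) :
    ∫ t in (0 : ℝ)..(2 * π), A t * X t ^ 2 = 0 ∧
      0 ≤ ∫ t in (0 : ℝ)..(2 * π), A t * X t ^ 3 * exp (∫ s in (0 : ℝ)..t, A s * X s ^ 2) := by
  choose l c r hcont hclose h1 h2 using H
  have hpi := two_pi_pos
  obtain ⟨M, hM⟩ : ∃ M, ∀ t ∈ Icc 0 (2 * π), |A t| ≤ M :=
    isCompact_Icc.exists_bound_of_continuousOn hA.continuousOn
  have hM0 : 0 ≤ M := (abs_nonneg _).trans (hM 0 ⟨le_refl _, hpi.le⟩)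
  have hR0 : 0 ≤ R := (abs_nonneg _).trans (hXR 0 ⟨le_refl _, hpi.le⟩)
  have hn1 : ∀ n : ℕ, 1 / ((n : ℝ) + 1) ≤ 1 := fun n => by
    rw [div_le_one (by positivity)]
    linarith [(Nat.cast_nonneg n : (0 : ℝ) ≤ n)]
  have tend : ∀ f : ℕ → ℝ → ℝ, (∀ n, ∀ t ∈ Icc 0 (2 * π), |f n t - X t| ≤ 1 / ((n : ℝ) + 1)) →
      ∀ t ∈ Icc 0 (2 * π), Filter.Tendsto (fun n => f n t) Filter.atTop (nhds (X t)) := by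
    intro f hf t ht
    rw [tendsto_iff_dist_tendsto_zero]
    exact squeeze_zero (fun _ => dist_nonneg) (fun n => hf n t ht)
      tendsto_one_div_add_atTop_nhds_zero_nat
  have bd : ∀ f : ℕ → ℝ → ℝ, (∀ n, ∀ t ∈ Icc 0 (2 * π), |f n t - X t| ≤ 1 / ((n : ℝ) + 1)) →
      ∀ n, ∀ t ∈ Icc 0 (2 * π), |f n t| ≤ R + 1 := by
    intro f hf n t ht
    have h3 := (hf n t ht).trans (hn1 n)
    have h4 := hXR t ht
    have := abs_sub_abs_le_abs_sub (f n t) (X t)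
    linarith
  have cl := fun n t ht => (hclose n t ht).1
  have cc := fun n t ht => (hclose n t ht).2.1
  have cr := fun n t ht => (hclose n t ht).2.2
  have tl := tend l cl
  have tc := tend c cc
  have tr := tend r cr
  have bl := bd l cl
  have bc := bd c cc
  have br := bd r cr
  have hbk : ∀ n, ∀ t ∈ Icc 0 (2 * π), |A t * (l n t * r n t)| ≤ M * ((R + 1) * (R + 1)) := by
    intro n t ht
    rw [abs_mul, abs_mul]
    have := hM t ht
    have := bl n t ht
    have := br n t ht
    gcongr
  have hsub : ∀ t ∈ Icc 0 (2 * π), ∀ s ∈ uIoc 0 t, s ∈ Icc 0 (2 * π) := by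
    intro t ht s hs
    rw [uIoc_of_le ht.1] at hs
    exact ⟨hs.1.le, hs.2.trans ht.2⟩
  have inner : ∀ t ∈ Icc 0 (2 * π), Filter.Tendsto
      (fun n => ∫ s in (0 : ℝ)..t, A s * (l n s * r n s)) Filter.atTop
      (nhds (∫ s in (0 : ℝ)..t, A s * X s ^ 2)) := by
    intro t ht
    refine intervalIntegral.tendsto_integral_filter_of_dominated_convergence
      (fun _ => M * ((R + 1) * (R + 1))) (Filter.Eventually.of_forall fun n => ?_)
      (Filter.Eventually.of_forall fun n => Filter.Eventually.of_forall fun s hs =>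
        hbk n s (hsub t ht s hs)) (by simp)
      (Filter.Eventually.of_forall fun s hs => ?_)
    · obtain ⟨c1, c2, c3⟩ := hcont n
      exact Continuous.aestronglyMeasurable (by fun_prop)
    · have hs' := hsub t ht s hs
      rw [sq]
      exact ((tl s hs').mul (tr s hs')).const_mul _
  constructor
  · refine tendsto_nhds_unique (inner (2 * π) ⟨hpi.le, le_refl _⟩) ?_
    simp only [h1]
    exact tendsto_const_nhds
  · refine ge_of_tendsto' (f := fun n => ∫ t in (0 : ℝ)..(2 * π), A t * (c n t * (l n t * r n t)) *
        exp (∫ s in (0 : ℝ)..t, A s * (l n s * r n s))) (x := Filter.atTop) ?_ h2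
    refine intervalIntegral.tendsto_integral_filter_of_dominated_convergence
      (fun _ => M * ((R + 1) * ((R + 1) * (R + 1))) * exp (M * ((R + 1) * (R + 1)) * (2 * π)))
      (Filter.Eventually.of_forall fun n => ?_)
      (Filter.Eventually.of_forall fun n => Filter.Eventually.of_forall fun t ht => ?_) (by simp)
      (Filter.Eventually.of_forall fun t ht => ?_)
    · obtain ⟨c1, c2, c3⟩ := hcont n
      have hk : Continuous fun s => A s * (l n s * r n s) := by fun_prop
      have : Continuous fun t => ∫ s in (0 : ℝ)..t, A s * (l n s * r n s) :=
        continuous_iff_continuousAt.2 fun t =>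
          (hk.integral_hasStrictDerivAt 0 t).hasDerivAt.continuousAt
      exact Continuous.aestronglyMeasurable (by fun_prop)
    · have ht' := hsub (2 * π) ⟨hpi.le, le_refl _⟩ t ht
      rw [norm_eq_abs, abs_mul, abs_mul, abs_mul, abs_mul, abs_exp]
      have e1 := hM t ht'
      have e2 := bl n t ht'
      have e3 := br n t ht'
      have e4 := bc n t ht'
      have e5 : ∫ s in (0 : ℝ)..t, A s * (l n s * r n s) ≤ M * ((R + 1) * (R + 1)) * (2 * π) := by
        have := intervalIntegral.norm_integral_le_of_norm_le_const (a := (0 : ℝ)) (b := t)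
          (C := M * ((R + 1) * (R + 1))) (f := fun s => A s * (l n s * r n s))
          fun s hs => hbk n s (hsub t ht' s hs)
        rw [sub_zero, abs_of_nonneg ht'.1] at this
        refine (le_abs_self _).trans (this.trans ?_)
        have := ht'.2
        gcongr
      gcongr
    · have ht' := hsub (2 * π) ⟨hpi.le, le_refl _⟩ t ht
      rw [show X t ^ 3 = X t * (X t * X t) by ring]
      exact (((tc t ht').mul ((tl t ht').mul (tr t ht'))).const_mul _).mul
        ((continuous_exp.tendsto _).comp (inner t ht'))

/-! ### At most two positive periodic solutions -/

theorem CSol.unique {A B : ℝ → ℝ} {M R : ℝ} (hR : 0 < R) (hM : 0 < M) (hAM : ∀ t, |A t| ≤ M)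
    (hBM : ∀ t, |B t| ≤ M) {y z : ℝ → ℝ} (hy : CSol A B R y) (hz : CSol A B R z)
    (h0 : y 0 = z 0) : ∀ t ∈ Icc 0 (2 * π), y t = z t := by
  obtain ⟨C, hC, H⟩ := CSol.dist_le hR hM hAM
  intro t ht
  have := H B B z y 0 le_rfl hBM (by simp) hz hy t ht
  simp only [h0, sub_self, abs_zero, add_zero, mul_zero, abs_nonpos_iff] at this
  linarith

theorem PSol.bdd {A B x : ℝ → ℝ} (h : PSol A B x) : ∃ K, ∀ t, |x t| ≤ K := by
  obtain ⟨K, hK⟩ := isCompact_Icc.exists_bound_of_continuousOn (s := Icc 0 (2 * π))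
    h.cont.continuousOn
  refine ⟨K, fun t => ?_⟩
  obtain ⟨s, hs, e⟩ := (show Function.Periodic x (2 * π) from h.2).exists_mem_Ico₀ two_pi_pos t
  rw [e]
  exact hK s ⟨hs.1, hs.2.le⟩

/-- The displacement cannot be nonnegative at a point `p` below two positive periodic solutions.
The argument deforms `B` to `B + β` and applies `triple` to the displacement of the truncated flow;
the limiting solution stays below `X₃`, so the truncation is inactive there. -/
theorem no_two_above {a₀ b₀ r b b' p : ℝ} (hr : 0 < r) (hb : 0 < b) {X₂ X₃ y₁ : ℝ → ℝ}
    (h₂ : PSol (fun t => a₀ - r * sin t) (fun t => b₀ + b * cos t + b' * sin t) X₂)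
    (h₃ : PSol (fun t => a₀ - r * sin t) (fun t => b₀ + b * cos t + b' * sin t) X₃)
    (hp : 0 < p) (hp2 : p < X₂ 0) (h23 : X₂ 0 < X₃ 0)
    (hy₁ : ∀ t ∈ Icc 0 (2 * π), HasDerivAt y₁ ((a₀ - r * sin t) * y₁ t ^ 3 +
      (b₀ + b * cos t + b' * sin t) * y₁ t ^ 2) t)
    (hyp : y₁ 0 = p) (hyT : p ≤ y₁ (2 * π))
    (hyb : ∀ t ∈ Icc 0 (2 * π), 0 < y₁ t ∧ y₁ t < X₃ t) : False := by
  set A : ℝ → ℝ := fun t => a₀ - r * sin t with hAdef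
  set B : ℝ → ℝ := fun t => b₀ + b * cos t + b' * sin t with hBdef
  have hA : Continuous A := by fun_prop
  have hB : Continuous B := by fun_prop
  have hApe : ∀ t, A (t + 2 * π) = A t := fun t => by simp [hAdef]
  have hBpe : ∀ t, B (t + 2 * π) = B t := fun t => by simp [hBdef]
  have hpi := two_pi_pos
  obtain ⟨M₀, hM₀, hAM₀, hBM₀⟩ : ∃ M₀ > 0, (∀ t, |A t| ≤ M₀) ∧ ∀ t, |B t| ≤ M₀ := by
    have hs := fun t => abs_le.1 (abs_sin_le_one t)
    have hc := fun t => abs_le.1 (abs_cos_le_one t)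
    have h1 : ∀ (c : ℝ) {s : ℝ}, |s| ≤ 1 → |c * s| ≤ |c| := fun c s h => by
      rw [abs_mul]; nlinarith [abs_nonneg c]
    refine ⟨|a₀| + r + |b₀| + b + |b'|, by positivity, fun t => ?_, fun t => ?_⟩
    · have e := h1 r (abs_sin_le_one t)
      have := abs_sub a₀ (r * sin t)
      rw [abs_of_pos hr] at e
      simp only [hAdef]
      linarith [abs_nonneg b₀, abs_nonneg b']
    · have e := h1 b (abs_cos_le_one t)
      have e' := h1 b' (abs_sin_le_one t)
      have := abs_add_le (b₀ + b * cos t) (b' * sin t)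
      have := abs_add_le b₀ (b * cos t)
      rw [abs_of_pos hb] at e
      simp only [hBdef]
      linarith [abs_nonneg a₀]
  obtain ⟨K, hK⟩ := h₃.bdd
  have hK0 : 0 ≤ K := (abs_nonneg _).trans (hK 0)
  set R := K + 2 with hRdef
  have hR : 0 < R := by positivity
  -- for `β = βm` the truncated field is positive wherever the solution is
  set βm := M₀ * (1 + R) + 1 with hβm
  have hβm1 : 1 < βm := by have := mul_pos hM₀ (by linarith : 0 < 1 + R); linarith
  set M := M₀ + βm with hMdef
  have hM : 0 < M := by positivity
  have hAM : ∀ t, |A t| ≤ M := fun t => (hAM₀ t).trans (by linarith)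
  have hBM : ∀ β ∈ Icc (-1) βm, ∀ t, |B t + β| ≤ M := fun β hβ t => by
    refine (abs_add_le _ _).trans (add_le_add (hBM₀ t) (abs_le.2 ⟨by linarith [hβ.1], hβ.2⟩))
  -- the truncated flow
  have hex : ∀ x β, ∃ y, β ∈ Icc (-1) βm → CSol A (fun t => B t + β) R y ∧ y 0 = x := by
    intro x β
    by_cases hβ : β ∈ Icc (-1) βm
    · obtain ⟨y, hy⟩ := CSol.exists hA (by fun_prop : Continuous fun t => B t + β) hR hAM
        (hBM β hβ) x
      exact ⟨y, fun _ => hy⟩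
    · exact ⟨0, fun h => absurd h hβ⟩
  choose F hF using hex
  have h0m : (0 : ℝ) ∈ Icc (-1) βm := ⟨by norm_num, by linarith⟩
  obtain ⟨C, hC, hdist⟩ := CSol.dist_le (A := A) hR hM hAM
  have hFd : ∀ x β x' β', β ∈ Icc (-1) βm → β' ∈ Icc (-1) βm → ∀ t ∈ Icc 0 (2 * π),
      |F x' β' t - F x β t| ≤ C * (|x' - x| + |β' - β|) := by
    intro x β x' β' hβ hβ' t ht
    have := hdist (fun t => B t + β) (fun t => B t + β') _ _ |β' - β| (abs_nonneg _) (hBM β hβ)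
      (fun t => by simp) (hF x β hβ).1 (hF x' β' hβ').1 t ht
    rwa [(hF x β hβ).2, (hF x' β' hβ').2] at this
  have hFpos : ∀ x β, 0 < x → β ∈ Icc (-1) βm → ∀ t ∈ Icc 0 (2 * π), 0 < F x β t := by
    intro x β hx hβ
    exact (hF x β hβ).1.pos hR hAM (hBM β hβ) (by rw [(hF x β hβ).2]; exact hx)
  have huniq : ∀ y, CSol A B R y → ∀ t ∈ Icc 0 (2 * π), F (y 0) 0 t = y t := by
    intro y hy
    have := hF (y 0) 0 h0m
    simp only [add_zero] at this
    exact CSol.unique hR hM hAM (by simpa using hBM 0 h0m) this.1 hy this.2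
  have hTm : 2 * π ∈ Icc 0 (2 * π) := ⟨hpi.le, le_refl _⟩
  have h0T : (0 : ℝ) ∈ Icc 0 (2 * π) := ⟨le_refl _, hpi.le⟩
  set φ : ℝ → ℝ → ℝ := fun x β => F x β (2 * π) - x with hφ
  have hX3R : ∀ t, |X₃ t| ≤ R := fun t => (hK t).trans (by linarith)
  have hX₂p := h₂.pos hA hB (hp.trans hp2)
  have hX₂₃ := h₂.lt hA hB h₃ h23
  have hX2R : ∀ t, |X₂ t| ≤ R := fun t => by
    rw [abs_of_pos (hX₂p t)]
    linarith [hX₂₃ t, le_abs_self (X₃ t), hX3R t]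
  have hy1R : ∀ t ∈ Icc 0 (2 * π), |y₁ t| ≤ R := fun t ht => by
    rw [abs_of_pos (hyb t ht).1]
    linarith [(hyb t ht).2, le_abs_self (X₃ t), hX3R t]
  have hy₁c : CSol A B R y₁ := fun t ht =>
    (hy₁ t ht).congr_deriv (by simp [fld, cl_eq (hy1R t ht), hAdef, hBdef])
  obtain ⟨x, hx, β, hβ, hz, Htr⟩ := triple (φ := φ) (p := p) (q := X₃ 0) (x₂ := X₂ 0) (βm := βm)
    hp2 h23
    (by
      refine (LipschitzOnWith.of_dist_le_mul (K := ⟨2 * C + 1, by positivity⟩)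
        fun z hz w hw => ?_).continuousOn
      have h1 := hFd w.1 w.2 z.1 z.2 hw.2 hz.2 (2 * π) hTm
      have h2 : |z.1 - w.1| ≤ dist z w := (Real.dist_eq z.1 w.1).symm.le.trans (le_max_left _ _)
      have h3 : |z.2 - w.2| ≤ dist z w := (Real.dist_eq z.2 w.2).symm.le.trans (le_max_right _ _)
      rw [Real.dist_eq]
      simp only [hφ]
      show _ ≤ (2 * C + 1) * dist z w
      have h4 := abs_sub (F z.1 z.2 (2 * π) - F w.1 w.2 (2 * π)) (z.1 - w.1)
      rw [show F z.1 z.2 (2 * π) - z.1 - (F w.1 w.2 (2 * π) - w.1) =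
        F z.1 z.2 (2 * π) - F w.1 w.2 (2 * π) - (z.1 - w.1) by ring]
      nlinarith)
    (by
      intro x hx β hβ β' hβ' hlt
      have hx0 : 0 < x := hp.trans_le hx.1
      have h1 := hF x β hβ
      have h2 := hF x β' hβ'
      have h3 := CSol.raise (a := 0) (δ := β' - β) hR hAM (hBM β hβ) (by linarith) le_rfl hpi h1.1
        (z := F x β') (by simpa using h2.1) (hFpos x β' hx0 hβ') (by rw [h1.2, h2.2])
      simp only [hφ]; linarith)
    (by linarith)
    (by
      have := huniq y₁ hy₁c (2 * π) hTm
      rw [hyp] at this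
      simp only [hφ, this]; linarith)
    (by
      have := huniq X₃ (h₃.csol hX3R) (2 * π) hTm
      simp only [hφ, this, h₃.period0, sub_self, le_refl])
    (by
      have := huniq X₂ (h₂.csol hX2R) (2 * π) hTm
      simp only [hφ, this, h₂.period0, sub_self])
    (by
      intro x hx
      have hx0 : 0 < x := hp.trans_le hx.1
      have hβ : βm ∈ Icc (-1) βm := ⟨by linarith, le_refl _⟩
      obtain ⟨h1, h2⟩ := hF x βm hβ
      have h3 := hFpos x βm hx0 hβ
      have : StrictMonoOn (F x βm) (Icc 0 (2 * π)) := by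
        refine strictMonoOn_of_deriv_pos (convex_Icc _ _) h1.contOn fun t ht => ?_
        replace ht := interior_subset ht
        rw [(h1 t ht).deriv]
        have e1 := cl_pos hR (h3 t ht)
        have e2 := (le_abs_self _).trans (cl_abs hR (F x βm t))
        have e3 := abs_le.1 (hAM₀ t)
        have e4 := abs_le.1 (hBM₀ t)
        set c := cl R (F x βm t) with hc
        have e5 : fld A (fun t => B t + βm) R t (F x βm t) = c ^ 2 * (A t * c + (B t + βm)) := by
          simp only [fld, ← hc]; ring
        rw [e5]
        have e6 : -M₀ * R ≤ A t * c := by nlinarith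
        have : 0 < A t * c + (B t + βm) := by rw [hβm]; nlinarith
        positivity
      have := this h0T hTm hpi
      rw [h2] at this
      simp only [hφ]; linarith)
  have hβI : β ∈ Icc (-1) βm := ⟨by linarith [hβ.1], hβ.2.le⟩
  have hx0 : 0 < x := hp.trans hx.1
  obtain ⟨hY, hY0⟩ := hF x β hβI
  have hYp := hFpos x β hx0 hβI
  have hYT : F x β (2 * π) = x := by have := hz; simp only [hφ] at this; linarith
  have hYX : ∀ t ∈ Icc 0 (2 * π), F x β t ≤ X₃ t := by
    intro t ht
    by_contra! hlt
    have htT : t < 2 * π := ht.2.lt_of_ne fun h => by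
      rw [h, hYT, h₃.period0] at hlt
      linarith [hx.2]
    rcases hβ.1.lt_or_eq with h | h
    · have := CSol.raise (δ := β) hR hAM (by simpa using hBM 0 h0m) h ht.1 htT (h₃.csol hX3R) hY hYp
        hlt.le
      rw [hYT, h₃.period0] at this
      linarith [hx.2]
    · have hY' : CSol A B R (F x β) := by simpa [← h] using hY
      have := hY'.lt hR hAM (by simpa using hBM 0 h0m) (h₃.csol hX3R) (by rw [hY0]; exact hx.2) t ht
      linarith
  have hYK : ∀ t ∈ Icc 0 (2 * π), |F x β t| ≤ K := fun t ht => by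
    rw [abs_of_pos (hYp t ht)]
    exact (hYX t ht).trans ((le_abs_self _).trans (hK t))
  have gen : ∀ x' β', 0 < x' → β' ∈ Icc (-1) βm → φ x' β' = 0 → C * (|x' - x| + |β' - β|) ≤ 1 →
      ∃ X, PSol A (fun t => B t + β') X ∧ (∀ t ∈ Icc 0 (2 * π), X t = F x' β' t) := by
    intro x' β' hx' hβ' h0 hcl
    obtain ⟨h1, h2⟩ := hF x' β' hβ'
    refine h1.psol hApe (fun t => by simp [hBpe t]) ?_ fun t ht => ?_
    · rw [h2]; simp only [hφ] at h0; linarith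
    · have e1 := (hFd x β x' β' hβI hβ' t ht).trans hcl
      have e2 := abs_sub_abs_le_abs_sub (F x' β' t) (F x β t)
      linarith [hYK t ht]
  obtain ⟨X, hXs, hXe⟩ := gen x β hx0 hβI hz (by simp)
  have hlim := limit_int (A := A) (X := X) (R := K) hA
    (fun t ht => by rw [hXe t ht]; exact hYK t ht) (fun n => by
      have hn : (0 : ℝ) < (n : ℝ) + 1 := by positivity
      obtain ⟨xl, xc, xr, β', h1, h2, hl, hc, hr', el, ec, er, hβ1, hβ2, hβ3, zl, zr, zc⟩ :=
        Htr (1 / (2 * C * ((n : ℝ) + 1))) (by positivity)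
      have hβ'I : β' ∈ Icc (-1) βm := ⟨hβ1, hβ2.trans hβI.2⟩
      have hCe : C * (1 / (2 * C * ((n : ℝ) + 1)) + 1 / (2 * C * ((n : ℝ) + 1))) =
        1 / ((n : ℝ) + 1) := by field_simp; norm_num
      have hn1 : 1 / ((n : ℝ) + 1) ≤ 1 := by
        rw [div_le_one hn]
        linarith [(Nat.cast_nonneg n : (0 : ℝ) ≤ n)]
      have dβ : |β' - β| < 1 / (2 * C * ((n : ℝ) + 1)) := by
        rw [abs_sub_comm, abs_of_nonneg (by linarith)]; exact hβ3
      have dl : C * (|xl - x| + |β' - β|) ≤ 1 / ((n : ℝ) + 1) := by rw [← hCe]; gcongr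
      have dr : C * (|xr - x| + |β' - β|) ≤ 1 / ((n : ℝ) + 1) := by rw [← hCe]; gcongr
      have dc : C * (|xc - x| + |β - β|) ≤ 1 / ((n : ℝ) + 1) := by
        rw [← hCe, sub_self, abs_zero]; gcongr; positivity
      obtain ⟨Xl, sl, eql⟩ := gen xl β' (hp.trans_le hl.1) hβ'I zl (dl.trans hn1)
      obtain ⟨Xr, sr, eqr⟩ := gen xr β' (hp.trans_le hr'.1) hβ'I zr (dr.trans hn1)
      obtain ⟨Xc, sc, eqc⟩ := gen xc β (hp.trans_le hc.1) hβI zc (dc.trans hn1)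
      have il : Xl 0 = xl := (eql 0 h0T).trans (hF xl β' hβ'I).2
      have ir : Xr 0 = xr := (eqr 0 h0T).trans (hF xr β' hβ'I).2
      have ic : Xc 0 = xc := (eqc 0 h0T).trans (hF xc β hβI).2
      refine ⟨Xl, Xc, Xr, ⟨sl.cont, sc.cont, sr.cont⟩, fun t ht => ⟨?_, ?_, ?_⟩, ?_⟩
      · rw [eql t ht, hXe t ht]; exact (hFd _ _ _ _ hβI hβ'I t ht).trans dl
      · rw [eqc t ht, hXe t ht]; exact (hFd _ _ _ _ hβI hβI t ht).trans dc
      · rw [eqr t ht, hXe t ht]; exact (hFd _ _ _ _ hβI hβ'I t ht).trans dr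
      · refine triple_int (B := fun t => B t + β') (δ := β - β') hA (by fun_prop) (by linarith)
          sl sr (by simpa [add_assoc] using sc) ?_ ?_ ?_
        · rw [il]; exact hp.trans_le hl.1
        · rw [il, ic]; exact h1
        · rw [ic, ir]; exact h2)
  have hX0 : X 0 = x := (hXe 0 h0T).trans hY0
  have hXs' : PSol (fun t => a₀ - r * sin t) (fun t => (b₀ + β) + b * cos t + b' * sin t) X := by
    have : (fun t => (b₀ + β) + b * cos t + b' * sin t) = fun t => B t + β := by
      funext t; simp only [hBdef]; ring
    rw [this]; exact hXs
  have := singular_neg hr hb hXs' (by rw [hX0]; exact hx0) hlim.1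
  exact absurd hlim.2 (not_le.2 this)

/-! ### The nondegenerate case -/

theorem no_three_pos {a₀ b₀ r b b' : ℝ} (hr : 0 < r) (hb : 0 < b) {X₁ X₂ X₃ : ℝ → ℝ}
    (h₁ : PSol (fun t => a₀ - r * sin t) (fun t => b₀ + b * cos t + b' * sin t) X₁)
    (h₂ : PSol (fun t => a₀ - r * sin t) (fun t => b₀ + b * cos t + b' * sin t) X₂)
    (h₃ : PSol (fun t => a₀ - r * sin t) (fun t => b₀ + b * cos t + b' * sin t) X₃)
    (h0 : 0 < X₁ 0) (h12 : X₁ 0 < X₂ 0) (h23 : X₂ 0 < X₃ 0) : False :=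
  no_two_above hr hb h₂ h₃ h0 h12 h23 (fun t _ => h₁.1 t) rfl h₁.period0.ge fun t _ =>
    ⟨h₁.pos (by fun_prop) (by fun_prop) h0 t,
      h₁.lt (by fun_prop) (by fun_prop) h₃ (h12.trans h23) t⟩

/-- When `b₀ > 0` the return map moves small positive initial values upwards, and this plays the
role of the lowest of three positive periodic solutions. -/
theorem no_two_pos {a₀ b₀ r b b' : ℝ} (hr : 0 < r) (hb : 0 < b) (hb₀ : 0 < b₀) {X₂ X₃ : ℝ → ℝ}
    (h₂ : PSol (fun t => a₀ - r * sin t) (fun t => b₀ + b * cos t + b' * sin t) X₂)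
    (h₃ : PSol (fun t => a₀ - r * sin t) (fun t => b₀ + b * cos t + b' * sin t) X₃)
    (h0 : 0 < X₂ 0) (h23 : X₂ 0 < X₃ 0) : False := by
  have hpi := two_pi_pos
  have hA : Continuous fun t => a₀ - r * sin t := by fun_prop
  have hB : Continuous fun t => b₀ + b * cos t + b' * sin t := by fun_prop
  obtain ⟨M, hM, hAM, hBM⟩ : ∃ M > 0, (∀ t, |a₀ - r * sin t| ≤ M) ∧
      ∀ t, |b₀ + b * cos t + b' * sin t| ≤ M := by
    have h1 : ∀ (c : ℝ) {s : ℝ}, |s| ≤ 1 → |c * s| ≤ |c| := fun c s h => by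
      rw [abs_mul]; nlinarith [abs_nonneg c]
    refine ⟨|a₀| + |r| + |b₀| + |b| + |b'| + 1, by positivity, fun t => ?_, fun t => ?_⟩
    · have e := h1 r (abs_sin_le_one t)
      have := abs_sub a₀ (r * sin t)
      linarith [abs_nonneg b₀, abs_nonneg b', abs_nonneg b]
    · have e := h1 b (abs_cos_le_one t)
      have e' := h1 b' (abs_sin_le_one t)
      have := abs_add_le (b₀ + b * cos t) (b' * sin t)
      have := abs_add_le b₀ (b * cos t)
      linarith [abs_nonneg a₀, abs_nonneg r]
  obtain ⟨K, hK⟩ := h₃.bdd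
  have hK0 : 0 ≤ K := (abs_nonneg _).trans (hK 0)
  have hR : 0 < K + 1 := by positivity
  have hKR : ∀ t, |X₃ t| ≤ K + 1 := fun t => (hK t).trans (by linarith)
  obtain ⟨C, hC, hdist⟩ := CSol.dist_le hR hM hAM
  obtain ⟨p, hp, hp'⟩ := exists_between (show 0 < min (X₂ 0) (b₀ / (M * C)) from
    lt_min h0 (by positivity))
  have hp2 : p < X₂ 0 := hp'.trans_le (min_le_left _ _)
  have hpC : M * (C * p) < b₀ := by
    have := hp'.trans_le (min_le_right _ _)
    rw [lt_div_iff₀ (by positivity)] at this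
    linarith
  obtain ⟨y, hy, hy0⟩ := CSol.exists hA hB hR hAM hBM p
  have hyp := hy.pos hR hAM hBM (by rw [hy0]; exact hp)
  have hy3 := hy.lt hR hAM hBM (h₃.csol hKR) (by rw [hy0]; exact hp2.trans h23)
  have hyR : ∀ t ∈ Icc 0 (2 * π), |y t| ≤ K + 1 := fun t ht => by
    rw [abs_of_pos (hyp t ht)]
    linarith [hy3 t ht, le_abs_self (X₃ t), hKR t]
  have hyC : ∀ t ∈ Icc 0 (2 * π), y t ≤ C * p := fun t ht => by
    have := hdist _ _ (fun _ => 0) y 0 le_rfl hBM (by simp)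
      (fun t _ => (hasDerivAt_const t (0 : ℝ)).congr_deriv (by rw [fld_zero hR])) hy t ht
    simp only [hy0, sub_zero, add_zero, abs_of_pos hp] at this
    exact (le_abs_self _).trans this
  have hyd : ∀ t ∈ Icc 0 (2 * π), HasDerivAt y ((a₀ - r * sin t) * y t ^ 3 +
      (b₀ + b * cos t + b' * sin t) * y t ^ 2) t := fun t ht =>
    (hy t ht).congr_deriv (by simp [fld, cl_eq (hyR t ht)])
  have h0T : (0 : ℝ) ∈ Icc 0 (2 * π) := ⟨le_refl _, hpi.le⟩
  have hTT : 2 * π ∈ Icc 0 (2 * π) := ⟨hpi.le, le_refl _⟩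
  refine no_two_above hr hb h₂ h₃ hp hp2 h23 hyd hy0 ?_ fun t ht => ⟨hyp t ht, hy3 t ht⟩
  -- `1/y + b sin - b' cos` is decreasing since `A y` is small compared with `b₀`
  have hd : ∀ t ∈ Icc 0 (2 * π), HasDerivAt (fun t => (y t)⁻¹ + b * sin t - b' * cos t)
      (-((a₀ - r * sin t) * y t + b₀)) t := fun t ht => by
    have hn := (hyp t ht).ne'
    refine ((((hyd t ht).inv hn).add ((hasDerivAt_sin t).const_mul b)).sub
      ((hasDerivAt_cos t).const_mul b')).congr_deriv ?_
    field_simp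
    ring
  have hanti : AntitoneOn (fun t => (y t)⁻¹ + b * sin t - b' * cos t) (Icc 0 (2 * π)) := by
    refine antitoneOn_of_deriv_nonpos (convex_Icc _ _)
      (fun t ht => (hd t ht).continuousAt.continuousWithinAt)
      (fun t ht => (hd t (interior_subset ht)).differentiableAt.differentiableWithinAt) fun t ht => ?_
    replace ht := interior_subset ht
    rw [(hd t ht).deriv]
    have e1 := (abs_le.1 (hAM t)).1
    have e2 := hyp t ht
    have e3 := hyC t ht
    nlinarith
  have := hanti h0T hTT hpi.le
  simp only [sin_two_pi, cos_two_pi, sin_zero, cos_zero, hy0] at this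
  exact (inv_le_inv₀ (hyp _ hTT) hp).1 (by linarith)

theorem PSol.refl' {a₀ b₀ r b b' : ℝ} {X : ℝ → ℝ}
    (h : PSol (fun t => a₀ - r * sin t) (fun t => b₀ + b * cos t + b' * sin t) X) :
    PSol (fun t => -a₀ - r * sin t) (fun t => b₀ + b * cos t + (-b') * sin t) (fun t => -X (-t)) := by
  have := h.refl
  convert this using 2 with t
  · simp only [sin_neg]; ring
  · simp only [sin_neg, cos_neg]; ring

/-- The nondegenerate case in normal form. If `b₀ > 0`, there are two solutions of the same sign,
which `no_two_pos` forbids. If `b₀ ≤ 0`, all three have the same sign by `no_neg`, which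
`no_three_pos` forbids. -/
theorem normal_form {a₀ b₀ r b b' : ℝ} (hr : 0 < r) (hb : 0 < b) {X₁ X₂ X₃ : ℝ → ℝ}
    (h₁ : PSol (fun t => a₀ - r * sin t) (fun t => b₀ + b * cos t + b' * sin t) X₁)
    (h₂ : PSol (fun t => a₀ - r * sin t) (fun t => b₀ + b * cos t + b' * sin t) X₂)
    (h₃ : PSol (fun t => a₀ - r * sin t) (fun t => b₀ + b * cos t + b' * sin t) X₃)
    (n₁ : X₁ 0 ≠ 0) (n₂ : X₂ 0 ≠ 0) (n₃ : X₃ 0 ≠ 0)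
    (h12 : X₁ 0 < X₂ 0) (h23 : X₂ 0 < X₃ 0) : False := by
  rcases lt_or_ge 0 b₀ with hb₀ | hb₀
  · rcases lt_or_gt_of_ne n₂ with h | h
    · exact no_two_pos hr hb hb₀ h₂.refl' h₁.refl' (by simpa using h) (by simpa using h12)
    · exact no_two_pos hr hb hb₀ h₂ h₃ h h23
  · rcases le_total 0 a₀ with ha | ha
    · rcases lt_or_gt_of_ne n₁ with h | h
      · exact no_neg hr hb ha hb₀ h₁ h
      · exact no_three_pos hr hb h₁ h₂ h₃ h h12 h23
    · rcases lt_or_gt_of_ne n₃ with h | h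
      · exact no_three_pos hr hb h₃.refl' h₂.refl' h₁.refl' (by simpa using h) (by simpa using h23)
          (by simpa using h12)
      · exact no_neg hr hb (by linarith) hb₀ h₃.refl' (by simpa using h)

/-- Sorting three distinct reals. -/
theorem sort3 {P : (ℝ → ℝ) → Prop}
    (H : ∀ X₁ X₂ X₃, P X₁ → P X₂ → P X₃ → X₁ 0 < X₂ 0 → X₂ 0 < X₃ 0 → False) {X₁ X₂ X₃ : ℝ → ℝ}
    (h₁ : P X₁) (h₂ : P X₂) (h₃ : P X₃) (h12 : X₁ 0 ≠ X₂ 0) (h13 : X₁ 0 ≠ X₃ 0)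
    (h23 : X₂ 0 ≠ X₃ 0) : False := by
  rcases lt_or_gt_of_ne h12 with a | a <;> rcases lt_or_gt_of_ne h13 with b | b <;>
    rcases lt_or_gt_of_ne h23 with c | c
  · exact H _ _ _ h₁ h₂ h₃ a c
  · exact H _ _ _ h₁ h₃ h₂ b c
  · linarith
  · exact H _ _ _ h₃ h₁ h₂ b a
  · exact H _ _ _ h₂ h₁ h₃ a b
  · linarith
  · exact H _ _ _ h₂ h₃ h₁ c b
  · exact H _ _ _ h₃ h₂ h₁ c a

/-- No three nonzero periodic solutions when `(a₁, a₂)` and `(b₁, b₂)` are independent: a time shift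
reduces `A` to `a₀ - r sin t`, and `x ↦ -x` makes the coefficient of `cos t` in `B` positive. -/
theorem nondeg {a₀ a₁ a₂ b₀ b₁ b₂ : ℝ} (hdet : a₁ * b₂ - a₂ * b₁ ≠ 0) {X₁ X₂ X₃ : ℝ → ℝ}
    (h₁ : PSol (fun t => a₀ + a₁ * sin t + a₂ * cos t) (fun t => b₀ + b₁ * sin t + b₂ * cos t) X₁)
    (h₂ : PSol (fun t => a₀ + a₁ * sin t + a₂ * cos t) (fun t => b₀ + b₁ * sin t + b₂ * cos t) X₂)
    (h₃ : PSol (fun t => a₀ + a₁ * sin t + a₂ * cos t) (fun t => b₀ + b₁ * sin t + b₂ * cos t) X₃)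
    (n₁ : X₁ 0 ≠ 0) (n₂ : X₂ 0 ≠ 0) (n₃ : X₃ 0 ≠ 0)
    (h12 : X₁ 0 ≠ X₂ 0) (h13 : X₁ 0 ≠ X₃ 0) (h23 : X₂ 0 ≠ X₃ 0) : False := by
  have hA : Continuous fun t => a₀ + a₁ * sin t + a₂ * cos t := by fun_prop
  have hB : Continuous fun t => b₀ + b₁ * sin t + b₂ * cos t := by fun_prop
  set z : ℂ := ⟨-a₁, a₂⟩ with hz
  have hz0 : z ≠ 0 := fun h => hdet (by
    have h1 := congrArg Complex.re h
    have h2 := congrArg Complex.im h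
    simp only [hz, Complex.zero_re, Complex.zero_im, neg_eq_zero] at h1 h2
    rw [h1, h2]; ring)
  set r := ‖z‖ with hrdef
  have hr : 0 < r := norm_pos_iff.2 hz0
  set s := z.arg with hs
  have hc : r * cos s = -a₁ := Complex.norm_mul_cos_arg z
  have hsn : r * sin s = a₂ := Complex.norm_mul_sin_arg z
  have hsc := sin_sq_add_cos_sq s
  have eA : (fun t => a₀ + a₁ * sin (t + s) + a₂ * cos (t + s)) = fun t => a₀ - r * sin t := by
    funext t
    rw [sin_add, cos_add, ← hsn, show a₁ = -(r * cos s) by linarith]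
    linear_combination (-r * sin t) * hsc
  set b := b₁ * sin s + b₂ * cos s with hb
  set b' := b₁ * cos s - b₂ * sin s with hb'
  have eB : (fun t => b₀ + b₁ * sin (t + s) + b₂ * cos (t + s)) =
      fun t => b₀ + b * cos t + b' * sin t := by
    funext t
    rw [sin_add, cos_add, hb, hb']; ring
  have hbn : b ≠ 0 := fun h => hdet (by
    have : a₁ * b₂ - a₂ * b₁ = -(r * b) := by rw [hb]; linear_combination b₁ * hsn + b₂ * hc
    rw [this, h]; ring)
  have conv : ∀ {X}, PSol (fun t => a₀ + a₁ * sin t + a₂ * cos t)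
      (fun t => b₀ + b₁ * sin t + b₂ * cos t) X →
      PSol (fun t => a₀ - r * sin t) (fun t => b₀ + b * cos t + b' * sin t) (fun t => X (t + s)) := by
    intro X h
    rw [← eA, ← eB]
    exact h.shift s
  have c₁ := conv h₁
  have c₂ := conv h₂
  have c₃ := conv h₃
  have m₁ := h₁.ne hA hB n₁ s
  have m₂ := h₂.ne hA hB n₂ s
  have m₃ := h₃.ne hA hB n₃ s
  have m12 := h₁.ne_of_ne hA hB h₂ h12 s
  have m13 := h₁.ne_of_ne hA hB h₃ h13 s
  have m23 := h₂.ne_of_ne hA hB h₃ h23 s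
  rcases lt_or_gt_of_ne hbn with hlt | hgt
  · have conv2 : ∀ {X}, PSol (fun t => a₀ - r * sin t) (fun t => b₀ + b * cos t + b' * sin t) X →
        PSol (fun t => a₀ - r * sin t) (fun t => -b₀ + -b * cos t + -b' * sin t) (fun t => -X t) := by
      intro X h
      convert h.negx using 2
      ring
    exact sort3 (P := fun X => PSol (fun t => a₀ - r * sin t)
        (fun t => -b₀ + -b * cos t + -b' * sin t) X ∧ X 0 ≠ 0)
      (fun _ _ _ p₁ p₂ p₃ q₁ q₂ =>
        normal_form hr (neg_pos.2 hlt) p₁.1 p₂.1 p₃.1 p₁.2 p₂.2 p₃.2 q₁ q₂)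
      ⟨conv2 c₁, by simpa using m₁⟩ ⟨conv2 c₂, by simpa using m₂⟩ ⟨conv2 c₃, by simpa using m₃⟩
      (by simpa using m12) (by simpa using m13) (by simpa using m23)
  · exact sort3 (P := fun X => PSol (fun t => a₀ - r * sin t)
        (fun t => b₀ + b * cos t + b' * sin t) X ∧ X 0 ≠ 0)
      (fun _ _ _ p₁ p₂ p₃ q₁ q₂ =>
        normal_form hr hgt p₁.1 p₂.1 p₃.1 p₁.2 p₂.2 p₃.2 q₁ q₂)
      ⟨c₁, by simpa using m₁⟩ ⟨c₂, by simpa using m₂⟩ ⟨c₃, by simpa using m₃⟩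
      (by simpa using m12) (by simpa using m13) (by simpa using m23)

/-! ### The degenerate case -/

/-- An antiderivative of `1 / h`, injective, valid on a neighbourhood of an orbit `x` on which `h`
does not vanish. It is built from `1 / h` frozen outside a slightly enlarged range of `x`. -/
theorem exists_antideriv {h x : ℝ → ℝ} (hh : Continuous h) (hx : Continuous x)
    (hne : ∀ t, h (x t) ≠ 0) : ∃ δ > 0, ∃ R : ℝ → ℝ, R.Injective ∧
      ∀ t ∈ Icc 0 (2 * π), ∀ s, |s - x t| ≤ δ →
        h s ≠ 0 ∧ HasDerivAt R (h s)⁻¹ s := by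
  have hp : (Icc 0 (2 * π)).Nonempty := nonempty_Icc.2 two_pi_pos.le
  obtain ⟨t₁, -, h₁⟩ := isCompact_Icc.exists_isMinOn hp hx.continuousOn
  obtain ⟨t₂, -, h₂⟩ := isCompact_Icc.exists_isMaxOn hp hx.continuousOn
  have hsub : Icc (x t₁) (x t₂) ⊆ {s | h s ≠ 0} := by
    intro s hs
    obtain ⟨t, rfl⟩ := mem_range_of_exists_le_of_exists_ge hx ⟨t₁, hs.1⟩ ⟨t₂, hs.2⟩
    exact hne t
  obtain ⟨δ, hδ, hc⟩ := (isCompact_Icc (a := x t₁) (b := x t₂)).exists_cthickening_subset_open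
    (isOpen_ne_fun hh continuous_const) hsub
  by_cases hle : x t₁ ≤ x t₂
  swap
  · exact absurd ((h₁ (a := 0) ⟨le_refl _, two_pi_pos.le⟩ : x t₁ ≤ x 0).trans
      (h₂ ⟨le_refl _, two_pi_pos.le⟩)) hle
  set P := x t₁ - δ
  set Q := x t₂ + δ
  have hU : ∀ s ∈ Icc P Q, h s ≠ 0 := by
    intro s hs
    apply hc
    refine Metric.mem_cthickening_of_dist_le s (max (x t₁) (min (x t₂) s)) δ _
      ⟨le_max_left _ _, max_le hle (min_le_left _ _)⟩ ?_
    have := hs.1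
    have := hs.2
    rw [Real.dist_eq, abs_le]
    rcases le_total (x t₂) s with h3 | h3
    · rw [min_eq_left h3, max_eq_right hle]
      constructor <;> linarith
    · rw [min_eq_right h3]
      rcases le_total (x t₁) s with h4 | h4
      · rw [max_eq_right h4]; constructor <;> linarith
      · rw [max_eq_left h4]; constructor <;> linarith
  have hPQ : P ≤ Q := by linarith
  set g : ℝ → ℝ := fun s => (h (max P (min Q s)))⁻¹ with hg
  have hmem : ∀ s, max P (min Q s) ∈ Icc P Q := fun s =>
    ⟨le_max_left _ _, max_le hPQ (min_le_left _ _)⟩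
  have hgc : Continuous g := Continuous.inv₀ (by fun_prop) fun s => hU _ (hmem s)
  have hd : ∀ s, HasDerivAt (fun s => ∫ u in (0 : ℝ)..s, g u) (g s) s := fun s =>
    (hgc.integral_hasStrictDerivAt 0 s).hasDerivAt
  refine ⟨δ, hδ, fun s => ∫ u in (0 : ℝ)..s, g u, ?_, ?_⟩
  · have key : ∀ a b, a < b → (∫ u in (0 : ℝ)..a, g u) ≠ ∫ u in (0 : ℝ)..b, g u := by
      intro a b hab he
      obtain ⟨c, -, hc0⟩ := exists_hasDerivAt_eq_zero hab
        (fun s _ => (hd s).continuousAt.continuousWithinAt) he fun s _ => hd s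
      exact inv_ne_zero (hU _ (hmem c)) hc0
    intro a b hab
    by_contra hne
    rcases lt_or_gt_of_ne hne with h3 | h3
    · exact key a b h3 hab
    · exact key b a h3 hab.symm
  · intro t ht s hs
    have e1 : x t₁ ≤ x t := h₁ ht
    have e2 : x t ≤ x t₂ := h₂ ht
    rw [abs_le] at hs
    have := hd s
    simp only [hg] at this
    rw [min_eq_right (by linarith : s ≤ Q), max_eq_right (by linarith : P ≤ s)] at this
    exact ⟨hU s ⟨by linarith, by linarith⟩, this⟩

/-- Separable case `x' = f(t) h(x)` with `h(x) = x² (α x + β)`: integrate `x' / h(x) = f`. -/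
theorem sep_integral_zero {f x : ℝ → ℝ} {α β : ℝ} (hf : Continuous f)
    (h : PSol (fun t => α * f t) (fun t => β * f t) x)
    (hne : ∀ t, x t ^ 2 * (α * x t + β) ≠ 0) : ∫ t in (0 : ℝ)..(2 * π), f t = 0 := by
  obtain ⟨δ, hδ, R, -, hR⟩ := exists_antideriv (h := fun s => s ^ 2 * (α * s + β)) (by fun_prop)
    h.cont hne
  rw [integral_eq_sub_of_hasDerivAt (f := fun t => R (x t)), h.period0, sub_self]
  · intro t ht
    rw [uIcc_of_le two_pi_pos.le] at ht
    refine ((hR t ht (x t) (by simpa using hδ.le)).2.comp t (h.1 t)).congr_deriv ?_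
    have := hne t
    rw [show α * f t * x t ^ 3 + β * f t * x t ^ 2 = x t ^ 2 * (α * x t + β) * f t by ring,
      inv_mul_cancel_left₀ this]
  · exact hf.intervalIntegrable _ _

/-- In the separable case a periodic solution off the zeros of `h` is never isolated: `∫ f = 0`, so
nearby solutions close up as well. -/
theorem sep_not_isolated {f x : ℝ → ℝ} {α β M : ℝ} (hf : Continuous f)
    (hAM : ∀ t, |α * f t| ≤ M) (hBM : ∀ t, |β * f t| ≤ M)
    (hM : 0 < M) (h : PSol (fun t => α * f t) (fun t => β * f t) x)
    (hne : ∀ t, x t ^ 2 * (α * x t + β) ≠ 0) {ε : ℝ} (hε : 0 < ε) :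
    ∃ y, ClosedSol (fun t => α * f t) (fun t => β * f t) (2 * π) y ∧ |y 0 - x 0| < ε ∧
      y 0 ≠ x 0 := by
  have hA : Continuous fun t => α * f t := by fun_prop
  have hB : Continuous fun t => β * f t := by fun_prop
  have hintg := sep_integral_zero hf h hne
  obtain ⟨δ, hδ, R, hRi, hR⟩ := exists_antideriv (h := fun s => s ^ 2 * (α * s + β)) (by fun_prop)
    h.cont hne
  obtain ⟨K, hK⟩ := h.bdd
  have hK0 : 0 ≤ K := (abs_nonneg _).trans (hK 0)
  obtain ⟨C, hC, hdist⟩ := CSol.dist_le (R := K + 1) (by linarith) hM hAM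
  set m := min (ε / 2) (min δ 1 / (C + 1)) with hm
  have hm0 : 0 < m := by positivity
  obtain ⟨y, hy, hy0⟩ := CSol.exists (R := K + 1) hA hB (by linarith) hAM hBM (x 0 + m)
  have hcl : ∀ t ∈ Icc 0 (2 * π), |y t - x t| ≤ min δ 1 := by
    intro t ht
    have h1 := hdist _ _ x y 0 le_rfl hBM (fun t => by simp)
      (h.csol fun t => (hK t).trans (by linarith)) hy t ht
    rw [hy0, add_sub_cancel_left, abs_of_pos hm0, add_zero] at h1
    have h2 : m ≤ min δ 1 / (C + 1) := min_le_right _ _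
    rw [le_div_iff₀ (by linarith)] at h2
    linarith
  have hyb : ∀ t ∈ Icc 0 (2 * π), |y t| ≤ K + 1 := by
    intro t ht
    have h1 := (hcl t ht).trans (min_le_right _ _)
    have h2 := abs_sub_abs_le_abs_sub (y t) (x t)
    linarith [hK t]
  have hder : ∀ t ∈ Icc 0 (2 * π), HasDerivAt y (α * f t * y t ^ 3 + β * f t * y t ^ 2) t :=
    fun t ht => (hy t ht).congr_deriv (by simp [fld, cl_eq (hyb t ht)])
  have hper : y (2 * π) = y 0 := by
    apply hRi
    rw [← sub_eq_zero]
    refine Eq.trans ?_ hintg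
    rw [integral_eq_sub_of_hasDerivAt (f := fun t => R (y t))]
    · intro t ht
      rw [uIcc_of_le two_pi_pos.le] at ht
      obtain ⟨hn, hd⟩ := hR t ht (y t) ((hcl t ht).trans (min_le_left _ _))
      refine (hd.comp t (hder t ht)).congr_deriv ?_
      rw [show α * f t * y t ^ 3 + β * f t * y t ^ 2 = y t ^ 2 * (α * y t + β) * f t by ring,
        inv_mul_cancel_left₀ hn]
    · exact hf.intervalIntegrable _ _
  refine ⟨y, ⟨fun t ht => (hder t ht).hasDerivWithinAt, hper.symm⟩, ?_, ?_⟩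
  · rw [hy0, add_sub_cancel_left, abs_of_pos hm0]
    have : m ≤ ε / 2 := min_le_left _ _
    linarith
  · rw [hy0]; linarith


/-- In the separable case the only nonzero isolated periodic solution is the constant `-β/α`. -/
theorem sep_two {f x y : ℝ → ℝ} {α β M : ℝ} (hf : Continuous f)
    (hAM : ∀ t, |α * f t| ≤ M) (hBM : ∀ t, |β * f t| ≤ M)
    (hM : 0 < M) (hαβ : ¬(α = 0 ∧ β = 0))
    (hx : PSol (fun t => α * f t) (fun t => β * f t) x)
    (hy : PSol (fun t => α * f t) (fun t => β * f t) y)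
    (hxi : ∃ ε > (0 : ℝ), ∀ z, ClosedSol (fun t => α * f t) (fun t => β * f t) (2 * π) z →
      |z 0 - x 0| < ε → z 0 = x 0)
    (hyi : ∃ ε > (0 : ℝ), ∀ z, ClosedSol (fun t => α * f t) (fun t => β * f t) (2 * π) z →
      |z 0 - y 0| < ε → z 0 = y 0)
    (hx0 : x 0 ≠ 0) (hy0 : y 0 ≠ 0) : x 0 = y 0 := by
  have hA : Continuous fun t => α * f t := by fun_prop
  have hB : Continuous fun t => β * f t := by fun_prop
  have key : ∀ x, PSol (fun t => α * f t) (fun t => β * f t) x → x 0 ≠ 0 →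
      (∃ ε > (0 : ℝ), ∀ z, ClosedSol (fun t => α * f t) (fun t => β * f t) (2 * π) z →
      |z 0 - x 0| < ε → z 0 = x 0) → α * x 0 + β = 0 := by
    rintro x hx hx0 ⟨ε, hε, hiso⟩
    by_contra hg
    have hxc := hx.cont
    have hgt : ∀ t, α * x t + β ≠ 0 := fun t => by
      have := lin_ode (e := fun t => α * x t + β) (k := fun t => α * f t * x t ^ 2) (by fun_prop)
        (fun t => (((hx.1 t).const_mul α).add_const β).congr_deriv (by ring)) t
      rw [this]
      exact mul_ne_zero hg (exp_pos _).ne'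
    obtain ⟨z, hz, hz1, hz2⟩ := sep_not_isolated hf hAM hBM hM hx
      (fun t => mul_ne_zero (pow_ne_zero 2 (hx.ne hA hB hx0 t)) (hgt t)) hε
    exact hz2 (hiso z hz hz1)
  have e1 := key x hx hx0 hxi
  have e2 := key y hy hy0 hyi
  have e3 : α * (x 0 - y 0) = 0 := by linarith
  rcases mul_eq_zero.1 e3 with h | h
  · exact absurd ⟨h, by rw [h] at e1; linarith⟩ hαβ
  · linarith

/-- With constant `A ≠ 0` there is at most one periodic solution of each sign: `D = 1/x - 1/y` solves
`D' = A x y D`, so `∫ A x y = 0` if `D ≠ 0`. -/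
theorem const_two {B x y : ℝ → ℝ} {a : ℝ} (ha : a ≠ 0) (hB : Continuous B)
    (hx : PSol (fun _ => a) B x) (hy : PSol (fun _ => a) B y) (hs : 0 < x 0 * y 0) :
    x 0 = y 0 := by
  by_contra hne
  have hA : Continuous fun _ : ℝ => a := continuous_const
  have hx0 : x 0 ≠ 0 := left_ne_zero_of_mul hs.ne'
  have hy0 : y 0 ≠ 0 := right_ne_zero_of_mul hs.ne'
  have hxc := hx.cont
  have hyc := hy.cont
  have hxt := hx.ne hA hB hx0
  have hyt := hy.ne hA hB hy0
  have hpos : ∀ t, 0 < x t * y t := fun t => by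
    obtain ⟨c, hc, e⟩ := hx.sign hA hB t
    obtain ⟨d, hd, e'⟩ := hy.sign hA hB t
    rw [e, e', show x 0 * c * (y 0 * d) = x 0 * y 0 * (c * d) by ring]
    positivity
  have h1 := lin_ode (e := fun t => (x t)⁻¹ - (y t)⁻¹) (k := fun t => a * (x t * y t)) (by fun_prop)
    (fun t => ((hx.inv_deriv (hxt t)).sub (hy.inv_deriv (hyt t))).congr_deriv (by
      have := hxt t
      have := hyt t
      field_simp
      ring)) (2 * π)
  simp only [hx.period0, hy.period0] at h1
  have h2 : (x 0)⁻¹ - (y 0)⁻¹ ≠ 0 := fun h => hne (inv_injective (sub_eq_zero.1 h))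
  have h3 : exp (∫ s in (0 : ℝ)..(2 * π), a * (x s * y s)) = 1 :=
    mul_left_cancel₀ h2 (by rw [← h1, mul_one])
  rw [exp_eq_one_iff, integral_const_mul] at h3
  have h4 : 0 < ∫ s in (0 : ℝ)..(2 * π), x s * y s :=
    intervalIntegral_pos_of_pos ((hxc.mul hyc).intervalIntegrable _ _) hpos two_pi_pos
  exact mul_ne_zero ha h4.ne' h3

/-- For `B = k - m A` with `k ≠ 0` one has `(x - m)' = x² (A (x - m) + k)`, so `x - m` times an
integrating factor is strictly monotone; a periodic solution cannot take the value `m`. -/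
theorem line_ne_zero {A x : ℝ → ℝ} {k m : ℝ} (hk : k ≠ 0) (hA : Continuous A)
    (hx : PSol A (fun t => k - m * A t) x) (hx0 : x 0 ≠ 0) : x 0 ≠ m := by
  intro hm
  have hxc := hx.cont
  have hB : Continuous fun t => k - m * A t := by fun_prop
  have hI : ∀ t, HasDerivAt (fun t => ∫ s in (0 : ℝ)..t, x s ^ 2 * A s) (x t ^ 2 * A t) t := fun t =>
    (Continuous.integral_hasStrictDerivAt (by fun_prop) 0 t).hasDerivAt
  have hd : ∀ t, HasDerivAt (fun t => (x t - m) * exp (-∫ s in (0 : ℝ)..t, x s ^ 2 * A s))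
      (exp (-∫ s in (0 : ℝ)..t, x s ^ 2 * A s) * (x t ^ 2 * k)) t := fun t =>
    (((hx.1 t).sub_const m).mul (hI t).neg.exp).congr_deriv (by simp only [Pi.neg_apply]; ring)
  obtain ⟨c, -, hc⟩ := exists_hasDerivAt_eq_zero two_pi_pos
    (fun t _ => (hd t).continuousAt.continuousWithinAt) (by simp [hx.period0, hm]) fun t _ => hd t
  exact mul_ne_zero (exp_pos _).ne' (mul_ne_zero (pow_ne_zero 2 (hx.ne hA hB hx0 c)) hk) hc

theorem line_ne {A x : ℝ → ℝ} {k m : ℝ} (hk : k ≠ 0) (hA : Continuous A)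
    (hx : PSol A (fun t => k - m * A t) x) (hx0 : x 0 ≠ 0) (t : ℝ) : x t ≠ m := by
  have hB : Continuous fun t => k - m * A t := by fun_prop
  have := line_ne_zero hk (by fun_prop) (hx.shift t) (by simpa using hx.ne hA hB hx0 t)
  simpa using this

/-- Integral of `x' / (x² (x - m)) = A + k / (x - m)` over a period. -/
theorem line_integral {A x : ℝ → ℝ} {k m : ℝ} (hk : k ≠ 0) (hA : Continuous A)
    (hx : PSol A (fun t => k - m * A t) x) (hx0 : x 0 ≠ 0) :
    ∫ t in (0 : ℝ)..(2 * π), (A t + k * (x t - m)⁻¹) = 0 := by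
  have hB : Continuous fun t => k - m * A t := by fun_prop
  have hxc := hx.cont
  have hxm := line_ne hk hA hx hx0
  have hxt := hx.ne hA hB hx0
  obtain ⟨δ, hδ, R, -, hR⟩ := exists_antideriv (h := fun s => s ^ 2 * (s - m)) (by fun_prop)
    hx.cont (fun t => mul_ne_zero (pow_ne_zero 2 (hxt t)) (sub_ne_zero.2 (hxm t)))
  rw [integral_eq_sub_of_hasDerivAt (f := fun t => R (x t)), hx.period0, sub_self]
  · intro t ht
    rw [uIcc_of_le two_pi_pos.le] at ht
    refine ((hR t ht (x t) (by simpa using hδ.le)).2.comp t (hx.1 t)).congr_deriv ?_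
    have := sub_ne_zero.2 (hxm t)
    have := hxt t
    field_simp
    ring
  · refine Continuous.intervalIntegrable ?_ _ _
    exact hA.add (continuous_const.mul
      ((hxc.sub continuous_const).inv₀ fun t => sub_ne_zero.2 (hxm t)))

/-- Two ordered periodic solutions on the same side of `m` are incompatible with `line_integral`,
since `s ↦ 1 / (s - m)` is strictly decreasing on each side. -/
theorem line_two_lt {A x y : ℝ → ℝ} {k m : ℝ} (hk : k ≠ 0) (hA : Continuous A)
    (hx : PSol A (fun t => k - m * A t) x) (hy : PSol A (fun t => k - m * A t) y)
    (hx0 : x 0 ≠ 0) (hy0 : y 0 ≠ 0) (hs : 0 < (x 0 - m) * (y 0 - m)) (hlt : x 0 < y 0) : False := by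
  have hB : Continuous fun t => k - m * A t := by fun_prop
  have hxc := hx.cont
  have hyc := hy.cont
  have hxm := fun t => sub_ne_zero.2 (line_ne hk hA hx hx0 t)
  have hym := fun t => sub_ne_zero.2 (line_ne hk hA hy hy0 t)
  have hpos : ∀ t, 0 < (x t - m) * (y t - m) := by
    intro t
    by_contra! hle
    obtain ⟨s, hs⟩ := mem_range_of_exists_le_of_exists_ge
      (f := fun t => (x t - m) * (y t - m)) (by fun_prop) ⟨t, hle⟩ ⟨0, hs.le⟩
    exact mul_ne_zero (hxm s) (hym s) hs
  have hxi : Continuous fun t => (x t - m)⁻¹ := (hxc.sub continuous_const).inv₀ hxm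
  have hyi : Continuous fun t => (y t - m)⁻¹ := (hyc.sub continuous_const).inv₀ hym
  have e : ∫ t in (0 : ℝ)..(2 * π), k * ((x t - m)⁻¹ - (y t - m)⁻¹) = 0 := by
    have h1 := line_integral hk hA hx hx0
    have h2 := line_integral hk hA hy hy0
    have h3 := integral_sub (μ := MeasureTheory.volume)
      (f := fun t => A t + k * (x t - m)⁻¹) (g := fun t => A t + k * (y t - m)⁻¹)
      (a := 0) (b := 2 * π)
      (Continuous.intervalIntegrable (by fun_prop) _ _)
      (Continuous.intervalIntegrable (by fun_prop) _ _)
    rw [h1, h2, sub_zero] at h3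
    rw [← h3]
    congr 1
    funext t
    ring
  rw [integral_const_mul] at e
  refine mul_ne_zero hk (intervalIntegral_pos_of_pos (f := fun t => (x t - m)⁻¹ - (y t - m)⁻¹)
    ((hxi.sub hyi).intervalIntegrable _ _)
    (fun t => ?_) two_pi_pos).ne' e
  rw [inv_sub_inv (hxm t) (hym t)]
  exact div_pos (by linarith [hx.lt hA hB hy hlt t]) (hpos t)

theorem line_two {A x y : ℝ → ℝ} {k m : ℝ} (hk : k ≠ 0) (hA : Continuous A)
    (hx : PSol A (fun t => k - m * A t) x) (hy : PSol A (fun t => k - m * A t) y)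
    (hx0 : x 0 ≠ 0) (hy0 : y 0 ≠ 0) (hs : 0 < (x 0 - m) * (y 0 - m)) : x 0 = y 0 := by
  by_contra hne
  rcases lt_or_gt_of_ne hne with h | h
  · exact line_two_lt hk hA hx hy hx0 hy0 hs h
  · exact line_two_lt hk hA hy hx hy0 hx0 (by rwa [mul_comm]) h

theorem pigeon {u v w : ℝ} (hu : u ≠ 0) (hv : v ≠ 0) (hw : w ≠ 0) :
    0 < u * v ∨ 0 < u * w ∨ 0 < v * w := by
  rcases lt_or_gt_of_ne hu with hu | hu <;> rcases lt_or_gt_of_ne hv with hv | hv <;>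
    rcases lt_or_gt_of_ne hw with hw | hw <;>
    first
    | exact Or.inl (mul_pos_of_neg_of_neg hu hv)
    | exact Or.inl (mul_pos hu hv)
    | exact Or.inr (Or.inl (mul_pos_of_neg_of_neg hu hw))
    | exact Or.inr (Or.inl (mul_pos hu hw))
    | exact Or.inr (Or.inr (mul_pos_of_neg_of_neg hv hw))
    | exact Or.inr (Or.inr (mul_pos hv hw))

theorem trig_bdd (c₀ c₁ c₂ t : ℝ) : |c₀ + c₁ * sin t + c₂ * cos t| ≤ |c₀| + |c₁| + |c₂| := by
  refine (abs_add_three _ _ _).trans ?_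
  rw [abs_mul, abs_mul]
  have h1 := mul_le_of_le_one_right (abs_nonneg c₁) (abs_sin_le_one t)
  have h2 := mul_le_of_le_one_right (abs_nonneg c₂) (abs_cos_le_one t)
  linarith

/-- The case of proportional `(a₁, a₂)` and `(b₁, b₂)`: either `A` is constant, or `B = k - m A`. -/
theorem degenerate {a₀ a₁ a₂ b₀ b₁ b₂ : ℝ} {A B X₁ X₂ X₃ : ℝ → ℝ}
    (eA : A = fun t => a₀ + a₁ * sin t + a₂ * cos t)
    (eB : B = fun t => b₀ + b₁ * sin t + b₂ * cos t)
    (hdet : a₁ * b₂ - a₂ * b₁ = 0)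
    (h₁ : PSol A B X₁) (h₂ : PSol A B X₂) (h₃ : PSol A B X₃)
    (i₁ : ∃ ε > (0 : ℝ), ∀ z, ClosedSol A B (2 * π) z → |z 0 - X₁ 0| < ε → z 0 = X₁ 0)
    (i₂ : ∃ ε > (0 : ℝ), ∀ z, ClosedSol A B (2 * π) z → |z 0 - X₂ 0| < ε → z 0 = X₂ 0)
    (n₁ : X₁ 0 ≠ 0) (n₂ : X₂ 0 ≠ 0) (n₃ : X₃ 0 ≠ 0)
    (h12 : X₁ 0 ≠ X₂ 0) (h13 : X₁ 0 ≠ X₃ 0) (h23 : X₂ 0 ≠ X₃ 0) : False := by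
  have hA : Continuous A := by rw [eA]; fun_prop
  have hB : Continuous B := by rw [eB]; fun_prop
  by_cases ha : a₁ = 0 ∧ a₂ = 0
  · obtain ⟨rfl, rfl⟩ := ha
    have eA' : A = fun _ => a₀ := by rw [eA]; funext t; ring
    by_cases ha0 : a₀ = 0
    · have eA2 : A = fun t => 0 * B t := by rw [eA', ha0]; funext t; ring
      have eB2 : B = fun t => 1 * B t := by funext t; ring
      have hb : ∀ t, |B t| ≤ |b₀| + |b₁| + |b₂| + 1 := fun t => by
        rw [eB]; linarith [trig_bdd b₀ b₁ b₂ t]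
      rw [eA2] at h₁ h₂ i₁ i₂
      generalize hf : B = f at hb eB2 hB
      rw [hf, eB2] at h₁ h₂ i₁ i₂
      simp only [one_mul] at h₁ h₂ i₁ i₂
      refine h12 (sep_two (α := 0) (β := 1) hB (M := |b₀| + |b₁| + |b₂| + 1)
        (fun t => by rw [zero_mul, abs_zero]; positivity)
        (fun t => by rw [one_mul]; exact hb t) (by positivity) (by simp)
        ?_ ?_ ?_ ?_ n₁ n₂)
      all_goals simpa only [one_mul]
    · rw [eA'] at h₁ h₂ h₃
      rcases pigeon n₁ n₂ n₃ with h | h | h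
      · exact h12 (const_two ha0 hB h₁ h₂ h)
      · exact h13 (const_two ha0 hB h₁ h₃ h)
      · exact h23 (const_two ha0 hB h₂ h₃ h)
  · obtain ⟨m, e1, e2⟩ : ∃ m, b₁ = -m * a₁ ∧ b₂ = -m * a₂ := by
      by_cases h : a₁ = 0
      · have h' : a₂ ≠ 0 := fun h' => ha ⟨h, h'⟩
        rw [h, zero_mul, zero_sub, neg_eq_zero] at hdet
        refine ⟨-(b₂ / a₂), ?_, by field_simp⟩
        rw [h, (mul_eq_zero.1 hdet).resolve_left h']; ring
      · refine ⟨-(b₁ / a₁), by field_simp, ?_⟩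
        field_simp
        linarith
    have eB2 : B = fun t => (b₀ + m * a₀) - m * A t := by
      rw [eB, eA, e1, e2]; funext t; ring
    by_cases hk : b₀ + m * a₀ = 0
    · have eB3 : B = fun t => -m * A t := by rw [eB2, hk]; funext t; ring
      have hM : ∀ t, |A t| ≤ |a₀| + |a₁| + |a₂| := fun t => by
        rw [eA]; exact trig_bdd a₀ a₁ a₂ t
      rw [eB3] at h₁ h₂ i₁ i₂
      have hM0 : 0 ≤ |a₀| + |a₁| + |a₂| := by positivity
      refine h12 (sep_two (α := 1) (β := -m) hA (M := (|m| + 1) * (|a₀| + |a₁| + |a₂| + 1))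
        (fun t => ?_) (fun t => ?_) (by positivity) (by simp) ?_ ?_ ?_ ?_ n₁ n₂)
      · rw [one_mul]
        nlinarith [hM t, abs_nonneg m]
      · rw [abs_mul, abs_neg]
        nlinarith [hM t, abs_nonneg m]
      all_goals simpa only [one_mul]
    · rw [eB2] at h₁ h₂ h₃
      rcases pigeon (sub_ne_zero.2 (line_ne_zero hk hA h₁ n₁))
        (sub_ne_zero.2 (line_ne_zero hk hA h₂ n₂))
        (sub_ne_zero.2 (line_ne_zero hk hA h₃ n₃)) with h | h | h
      · exact h12 (line_two hk hA h₁ h₂ n₁ n₂ h)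
      · exact h13 (line_two hk hA h₁ h₃ n₁ n₃ h)
      · exact h23 (line_two hk hA h₂ h₃ n₂ n₃ h)

end AbelTrig

/-- The Abel equation with linear trigonometric coefficients on `[0,2π]`
has at most three limit cycles (including `x = 0` when it is isolated). -/
theorem abel_trig_at_most_three_limit_cycles
    (a₀ a₁ a₂ b₀ b₁ b₂ : ℝ) :
    Set.encard (LCInits
      (fun t => a₀ + a₁ * Real.sin t + a₂ * Real.cos t)
      (fun t => b₀ + b₁ * Real.sin t + b₂ * Real.cos t)
      (2 * Real.pi)) ≤ 3 := by
  set A : ℝ → ℝ := fun t => a₀ + a₁ * Real.sin t + a₂ * Real.cos t with eA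
  set B : ℝ → ℝ := fun t => b₀ + b₁ * Real.sin t + b₂ * Real.cos t with eB
  have hA : ∀ t, A (t + 2 * Real.pi) = A t := fun t => by simp [eA]
  have hB : ∀ t, B (t + 2 * Real.pi) = B t := fun t => by simp [eB]
  have hp : (0 : ℝ) ∈ Set.Icc 0 (2 * Real.pi) := ⟨le_rfl, Real.two_pi_pos.le⟩
  -- every limit cycle extends to an isolated periodic solution
  have ext : ∀ v ∈ LCInits A B (2 * Real.pi), ∃ X, AbelTrig.PSol A B X ∧ X 0 = v ∧
      ∃ ε > (0 : ℝ), ∀ z, ClosedSol A B (2 * Real.pi) z → |z 0 - X 0| < ε → z 0 = X 0 := by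
    rintro v ⟨x, ⟨hc, hi⟩, rfl⟩
    obtain ⟨X, hX, he⟩ := AbelTrig.exists_PSol hA hB hc
    refine ⟨X, hX, he 0 hp, ?_⟩
    rwa [he 0 hp]
  have h2 : (LCInits A B (2 * Real.pi) \ {0}).encard ≤ 2 := by
    by_contra! hlt
    have h3 : (3 : ℕ∞) ≤ (LCInits A B (2 * Real.pi) \ {0}).encard := by
      simpa [← two_add_one_eq_three] using Order.add_one_le_of_lt hlt
    obtain ⟨s, hs, hs3⟩ := Set.exists_subset_encard_eq h3
    obtain ⟨u, v, w, huv, huw, hvw, rfl⟩ := Set.encard_eq_three.1 hs3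
    obtain ⟨hu, hu0⟩ := hs (show u ∈ _ by simp)
    obtain ⟨hv, hv0⟩ := hs (show v ∈ _ by simp)
    obtain ⟨hw, hw0⟩ := hs (show w ∈ _ by simp)
    obtain ⟨X₁, h₁, rfl, i₁⟩ := ext u hu
    obtain ⟨X₂, h₂, rfl, i₂⟩ := ext v hv
    obtain ⟨X₃, h₃, rfl, -⟩ := ext w hw
    by_cases hdet : a₁ * b₂ - a₂ * b₁ = 0
    · exact AbelTrig.degenerate eA eB hdet h₁ h₂ h₃ i₁ i₂ hu0 hv0 hw0 huv huw hvw
    · exact AbelTrig.nondeg hdet h₁ h₂ h₃ hu0 hv0 hw0 huv huw hvw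
  calc (LCInits A B (2 * Real.pi)).encard
      ≤ (insert 0 (LCInits A B (2 * Real.pi) \ {0})).encard :=
        Set.encard_le_encard (by simp)
    _ ≤ (LCInits A B (2 * Real.pi) \ {0}).encard + 1 := Set.encard_insert_le _ _
    _ ≤ 2 + 1 := by gcongr
    _ = 3 := by norm_num
end
end
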